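/- Let R be a local Cohen–Macaulay ring with infinite residue field and let I be an R-ideal of analytic spread ℓ with ht I > 0, satisfying G_ℓ and AN_{ℓ−1}^−, universally weakly (ℓ−1)-residually S₂, and such that J : I does not depend on the minimal reduction J of I. Assume in addition that R is a normal ring and I is a normal ideal. Then for every minimal reduction J of I the ideal (J : I)·I^j is integrally closed for every j ≥ 0; in particular J : I and core(I) are integrally closed. -/

import Mathlib

open IsLocalRing

universe u v

namespace CPU

section Defs

variable {R : Type u} [CommRing R]

/-- The minimal number of generators of a submodule, as an extended natural number. -/
noncomputable def muE {M : Type v} [AddCommGroup M] [Module R M] (N : Submodule R M) : ℕ∞ :=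
  sInf {n : ℕ∞ | ∃ s : Finset M, (s.card : ℕ∞) = n ∧ Submodule.span R (s : Set M) = N}

/-- The Krull dimension of a ring, valued in `WithBot ℕ∞`. -/
noncomputable def rDim (S : Type v) [CommRing S] : WithBot ℕ∞ :=
  ringKrullDim S

/-- `J` is a reduction of `I`. -/
def IsReduction (J I : Ideal R) : Prop :=
  J ≤ I ∧ ∃ r : ℕ, I ^ (r + 1) = J * I ^ r

/-- `J` is a minimal reduction of `I`. -/
def IsMinimalReduction (J I : Ideal R) : Prop :=
  IsReduction J I ∧ ∀ J' : Ideal R, IsReduction J' I → J' ≤ J → J' = J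

/-- The core of an ideal: the intersection of all of its minimal reductions. -/
noncomputable def core (I : Ideal R) : Ideal R :=
  sInf {J : Ideal R | IsMinimalReduction J I}

/-- The reduction number of `I`. -/
noncomputable def reductionNumber (I : Ideal R) : ℕ∞ :=
  sInf {n : ℕ∞ | ∃ r : ℕ, (r : ℕ∞) = n ∧ ∃ J : Ideal R,
    IsMinimalReduction J I ∧ I ^ (r + 1) = J * I ^ r}

/-- `γ(I)`: the least number of minimal reductions whose intersection is the core. -/
noncomputable def gamma (I : Ideal R) : ℕ∞ :=
  sInf {n : ℕ∞ | ∃ t : ℕ, (t : ℕ∞) = n ∧ ∃ Js : Fin t → Ideal R,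
    (∀ i, IsMinimalReduction (Js i) I) ∧ core I = ⨅ i, Js i}

/-- The height of an ideal. -/
noncomputable def ht (I : Ideal R) : WithBot ℕ∞ :=
  ⨅ (p : PrimeSpectrum R) (_ : I ≤ p.asIdeal),
    rDim (Localization.AtPrime p.asIdeal)

/-- The Krull dimension of the special fiber ring of `I`,
i.e. the analytic spread of `I`. -/
noncomputable def fiberDim [IsLocalRing R] (I : Ideal R) : WithBot ℕ∞ :=
  rDim (↥(reesAlgebra I) ⧸
    (Ideal.map (algebraMap R ↥(reesAlgebra I)) (maximalIdeal R)))

/-- The condition `G_s`. -/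
def Gcond (I : Ideal R) (s : ℕ) : Prop :=
  ∀ p : PrimeSpectrum R, I ≤ p.asIdeal →
    rDim (Localization.AtPrime p.asIdeal) < (s : WithBot ℕ∞) →
    (muE (Ideal.map (algebraMap R (Localization.AtPrime p.asIdeal)) I) : WithBot ℕ∞) ≤
      rDim (Localization.AtPrime p.asIdeal)

/-- Depth of a module over a local ring, via lengths of regular sequences in the
maximal ideal. -/
noncomputable def mDepth (R : Type u) [CommRing R] [IsLocalRing R]
    (M : Type v) [AddCommGroup M] [Module R M] : ℕ∞ :=
  sSup {n : ℕ∞ | ∃ rs : List R, (∀ x ∈ rs, x ∈ maximalIdeal R) ∧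
    RingTheory.Sequence.IsRegular M rs ∧ (rs.length : ℕ∞) = n}

/-- Depth of the quotient `R/K` of a local ring `R`. -/
noncomputable def qDepth (R : Type u) [CommRing R] [IsLocalRing R] (K : Ideal R) : ℕ∞ :=
  mDepth R (R ⧸ K)

/-- The socle of `R/K`, for `R` local. -/
noncomputable def socle (R : Type u) [CommRing R] [IsLocalRing R] (K : Ideal R) :
    Ideal (R ⧸ K) :=
  Submodule.colon (⊥ : Ideal (R ⧸ K)) (Ideal.map (Ideal.Quotient.mk K) (maximalIdeal R))

/-- The Cohen–Macaulay type of the quotient `R/K` of a local ring `R`. -/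
noncomputable def qType (R : Type u) [CommRing R] [IsLocalRing R] (K : Ideal R) : ℕ∞ :=
  sInf {n : ℕ∞ | ∃ rs : List R, (∀ x ∈ rs, x ∈ maximalIdeal R) ∧
    RingTheory.Sequence.IsRegular (R ⧸ K) rs ∧ (rs.length : ℕ∞) = qDepth R K ∧
    muE (socle R (K ⊔ Ideal.ofList rs)) = n}

/-- Cohen–Macaulayness for a quotient `R/K` of a local ring `R`. -/
def IsCMQuot (R : Type u) [CommRing R] [IsLocalRing R] (K : Ideal R) : Prop :=
  rDim (R ⧸ K) = (qDepth R K : WithBot ℕ∞)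

/-- A Cohen–Macaulay local ring: depth equals Krull dimension. -/
def IsCMLocalRing (R : Type u) [CommRing R] [IsLocalRing R] : Prop :=
  rDim R = (qDepth R (⊥ : Ideal R) : WithBot ℕ∞)

/-- A Gorenstein local ring: Cohen–Macaulay of type one. -/
def IsGorensteinLocalRing (R : Type u) [CommRing R] [IsLocalRing R] : Prop :=
  IsCMLocalRing R ∧ qType R (⊥ : Ideal R) = 1

/-- Gorensteinness of the quotient ring `R/K` of a local ring. -/
def IsGorQuot (R : Type u) [CommRing R] [IsLocalRing R] (K : Ideal R) : Prop :=
  IsCMQuot R K ∧ qType R K = 1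

/-- A regular local ring: the maximal ideal is generated by `dim R` elements. -/
def IsRegularLocal (R : Type u) [CommRing R] [IsLocalRing R] : Prop :=
  IsNoetherianRing R ∧ (muE (maximalIdeal R) : WithBot ℕ∞) = rDim R

/-- Serre's condition `S₂` for the quotient ring `R/K`. -/
def QuotS2 (K : Ideal R) : Prop :=
  ∀ (q : Ideal R) (hq : q.IsPrime), K ≤ q →
    letI := hq
    min 2 (rDim ((Localization.AtPrime q) ⧸
        (Ideal.map (algebraMap R (Localization.AtPrime q)) K)))
      ≤ (qDepth (Localization.AtPrime q)
          (Ideal.map (algebraMap R (Localization.AtPrime q)) K) : WithBot ℕ∞)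

/-- `K` is an `s`-residual intersection of `I`. -/
def IsResidualIntersection (I K : Ideal R) (s : ℕ) : Prop :=
  K ≠ ⊤ ∧ ht I ≤ (s : WithBot ℕ∞) ∧ (s : WithBot ℕ∞) ≤ ht K ∧
    ∃ a : Ideal R, a ≤ I ∧ (∃ f : Finset R, f.card ≤ s ∧ Ideal.span (f : Set R) = a) ∧
      K = Submodule.colon a I

/-- `K` is a geometric `s`-residual intersection of `I`. -/
def IsGeometricRI (I K : Ideal R) (s : ℕ) : Prop :=
  IsResidualIntersection I K s ∧ (s : WithBot ℕ∞) + 1 ≤ ht (I ⊔ K)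

/-- `I` is weakly `s`-residually `S₂`. -/
def WeaklyResS2 (I : Ideal R) (s : ℕ) : Prop :=
  ∀ i ≤ s, ∀ K : Ideal R, IsGeometricRI I K i → QuotS2 K

/-- The condition `AN_s` for `I`. -/
def ANcond [IsLocalRing R] (I : Ideal R) (s : ℕ) : Prop :=
  ∀ i ≤ s, ∀ K : Ideal R, IsResidualIntersection I K i → IsCMQuot R K

/-- The condition `AN_s⁻` for `I`. -/
def ANminus [IsLocalRing R] (I : Ideal R) (s : ℕ) : Prop :=
  ∀ i ≤ s, ∀ K : Ideal R, IsGeometricRI I K i → IsCMQuot R K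

/-- `I` is universally weakly `s`-residually `S₂`: for every finite set of
variables, the extension of `I` to `R(x₁, …, x_n)` is weakly `s`-residually `S₂`. -/
def UnivWeaklyResS2 [IsLocalRing R] (I : Ideal R) (s : ℕ) : Prop :=
  ∀ (n : ℕ)
    (hP : (Ideal.map (MvPolynomial.C (σ := Fin n)) (maximalIdeal R)).IsPrime),
    letI := hP
    WeaklyResS2 (Ideal.map
      ((algebraMap (MvPolynomial (Fin n) R)
        (Localization.AtPrime
          (Ideal.map (MvPolynomial.C (σ := Fin n)) (maximalIdeal R)))).comp
        (MvPolynomial.C)) I) s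

/-- The `j`-th Fitting ideal of (the module) `I`. -/
noncomputable def fittingIdeal (I : Ideal R) (j : ℕ) : Ideal R :=
  ⨆ (n : ℕ) (π : (Fin n → R) →ₗ[R] R) (_ : LinearMap.range π = I),
    Ideal.span {d : R | ∃ (v : Fin (n - j) → (Fin n → R)) (r : Fin (n - j) → Fin n),
      (∀ k, π (v k) = 0) ∧ d = Matrix.det (Matrix.of fun i k => v k (r i))}

/-- The set `Q(I)` of primes containing `Fitt_ℓ(I)` at which `R` has dimension `ℓ`
and `I` has analytic spread `ℓ`. -/
def QSet [IsLocalRing R] (I : Ideal R) (l : ℕ) : Set (PrimeSpectrum R) :=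
  {p | fittingIdeal I l ≤ p.asIdeal ∧
    rDim (Localization.AtPrime p.asIdeal) = (l : WithBot ℕ∞) ∧
    fiberDim (Ideal.map (algebraMap R (Localization.AtPrime p.asIdeal)) I)
      = (l : WithBot ℕ∞)}

/-- An ideal is integrally closed if it admits no larger ideal of which it is a
reduction. -/
def IsIntClosedIdeal (I : Ideal R) : Prop :=
  ∀ J : Ideal R, IsReduction I J → J = I

/-- A normal ideal: all powers are integrally closed. -/
def IsNormalIdeal (I : Ideal R) : Prop :=
  ∀ j : ℕ, IsIntClosedIdeal (I ^ j)

/-- `φ` is a presentation matrix of the ideal `I` (with `n = μ(I)` rows). -/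
def Presents {n m : ℕ} (φ : Matrix (Fin n) (Fin m) R) (I : Ideal R) : Prop :=
  muE I = (n : ℕ∞) ∧ ∃ π : (Fin n → R) →ₗ[R] R, LinearMap.range π = I ∧
    LinearMap.range (Matrix.toLin' φ) = LinearMap.ker π

/-- The ideal of `t × t` minors of a matrix. -/
noncomputable def minorsIdeal {n m : ℕ} (t : ℕ) (φ : Matrix (Fin n) (Fin m) R) : Ideal R :=
  Ideal.span {d : R | ∃ (r : Fin t → Fin n) (c : Fin t → Fin m),
    d = (φ.submatrix r c).det}

/-- The grade of an ideal: the supremum of lengths of regular sequences contained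
in it. -/
noncomputable def grade (I : Ideal R) : ℕ∞ :=
  sSup {n : ℕ∞ | ∃ rs : List R, (∀ x ∈ rs, x ∈ I) ∧
    RingTheory.Sequence.IsRegular R rs ∧ (rs.length : ℕ∞) = n}

end Defs

/-- `M` has projective dimension at most `n` over `R`. -/
def ProjDimLE (R : Type u) [CommRing R] :
    (n : ℕ) → (M : Type u) → [AddCommGroup M] → [Module R M] → Prop
  | 0, M, _, _ => Module.Projective R M
  | n + 1, M, _, _ => ∃ (k : ℕ) (f : (Fin k → R) →ₗ[R] M), Function.Surjective f ∧
      ProjDimLE R n ↥(LinearMap.ker f)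

section Defs2

variable {R : Type u} [CommRing R]

/-- `M` has projective dimension exactly `n` over `R`. -/
def ProjDimEq (R : Type u) [CommRing R] (M : Type u) [AddCommGroup M] [Module R M]
    (n : ℕ) : Prop :=
  ProjDimLE R n M ∧ ∀ m : ℕ, ProjDimLE R m M → n ≤ m

/-- A perfect ideal: the projective dimension of `R/I` equals the grade of `I`. -/
def IsPerfectIdeal (I : Ideal R) : Prop :=
  ∃ g : ℕ, grade I = (g : ℕ∞) ∧ ProjDimEq R (R ⧸ I) g

/-- The multiplicative set which is the complement of the union of the associated
primes of `R/H`. -/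
def assComplement (H : Ideal R) : Submonoid R where
  carrier := {r : R | ∀ p ∈ associatedPrimes R (R ⧸ H), r ∉ p}
  one_mem' := fun p hp => (Ideal.ne_top_iff_one p).mp hp.1.ne_top
  mul_mem' := fun {a b} ha hb p hp hab =>
    (hp.1.mem_or_mem hab).elim (ha p hp) (hb p hp)

/-- The `j`-th symbolic power of `H`. -/
noncomputable def symbolicPower (H : Ideal R) (j : ℕ) : Ideal R :=
  Ideal.comap (algebraMap R (Localization (assComplement H)))
    (Ideal.map (algebraMap R (Localization (assComplement H))) (H ^ j))

/-- Serre's condition `S₂` for a module. -/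
def ModuleS2 (S : Type u) [CommRing S] (M : Type v) [AddCommGroup M] [Module S M] : Prop :=
  ∀ (q : Ideal S) (hq : q.IsPrime),
    letI := hq
    min 2 (rDim ((Localization.AtPrime q) ⧸
        (Module.annihilator (Localization.AtPrime q) (LocalizedModule q.primeCompl M))))
      ≤ (mDepth (Localization.AtPrime q) (LocalizedModule q.primeCompl M) : WithBot ℕ∞)

/-- `M` is a maximal Cohen–Macaulay `S`-module. -/
def IsMCM (S : Type u) [CommRing S] (M : Type v) [AddCommGroup M] [Module S M] : Prop :=
  ∀ (q : Ideal S) (hq : q.IsMaximal),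
    letI := hq.isPrime
    (mDepth (Localization.AtPrime q) (LocalizedModule q.primeCompl M) : WithBot ℕ∞) =
      rDim (Localization.AtPrime q)

end Defs2

/-!
By prime avoidance over the infinite residue field, `I` has a reduction `J = (a_1, …, a_ℓ)` on
general generators. For these `AN⁻` bounds the depth of `R / K_i` below by `dim R - i`, where
`i < ℓ` and `K_i = (a_1, …, a_i) : I`, and `a_{i+1}` is regular modulo `K_i`. It follows that the
powers `J ^ n` have no associated primes of height greater than `ℓ`, and that an element of `J ^ n`
which `I` multiplies into `J ^ (n + 1)` lies in `K * J ^ n`, where `K = J : I`.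

Varying one generator at a time, `a_i ↦ a_i + t * c`, produces many minimal reductions, which force
`core I ≤ K * J`; independence of `J : I` from `J` gives `K * I ≤ core I`. Hence
`core I = K * I = K * J`, and `K * I ^ j = K * J ^ j` for all `j`.

If `N` is integral over `K * I ^ n` then `N ≤ J ^ n`. Otherwise some `y ∈ N` has `(J ^ n) : y = p`
prime; since `N ≤ I ^ n`, the prime `p` contains `K`, and has height exactly `ℓ`. The Rees algebra
`R[It]` is normal and finite over the subring generated by `a_1 t, …, a_ℓ t`, so that inverting the
forms in the `a_i t` with a coefficient outside of `p` makes it a Dedekind domain, in which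
integrally dependent ideals agree. There `y` becomes an element of `a_1 ^ n * K`, and clearing
denominators contradicts `(J ^ n) : y = p`. Applying `N ≤ J ^ n` also to `N * I`, which is integral
over `K * I ^ (n + 1)`, shows that `N` lies in `K * J ^ n = K * I ^ n`.
-/

section Depth

open RingTheory.Sequence CategoryTheory Abelian Limits
open scoped Pointwise

variable {R : Type u} [CommRing R]

/-- `DepthGE K n` says that `R / K` has a regular sequence of length `n` in the maximal ideal, that
is, `K ≠ ⊤` and `depth R / K ≥ n`. -/
def DepthGE [IsLocalRing R] (K : Ideal R) (n : ℕ) : Prop :=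
  ∃ rs : List R, rs.length = n ∧ (∀ r ∈ rs, r ∈ maximalIdeal R) ∧ IsRegular (R ⧸ K) rs

lemma smul_top_quotient (K : Ideal R) (x : R) :
    x • (⊤ : Submodule R (R ⧸ K)) = Submodule.map K.mkQ (Ideal.span {x}) := by
  rw [← Submodule.ideal_span_singleton_smul, ← K.range_mkQ, LinearMap.range_eq_map,
    ← Submodule.map_smul'', smul_eq_mul, Ideal.mul_top]

/-- The isomorphism `(R / K) / x (R / K) ≃ R / (K + (x))`. -/
noncomputable def quotSMulTopEquiv (K : Ideal R) (x : R) :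
    QuotSMulTop x (R ⧸ K) ≃ₗ[R] R ⧸ (K ⊔ Ideal.span {x}) :=
  (Submodule.quotEquivOfEq _ _ (smul_top_quotient K x)).trans
    (Submodule.quotientQuotientEquivQuotientSup K (Ideal.span {x}))

lemma subsingleton_ext_quotSMulTop {N M : ModuleCat.{u} R} {a : R} (ha : IsSMulRegular M a)
    {n : ℕ} (h : ∀ i < n + 1, Subsingleton (Ext N M i)) :
    ∀ i < n, Subsingleton (Ext N (ModuleCat.of R (QuotSMulTop a M)) i) := fun i hi =>
  AddCommGrpCat.subsingleton_of_isZero <| ShortComplex.Exact.isZero_of_both_zeros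
    ((Ext.covariant_sequence_exact₃' _ ha.smulShortComplex_shortExact) i (i + 1) rfl)
    ((AddCommGrpCat.isZero_of_iff_subsingleton.mpr (h i (by lia))).eq_zero_of_src _)
    ((AddCommGrpCat.isZero_of_iff_subsingleton.mpr (h (i + 1) (by lia))).eq_zero_of_tgt _)

variable [IsLocalRing R]

namespace DepthGE

variable {K : Ideal R} {n : ℕ}

lemma ne_top (h : DepthGE K n) : K ≠ ⊤ := by
  obtain ⟨rs, -, -, h⟩ := h
  exact Ideal.Quotient.nontrivial_iff.mp h.nontrivial

lemma zero (h : K ≠ ⊤) : DepthGE K 0 := by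
  have : Nontrivial (R ⧸ K) := Ideal.Quotient.nontrivial_iff.mpr h
  exact ⟨[], rfl, by simp, IsRegular.nil R (R ⧸ K)⟩

lemma exists_regular (h : DepthGE K (n + 1)) :
    ∃ x ∈ maximalIdeal R, IsSMulRegular (R ⧸ K) x ∧ DepthGE (K ⊔ Ideal.span {x}) n := by
  obtain ⟨_ | ⟨x, rs⟩, hlen, hmem, hreg⟩ := h
  · simp at hlen
  rw [isRegular_cons_iff] at hreg
  exact ⟨x, hmem x (by simp), hreg.1, rs, by simpa using hlen, fun r hr => hmem r (by simp [hr]),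
    ((quotSMulTopEquiv K x).isRegular_congr rs).mp hreg.2⟩

lemma cons {x : R} (hx : x ∈ maximalIdeal R) (hreg : IsSMulRegular (R ⧸ K) x)
    (h : DepthGE (K ⊔ Ideal.span {x}) n) : DepthGE K (n + 1) := by
  obtain ⟨rs, hlen, hmem, hrs⟩ := h
  exact ⟨x :: rs, by simpa, List.forall_mem_cons.mpr ⟨hx, hmem⟩,
    (isRegular_cons_iff _ _ _).mpr ⟨hreg, ((quotSMulTopEquiv K x).isRegular_congr rs).mpr hrs⟩⟩

lemma mono {m : ℕ} (h : DepthGE K n) (hmn : m ≤ n) : DepthGE K m := by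
  induction m generalizing K n with
  | zero => exact .zero h.ne_top
  | succ m ih =>
    obtain ⟨n, rfl⟩ : ∃ k, n = k + 1 := ⟨n - 1, by lia⟩
    obtain ⟨x, hx, hreg, h'⟩ := h.exists_regular
    exact .cons hx hreg (ih h' (by lia))

lemma of_le_qDepth (hK : K ≠ ⊤) (h : (n : ℕ∞) ≤ qDepth R K) : DepthGE K n := by
  rcases n with _ | n
  · exact .zero hK
  obtain ⟨_, ⟨rs, hmem, hrs, rfl⟩, hlt⟩ :=
    lt_sSup_iff.mp ((Nat.cast_lt.mpr n.lt_succ_self).trans_le h)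
  exact .mono ⟨rs, rfl, hmem, hrs⟩ (Nat.succ_le_of_lt (by exact_mod_cast hlt))

end DepthGE

lemma maximalIdeal_smul_top_lt_top {M : Type v} [AddCommGroup M] [Module R M] [Module.Finite R M]
    [Nontrivial M] : maximalIdeal R • (⊤ : Submodule R M) < ⊤ :=
  lt_top_iff_ne_top.mpr (Submodule.top_ne_ideal_smul_of_le_jacobson_annihilator
    (IsLocalRing.maximalIdeal_le_jacobson _)).symm

-- By Rees' theorem both sides are vanishing conditions on `Ext^i(k, -)`, which shift under `a`.
lemma exists_isRegular_quotSMulTop [IsNoetherianRing R] {M : Type u} [AddCommGroup M] [Module R M]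
    [Module.Finite R M] [Nontrivial M] {n : ℕ}
    (h : ∃ rs : List R, rs.length = n + 1 ∧ (∀ r ∈ rs, r ∈ maximalIdeal R) ∧ IsRegular M rs)
    {a : R} (ham : a ∈ maximalIdeal R) (ha : IsSMulRegular M a) :
    ∃ rs : List R, rs.length = n ∧ (∀ r ∈ rs, r ∈ maximalIdeal R) ∧
      IsRegular (QuotSMulTop a M) rs := by
  have : Nontrivial (QuotSMulTop a M) := Submodule.Quotient.nontrivial_iff.mpr fun htop =>
    (Submodule.top_ne_pointwise_smul_of_mem_jacobson_annihilator
      (IsLocalRing.maximalIdeal_le_jacobson _ ham)) htop.symm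
  have hExt := ((ModuleCat.exists_isRegular_tfae (maximalIdeal R) (n + 1) (ModuleCat.of R M)
    maximalIdeal_smul_top_lt_top).out 1 3).mpr h
  have hExt' := subsingleton_ext_quotSMulTop (M := ModuleCat.of R M) ha hExt
  exact ((ModuleCat.exists_isRegular_tfae (maximalIdeal R) n
    (ModuleCat.of R (QuotSMulTop a M)) maximalIdeal_smul_top_lt_top).out 1 3).mp hExt'

lemma DepthGE.sup_span_singleton [IsNoetherianRing R] {K : Ideal R} {n : ℕ}
    (h : DepthGE K (n + 1)) {a : R} (ham : a ∈ maximalIdeal R) (ha : IsSMulRegular (R ⧸ K) a) :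
    DepthGE (K ⊔ Ideal.span {a}) n := by
  have : Nontrivial (R ⧸ K) := Ideal.Quotient.nontrivial_iff.mpr h.ne_top
  obtain ⟨rs, hlen, hmem, hrs⟩ := exists_isRegular_quotSMulTop h ham ha
  exact ⟨rs, hlen, hmem, ((quotSMulTopEquiv K a).isRegular_congr rs).mp hrs⟩

end Depth

section AssociatedPrimes

lemma exists_isPrime_colon_singleton {R : Type u} [CommRing R] [IsNoetherianRing R]
    {M : Type v} [AddCommGroup M] [Module R M] {L N : Submodule R M} (h : ¬ N ≤ L) :
    ∃ y ∈ N, (L.colon {y}).IsPrime := by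
  have : Nontrivial (N.map L.mkQ) := by
    rwa [Submodule.nontrivial_iff_ne_bot, ne_eq, ← le_bot_iff, Submodule.map_le_iff_le_comap,
      Submodule.comap_bot, L.ker_mkQ]
  obtain ⟨q, hq⟩ := associatedPrimes.nonempty R (N.map L.mkQ)
  obtain ⟨hqp, ⟨_, y, hy, rfl⟩, rfl⟩ := isAssociatedPrime_iff.mp hq
  refine ⟨y, hy, ?_⟩
  convert hqp using 1
  ext r
  simp only [Submodule.mem_colon_singleton, Submodule.mem_bot, Subtype.ext_iff,
    Submodule.coe_smul, ZeroMemClass.coe_zero, Submodule.mkQ_apply, ← Submodule.Quotient.mk_smul,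
    Submodule.Quotient.mk_eq_zero]

variable {R : Type u} [CommRing R] {L : Ideal R}

lemma height_add_coheight_le_ringKrullDim (q : PrimeSpectrum R) :
    ((Order.height q + Order.coheight q : ℕ∞) : WithBot ℕ∞) ≤ ringKrullDim R := by
  have : Nonempty (PrimeSpectrum R) := ⟨q⟩
  rw [ringKrullDim, Order.krullDim_eq_iSup_height_add_coheight_of_nonempty]
  exact_mod_cast le_iSup (fun p : PrimeSpectrum R => Order.height p + Order.coheight p) q

lemma coheight_le_ringKrullDim_quotient {K : Ideal R} (q : PrimeSpectrum R) (h : K ≤ q.asIdeal) :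
    (Order.coheight q : WithBot ℕ∞) ≤ ringKrullDim (R ⧸ K) := by
  rw [Order.coheight_eq_krullDim_Ici, ringKrullDim_quotient]
  exact Order.krullDim_le_of_strictMono
    (fun p : Set.Ici q => (⟨p.1, h.trans p.2⟩ : PrimeSpectrum.zeroLocus (R := R) K))
    (fun _ _ hab => hab)

lemma le_of_isAssociatedPrime [IsNoetherianRing R] {q : Ideal R} (h : L.IsAssociatedPrime q) :
    L ≤ q := by
  obtain ⟨-, y, rfl⟩ := Submodule.isAssociatedPrime_iff.mp h
  exact Ideal.le_colon

lemma isAssociatedPrime_colon_singleton [IsNoetherianRing R] {y : R} (h : (L.colon {y}).IsPrime) :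
    L.IsAssociatedPrime (L.colon {y}) :=
  Submodule.isAssociatedPrime_iff.mpr ⟨h, y, rfl⟩

lemma notMem_of_isPrime_colon_singleton {y : R} (h : (L.colon {y}).IsPrime) : y ∉ L := fun hy =>
  h.ne_top ((Ideal.eq_top_iff_one _).mpr (Submodule.mem_colon_singleton.mpr (by simpa using hy)))

variable [IsNoetherianRing R]

lemma mem_of_forall_isAssociatedPrime {x : R}
    (h : ∀ q, L.IsAssociatedPrime q → ∃ s ∉ q, s * x ∈ L) : x ∈ L := by
  by_contra hx
  obtain ⟨y, hy, hprime⟩ := exists_isPrime_colon_singleton (L := L) (N := Ideal.span {x})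
    (by simpa [Ideal.span_singleton_le_iff_mem] using hx)
  obtain ⟨s, hs, hsx⟩ := h _ (isAssociatedPrime_colon_singleton hprime)
  obtain ⟨c, rfl⟩ := Ideal.mem_span_singleton'.mp hy
  refine hs (Submodule.mem_colon_singleton.mpr ?_)
  rw [smul_eq_mul, mul_left_comm]
  exact L.mul_mem_left _ hsx

lemma isSMulRegular_quotient_of_forall_notMem {x : R}
    (h : ∀ q, L.IsAssociatedPrime q → x ∉ q) : IsSMulRegular (R ⧸ L) x :=
  (isSMulRegular_quotient_iff_mem_of_smul_mem L x).mpr fun _ hr =>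
    mem_of_forall_isAssociatedPrime fun q hq => ⟨x, h q hq, hr⟩

lemma finite_setOf_isAssociatedPrime (L : Ideal R) : {q | L.IsAssociatedPrime q}.Finite := by
  refine (associatedPrimes.finite R (R ⧸ L)).subset fun q hq => ?_
  obtain ⟨hq, y, rfl⟩ := Submodule.isAssociatedPrime_iff.mp hq
  refine isAssociatedPrime_iff.mpr ⟨hq, Submodule.Quotient.mk y, ?_⟩
  ext r
  rw [Submodule.mem_colon_singleton, Submodule.mem_colon_singleton, Submodule.mem_bot,
    ← Submodule.Quotient.mk_smul, Submodule.Quotient.mk_eq_zero]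

lemma isAssociatedPrime_or_exists_mem_eq_colon {L' q : Ideal R} (hq : L.IsAssociatedPrime q)
    (hL : L ≤ L') : L'.IsAssociatedPrime q ∨ ∃ z ∈ L', q = L.colon {z} := by
  obtain ⟨hprime, y, rfl⟩ := Submodule.isAssociatedPrime_iff.mp hq
  by_cases hle : L'.colon {y} ≤ L.colon {y}
  · left
    exact Submodule.isAssociatedPrime_iff.mpr
      ⟨hprime, y, le_antisymm (Submodule.colon_mono hL le_rfl) hle⟩
  · right
    obtain ⟨s, hsy, hs⟩ := SetLike.not_le_iff_exists.mp hle
    refine ⟨s * y, Submodule.mem_colon_singleton.mp hsy, Ideal.ext fun r => ?_⟩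
    have : r ∈ L.colon {s * y} ↔ r * s ∈ L.colon {y} := by
      simp only [Submodule.mem_colon_singleton, smul_eq_mul, mul_assoc]
    rw [this]
    exact ⟨fun hr => Ideal.mul_mem_right _ _ hr, fun hr => (hprime.mem_or_mem hr).resolve_right hs⟩

variable [IsLocalRing R]

-- Nakayama: if `N ≤ L + (x)` then `N = L + x N`, as `x` is regular modulo `L`.
lemma not_colon_le_sup_span_singleton {q : Ideal R} (hq : L.IsAssociatedPrime q) {x : R}
    (hx : x ∈ maximalIdeal R) (hreg : IsSMulRegular (R ⧸ L) x) :
    ¬ L.colon (q : Set R) ≤ L ⊔ Ideal.span {x} := by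
  intro hle
  obtain ⟨hprime, y, rfl⟩ := Submodule.isAssociatedPrime_iff.mp hq
  set N := L.colon (L.colon {y} : Set R)
  have hN {z : R} : z ∈ N ↔ ∀ r, r * y ∈ L → z * r ∈ L := by simp [N, Submodule.mem_colon]
  have hsmul : N ≤ L ⊔ Ideal.span {x} • N := by
    intro z hz
    obtain ⟨t, ht, _, hw, rfl⟩ := Submodule.mem_sup.mp (hle hz)
    obtain ⟨w, rfl⟩ := Ideal.mem_span_singleton.mp hw
    refine Submodule.add_mem_sup ht
      (Submodule.smul_mem_smul (Ideal.mem_span_singleton_self x) (hN.mpr fun r hr => ?_))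
    refine mem_of_isSMulRegular_quotient_of_smul_mem hreg ?_
    convert L.sub_mem (hN.mp hz r hr) (L.mul_mem_right r ht) using 1
    rw [smul_eq_mul]
    ring
  have hNL : N ≤ L := Submodule.le_of_le_smul_of_le_jacobson_bot (IsNoetherian.noetherian N)
    (by simpa [IsLocalRing.jacobson_eq_maximalIdeal _ bot_ne_top] using hx) hsmul
  exact notMem_of_isPrime_colon_singleton hprime
    (hNL (hN.mpr fun r hr => by rwa [mul_comm]))

lemma DepthGE.le_coheight {n : ℕ} (h : DepthGE L n) (q : PrimeSpectrum R)
    (hq : L.IsAssociatedPrime q.asIdeal) : (n : ℕ∞) ≤ Order.coheight q := by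
  induction n generalizing L q with
  | zero => simp
  | succ n ih =>
    obtain ⟨x, hx, hreg, h'⟩ := h.exists_regular
    obtain ⟨z, hzN, hz⟩ := exists_isPrime_colon_singleton
      (not_colon_le_sup_span_singleton hq hx hreg)
    let q' : PrimeSpectrum R := ⟨(L ⊔ Ideal.span {x}).colon {z}, hz⟩
    have hxq : x ∉ q.asIdeal := by
      obtain ⟨hprime, y, hy⟩ := Submodule.isAssociatedPrime_iff.mp hq
      rw [hy] at hprime ⊢
      exact fun hx => notMem_of_isPrime_colon_singleton hprime
        (mem_of_isSMulRegular_quotient_of_smul_mem hreg (Submodule.mem_colon_singleton.mp hx))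
    have hle : q.asIdeal ≤ q'.asIdeal := fun r hr => Submodule.mem_colon_singleton.mpr
      (Ideal.mem_sup_left (by simpa [mul_comm] using Submodule.mem_colon.mp hzN r hr))
    have hxq' : x ∈ q'.asIdeal := Submodule.mem_colon_singleton.mpr
      (Ideal.mem_sup_right (Ideal.mul_mem_right _ _ (Ideal.mem_span_singleton_self x)))
    have hlt : q < q' := lt_of_le_of_ne hle fun he => hxq (he ▸ hxq')
    push_cast
    exact (add_le_add_left (ih h' q' (isAssociatedPrime_colon_singleton hz)) 1).trans
      (Order.coheight_add_one_le hlt)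

lemma DepthGE.height_add_le {n d : ℕ} (hd : ringKrullDim R = d) (h : DepthGE L n) {q : Ideal R}
    (hq : L.IsAssociatedPrime q) : q.height + n ≤ d := by
  have := hq.toIsPrime
  let p : PrimeSpectrum R := ⟨q, hq.toIsPrime⟩
  have hp : Order.height p + Order.coheight p ≤ d := by
    exact_mod_cast hd ▸ height_add_coheight_le_ringKrullDim p
  calc q.height + n ≤ Order.height p + Order.coheight p :=
        add_le_add p.height_eq_orderHeight.le (h.le_coheight p hq)
    _ ≤ d := hp

end AssociatedPrimes

section Reductions

open Polynomial

variable {R : Type u} [CommRing R]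

lemma pow_add_eq_of_pow_succ_eq {J I : Ideal R} {r : ℕ} (h : I ^ (r + 1) = J * I ^ r) (n : ℕ) :
    I ^ (r + n) = J ^ n * I ^ r := by
  induction n with
  | zero => simp
  | succ n ih =>
    calc I ^ (r + (n + 1)) = I ^ (r + n) * I := by rw [← add_assoc, pow_succ]
      _ = J ^ n * I ^ (r + 1) := by rw [ih, mul_assoc, pow_succ]
      _ = J ^ (n + 1) * I ^ r := by rw [h, ← mul_assoc, pow_succ]

namespace IsReduction

variable {J J' I : Ideal R}

lemma trans (h : IsReduction J J') (h' : IsReduction J' I) : IsReduction J I := by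
  obtain ⟨hle, s, hs⟩ := h
  obtain ⟨hle', r, hr⟩ := h'
  refine ⟨hle.trans hle', r + s, ?_⟩
  rw [add_assoc, pow_add_eq_of_pow_succ_eq hr, hs, mul_assoc, pow_add_eq_of_pow_succ_eq hr]

lemma of_pow_succ_le (hJ : J ≤ I) {r : ℕ} (h : I ^ (r + 1) ≤ J * I ^ r) : IsReduction J I :=
  ⟨hJ, r, le_antisymm h (by rw [pow_succ']; exact Ideal.mul_mono_left hJ)⟩

lemma of_le_of_le (h : IsReduction J I) (h₁ : J ≤ J') (h₂ : J' ≤ I) : IsReduction J' I := by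
  obtain ⟨-, r, hr⟩ := h
  exact of_pow_succ_le h₂ (hr.le.trans (Ideal.mul_mono_left h₁))

end IsReduction

lemma sup_span_singleton_pow_succ_le (J : Ideal R) (c : R) (m : ℕ) :
    (J ⊔ Ideal.span {c}) ^ (m + 1) ≤
      J * (J ⊔ Ideal.span {c}) ^ m ⊔ Ideal.span {c ^ (m + 1)} := by
  induction m with
  | zero => simp
  | succ m ih =>
    rw [pow_succ (J ⊔ Ideal.span {c}) (m + 1), Ideal.mul_sup]
    refine sup_le (by rw [mul_comm]; exact le_sup_left) ((Ideal.mul_mono_left ih).trans ?_)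
    rw [Ideal.sup_mul, mul_assoc, Ideal.span_singleton_mul_span_singleton, ← pow_succ, pow_succ]
    exact sup_le_sup_right (Ideal.mul_mono_right (Ideal.mul_mono_right le_sup_right)) _

lemma isReduction_sup_span_singleton {J : Ideal R} {c : R} {m : ℕ}
    (h : c ^ (m + 1) ∈ J * (J ⊔ Ideal.span {c}) ^ m) : IsReduction J (J ⊔ Ideal.span {c}) :=
  .of_pow_succ_le le_sup_left (r := m) ((sup_span_singleton_pow_succ_le J c m).trans
    (sup_le le_rfl ((Ideal.span_singleton_le_iff_mem _).mpr h)))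

lemma IsReduction.range_lsmul_le {J I : Ideal R} {r : ℕ} (hr : I ^ (r + 1) = J * I ^ r) {c : R}
    (hc : c ∈ I) :
    LinearMap.range (Algebra.lsmul R R (I ^ r : Ideal R) c) ≤ J • ⊤ := by
  rintro _ ⟨⟨x, hx⟩, rfl⟩
  have hcx : c * x ∈ (J • ⊤ : Submodule R (I ^ r : Ideal R)).map (Submodule.subtype _) := by
    rw [Submodule.map_smul'', Submodule.map_subtype_top, smul_eq_mul, ← hr, pow_succ']
    exact Ideal.mul_mem_mul hc hx
  obtain ⟨y, hy, hyx⟩ := hcx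
  rwa [show Algebra.lsmul R R (I ^ r : Ideal R) c ⟨x, hx⟩ = y from Subtype.ext hyx.symm]

-- The determinant trick for multiplication by `c` on `I ^ r`.
lemma IsReduction.exists_monic_eval_eq_zero [IsNoetherianRing R] [IsDomain R] {J I : Ideal R}
    (h : IsReduction J I) (hI : I ≠ ⊥) {c : R} (hc : c ∈ I) :
    ∃ p : R[X], p.Monic ∧ 0 < p.natDegree ∧ (∀ k, p.coeff k ∈ J ^ (p.natDegree - k)) ∧
      p.eval c = 0 := by
  obtain ⟨-, r, hr⟩ := h
  obtain ⟨p, hp, -, hcoeff, hzero⟩ :=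
    LinearMap.exists_monic_and_natDegree_eq_and_coeff_mem_pow_and_aeval_eq_zero R _ J
      (range_lsmul_le hr hc)
  obtain ⟨x, hx, hx0⟩ := Submodule.exists_mem_ne_zero_of_ne_bot (pow_ne_zero r hI)
  have heval : p.eval c = 0 := by
    rw [aeval_algHom_apply, coe_aeval_eq_eval] at hzero
    exact (mul_eq_zero.mp (congrArg Subtype.val (LinearMap.congr_fun hzero ⟨x, hx⟩))).resolve_right
      hx0
  refine ⟨p, hp, Nat.pos_of_ne_zero fun hdeg => ?_, hcoeff, heval⟩
  simp [hp.natDegree_eq_zero.mp hdeg] at heval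

lemma exists_sub_mul_pow_mem {𝔞 : Ideal R} {a x : R} {n : ℕ}
    (hx : x ∈ (𝔞 ⊔ Ideal.span {a}) ^ (n + 1)) :
    ∃ ρ, x - ρ * a ^ (n + 1) ∈ 𝔞 * (𝔞 ⊔ Ideal.span {a}) ^ n := by
  obtain ⟨y, hy, _, hz, rfl⟩ :=
    Submodule.mem_sup.mp (sup_span_singleton_pow_succ_le 𝔞 a n hx)
  obtain ⟨ρ, rfl⟩ := Ideal.mem_span_singleton'.mp hz
  exact ⟨ρ, by simpa using hy⟩

lemma IsReduction.exists_homogeneous_relation [IsNoetherianRing R] [IsDomain R] {𝔞 I : Ideal R}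
    {a c : R} (h : IsReduction (𝔞 ⊔ Ideal.span {a}) I) (hI : I ≠ ⊥) (hc : c ∈ I) :
    ∃ (N : ℕ) (ρ : ℕ → R), c ^ (N + 1) + ∑ k ∈ Finset.range (N + 1), ρ k * a ^ (N + 1 - k) * c ^ k
      ∈ 𝔞 * (𝔞 ⊔ Ideal.span {a} ⊔ Ideal.span {c}) ^ N := by
  set T := 𝔞 ⊔ Ideal.span {a} ⊔ Ideal.span {c}
  have hcT : c ∈ T := Ideal.mem_sup_right (Ideal.mem_span_singleton_self c)
  obtain ⟨p, hp, hpos, hcoeff, heval⟩ := h.exists_monic_eval_eq_zero hI hc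
  obtain ⟨N, hN⟩ : ∃ N, p.natDegree = N + 1 := Nat.exists_eq_add_one.mpr hpos
  have hρ : ∀ k, ∃ ρ, k < N + 1 →
      p.coeff k - ρ * a ^ (N + 1 - k) ∈ 𝔞 * (𝔞 ⊔ Ideal.span {a}) ^ (N - k) := by
    intro k
    by_cases hk : k < N + 1
    · have hck := hcoeff k
      rw [hN, Nat.succ_sub (Nat.le_of_lt_succ hk)] at hck
      obtain ⟨ρ, hρ⟩ := exists_sub_mul_pow_mem hck
      exact ⟨ρ, fun _ => by rwa [Nat.succ_sub (Nat.le_of_lt_succ hk)]⟩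
    · exact ⟨0, fun h => absurd h hk⟩
  choose ρ hρ using hρ
  refine ⟨N, ρ, ?_⟩
  have hmonic : c ^ (N + 1) = -∑ k ∈ Finset.range (N + 1), p.coeff k * c ^ k := by
    have hlead : p.coeff (N + 1) = 1 := hN ▸ hp.coeff_natDegree
    rw [eval_eq_sum_range, hN, Finset.sum_range_succ, hlead, one_mul] at heval
    exact eq_neg_of_add_eq_zero_right heval
  rw [hmonic, neg_add_eq_sub, ← Finset.sum_sub_distrib]
  refine Ideal.sum_mem _ fun k hk => ?_
  have hk := Finset.mem_range.mp hk
  rw [← sub_mul, ← neg_sub, neg_mul, Ideal.neg_mem_iff, ← Nat.sub_add_cancel (Nat.le_of_lt_succ hk),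
    pow_add, ← mul_assoc, Nat.sub_add_cancel (Nat.le_of_lt_succ hk)]
  exact Ideal.mul_mem_mul
    (Ideal.mul_mono_right (Ideal.pow_right_mono le_sup_left _) (hρ k hk)) (Ideal.pow_mem_pow hcT k)

lemma pow_succ_sub_pow_succ_mem {T J : Ideal R} {x y : R} (hx : x ∈ T) (hy : y ∈ T)
    (hxy : x - y ∈ J) (n : ℕ) : x ^ (n + 1) - y ^ (n + 1) ∈ J * T ^ n := by
  rw [← geom_sum₂_mul, mul_comm J]
  refine Ideal.mul_mem_mul (Ideal.sum_mem _ fun i hi => ?_) hxy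
  have hi : i + (n + 1 - 1 - i) = n := by have := Finset.mem_range.mp hi; lia
  have := Ideal.mul_mem_mul (Ideal.pow_mem_pow hx i) (Ideal.pow_mem_pow hy (n + 1 - 1 - i))
  rwa [← pow_add, hi] at this

lemma mul_pow_succ_mem_of_homogeneous_relation {J T : Ideal R} {a c t : R} (ha : a ∈ T)
    (hc : c ∈ T) (hb : a + t * c ∈ J) {N : ℕ} {ρ : ℕ → R}
    (hρ : c ^ (N + 1) + ∑ k ∈ Finset.range (N + 1), ρ k * a ^ (N + 1 - k) * c ^ k ∈ J * T ^ N) :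
    (1 + ∑ k ∈ Finset.range (N + 1), ρ k * (-t) ^ (N + 1 - k)) * c ^ (N + 1) ∈ J * T ^ N := by
  have hdiff : ∑ k ∈ Finset.range (N + 1), (ρ k * a ^ (N + 1 - k) * c ^ k -
      ρ k * (-t) ^ (N + 1 - k) * c ^ (N + 1)) ∈ J * T ^ N := by
    refine Ideal.sum_mem _ fun k hk => ?_
    obtain ⟨m, rfl⟩ := Nat.exists_eq_add_of_le (Nat.le_of_lt_succ (Finset.mem_range.mp hk))
    have hm : k + m + 1 - k = m + 1 := by lia
    have hpow : a ^ (m + 1) - (-t * c) ^ (m + 1) ∈ J * T ^ m :=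
      pow_succ_sub_pow_succ_mem ha (T.mul_mem_left _ hc) (by simpa using hb) m
    have hmul := Ideal.mul_mem_left _ (ρ k) (Ideal.mul_mem_mul hpow (Ideal.pow_mem_pow hc k))
    rw [mul_assoc J, ← pow_add, add_comm m] at hmul
    convert hmul using 1
    rw [hm]
    ring
  convert Ideal.sub_mem _ hρ hdiff using 1
  rw [Finset.sum_sub_distrib, add_mul, Finset.sum_mul]
  ring

lemma exists_finite_residues_isUnit_eval [IsLocalRing R] (p : R[X]) (hp : p.map (residue R) ≠ 0) :
    ∃ F : Set (ResidueField R), F.Finite ∧ ∀ x : R, residue R x ∉ F → IsUnit (p.eval x) := by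
  classical
  refine ⟨(p.map (residue R)).roots.toFinset, Finset.finite_toSet _, fun x hx => ?_⟩
  rw [← residue_ne_zero_iff_isUnit]
  intro h0
  exact hx (by simp [hp, eval_map_apply, h0])

lemma sup_span_singleton_add_mul_sup (𝔞 : Ideal R) (a c t : R) :
    𝔞 ⊔ Ideal.span {a + t * c} ⊔ Ideal.span {c} = 𝔞 ⊔ Ideal.span {a} ⊔ Ideal.span {c} := by
  rw [sup_assoc, sup_assoc, ← Ideal.span_insert, ← Ideal.span_insert,
    Ideal.span_pair_add_mul_right]

-- Substituting `a = (a + t c) - t c` in the homogeneous relation of `c` over `𝔞 + (a)` gives an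
-- equation of integral dependence of `c` over `𝔞 + (a + t c)` with leading coefficient `p(t)`.
lemma IsReduction.exists_finite_residues_sup_span_add_mul [IsNoetherianRing R] [IsDomain R]
    [IsLocalRing R] {𝔞 I : Ideal R} {a c : R} (h : IsReduction (𝔞 ⊔ Ideal.span {a}) I)
    (hI : I ≠ ⊥) (hc : c ∈ I) :
    ∃ F : Set (ResidueField R), F.Finite ∧ ∀ t : R, residue R t ∉ F →
      IsReduction (𝔞 ⊔ Ideal.span {a + t * c}) I := by
  obtain ⟨N, ρ, hρ⟩ := h.exists_homogeneous_relation hI hc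
  let p : R[X] := 1 + ∑ k ∈ Finset.range (N + 1), C (ρ k) * (-X) ^ (N + 1 - k)
  have hp : p.map (residue R) ≠ 0 := by
    have hp0 : p.eval 0 = 1 := by
      simp only [p, eval_add, eval_one, eval_finsetSum, eval_mul, eval_C, eval_pow, eval_neg,
        eval_X, neg_zero, add_eq_left]
      refine Finset.sum_eq_zero fun k hk => ?_
      rw [zero_pow (by have := Finset.mem_range.mp hk; lia), mul_zero]
    intro h0
    simpa [h0, hp0] using eval_map_apply (residue R) (p := p) 0
  obtain ⟨F, hF, hunit⟩ := exists_finite_residues_isUnit_eval p hp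
  refine ⟨F, hF, fun t ht => ?_⟩
  have hT := sup_span_singleton_add_mul_sup 𝔞 a c t
  have hmem := mul_pow_succ_mem_of_homogeneous_relation (t := t)
    (Ideal.mem_sup_left (Ideal.mem_sup_right (Ideal.mem_span_singleton_self a)))
    (Ideal.mem_sup_right (Ideal.mem_span_singleton_self c))
    (Ideal.mem_sup_right (Ideal.mem_span_singleton_self (a + t * c)))
    (Ideal.mul_mono_left (le_sup_left : 𝔞 ≤ 𝔞 ⊔ Ideal.span {a + t * c}) hρ)
  have hu := hunit t ht
  simp only [p, eval_add, eval_one, eval_finsetSum, eval_mul, eval_C, eval_pow, eval_neg,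
    eval_X] at hu
  rw [← hT, Ideal.unit_mul_mem_iff_mem _ hu] at hmem
  refine (isReduction_sup_span_singleton hmem).trans (h.of_le_of_le ?_ ?_) <;> rw [hT]
  exacts [le_sup_left, sup_le h.1 ((Ideal.span_singleton_le_iff_mem _).mpr hc)]

end Reductions

section HomogeneousEvaluation

open MvPolynomial

variable {ι : Type*} {S : Type*} [CommRing S] {H : MvPolynomial ι S} {n : ℕ}

lemma degree_eq_of_mem_support (hH : H.IsHomogeneous n) {d : ι →₀ ℕ} (hd : d ∈ H.support) :
    d.degree = n := by
  rw [hH.degree_eq_sum_deg_support hd, Finsupp.degree_apply]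

lemma eval₂_mul_of_isHomogeneous {T : Type*} [CommRing T] (φ : S →+* T) (hH : H.IsHomogeneous n)
    (ν : ι → T) (c : T) : eval₂ φ (fun j => ν j * c) H = eval₂ φ ν H * c ^ n := by
  rw [eval₂_eq, eval₂_eq, Finset.sum_mul]
  refine Finset.sum_congr rfl fun d hd => ?_
  simp only [mul_pow, Finset.prod_mul_distrib]
  rw [← degree_eq_of_mem_support hH hd, Finsupp.degree_apply, ← Finset.prod_pow_eq_pow_sum,
    mul_assoc]

lemma eval_mul_of_isHomogeneous (hH : H.IsHomogeneous n) (ν : ι → S) (c : S) :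
    eval (fun j => ν j * c) H = eval ν H * c ^ n :=
  eval₂_mul_of_isHomogeneous _ hH ν c

lemma prod_pow_mem_pow_degree {I : Ideal S} {f : ι → S} (hf : ∀ i, f i ∈ I) (d : ι →₀ ℕ) :
    (d.prod fun j m => f j ^ m) ∈ I ^ d.degree := by
  rw [Finsupp.degree_apply, ← Finset.prod_pow_eq_pow_sum]
  exact Ideal.prod_mem_prod fun i _ => Ideal.pow_mem_pow (hf i) _

lemma eval_mem_mul_pow_of_isHomogeneous {I p : Ideal S} {f : ι → S} (hf : ∀ i, f i ∈ I)
    (hH : H.IsHomogeneous n) (hp : ∀ d, H.coeff d ∈ p) : eval f H ∈ p * I ^ n := by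
  rw [eval_eq]
  refine Ideal.sum_mem _ fun d hd => Ideal.mul_mem_mul (hp d) ?_
  rw [← degree_eq_of_mem_support hH hd]
  exact prod_pow_mem_pow_degree hf d

lemma eval_mem_pow_of_isHomogeneous {I : Ideal S} {f : ι → S} (hf : ∀ i, f i ∈ I)
    (hH : H.IsHomogeneous n) : eval f H ∈ I ^ n := by
  simpa only [Ideal.top_mul] using
    eval_mem_mul_pow_of_isHomogeneous (p := ⊤) hf hH fun _ => Submodule.mem_top

end HomogeneousEvaluation

section ReesAlgebra

open Polynomial

variable {R : Type u} [CommRing R] {ι : Type} {I : Ideal R} {f : ι → R}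

/-- The homomorphism `R[T_i] → R[X]` with `T_i ↦ f i * X`, whose image is the Rees algebra of the
ideal generated by the `f i`. -/
noncomputable def aevalMonomial (f : ι → R) : MvPolynomial ι R →ₐ[R] R[X] :=
  MvPolynomial.aeval fun i => monomial 1 (f i)

lemma aevalMonomial_of_isHomogeneous {P : MvPolynomial ι R} {n : ℕ} (hP : P.IsHomogeneous n) :
    aevalMonomial f P = monomial n (MvPolynomial.eval f P) := by
  rw [← C_mul_X_pow_eq_monomial, ← MvPolynomial.eval₂_id, MvPolynomial.eval₂_comp_left,
    RingHomCompTriple.comp_eq, ← eval₂_mul_of_isHomogeneous C hP]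
  simp only [Function.comp_apply, C_mul_X_eq_monomial]
  rfl

lemma coeff_aevalMonomial (f : ι → R) (P : MvPolynomial ι R) (n : ℕ) :
    (aevalMonomial f P).coeff n = MvPolynomial.eval f (MvPolynomial.homogeneousComponent n P) := by
  have hsum : aevalMonomial f P = ∑ i ∈ Finset.range (P.totalDegree + 1),
      monomial i (MvPolynomial.eval f (MvPolynomial.homogeneousComponent i P)) := by
    conv_lhs => rw [← MvPolynomial.sum_homogeneousComponent P]
    simp only [map_sum,
      aevalMonomial_of_isHomogeneous (MvPolynomial.homogeneousComponent_isHomogeneous _ P)]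
  simp only [hsum, finsetSum_coeff, coeff_monomial, Finset.sum_ite_eq', Finset.mem_range]
  split_ifs with hn
  · rfl
  · rw [MvPolynomial.homogeneousComponent_eq_zero _ _ (by lia), map_zero]

lemma range_aevalMonomial (f : ι → R) :
    (aevalMonomial f).range = reesAlgebra (Ideal.span (Set.range f)) := by
  rw [← adjoin_monomial_eq_reesAlgebra, Submodule.map_span, Algebra.adjoin_span, aevalMonomial,
    ← Algebra.adjoin_range_eq_range_aeval, ← Set.range_comp]
  rfl

/-- The homomorphism `R[T_i] → R[IX]` with `T_i ↦ f i * X`, for elements `f i` of `I`. -/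
noncomputable def reesMap (hf : ∀ i, f i ∈ I) : MvPolynomial ι R →ₐ[R] reesAlgebra I :=
  (aevalMonomial f).codRestrict (reesAlgebra I) fun P n => by
    rw [coeff_aevalMonomial]
    exact eval_mem_pow_of_isHomogeneous hf (MvPolynomial.homogeneousComponent_isHomogeneous n P)

lemma coeff_reesMap (hf : ∀ i, f i ∈ I) (P : MvPolynomial ι R) (n : ℕ) :
    (reesMap hf P : R[X]).coeff n =
      MvPolynomial.eval f (MvPolynomial.homogeneousComponent n P) :=
  coeff_aevalMonomial f P n

lemma coeff_mem_of_mem_map_reesAlgebra {q : Ideal R} {g : reesAlgebra I}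
    (hg : g ∈ q.map (algebraMap R (reesAlgebra I))) (n : ℕ) : (g : R[X]).coeff n ∈ q * I ^ n := by
  rw [Ideal.map] at hg
  induction hg using Submodule.span_induction generalizing n with
  | mem x h =>
    obtain ⟨r, hr, rfl⟩ := h
    rw [show ((algebraMap R (reesAlgebra I) r : reesAlgebra I) : R[X]) = C r from rfl, coeff_C]
    split_ifs with hn
    · simpa [hn] using hr
    · exact Ideal.zero_mem _
  | zero => simp
  | add x y _ _ hx hy => simpa using Ideal.add_mem _ (hx n) (hy n)
  | smul a x _ hx =>
    rw [show ((a • x : reesAlgebra I) : R[X]) = a * x from rfl, coeff_mul]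
    refine Ideal.sum_mem _ fun ij hij => ?_
    rw [← Finset.HasAntidiagonal.mem_antidiagonal.mp hij, pow_add, mul_left_comm]
    exact Ideal.mul_mem_mul (a.2 ij.1) (hx ij.2)

lemma isIntegralElem_aevalMonomial_of_eval_eq_zero {p : R[X]} (hp : p.Monic)
    (hcoeff : ∀ k, p.coeff k ∈ Ideal.span (Set.range f) ^ (p.natDegree - k)) {c : R}
    (hc : p.eval c = 0) : (aevalMonomial f).toRingHom.IsIntegralElem (monomial 1 c) := by
  have hlift : ∀ k, ∃ P, aevalMonomial f P = monomial (p.natDegree - k) (p.coeff k) := fun k =>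
    (range_aevalMonomial f).ge (reesAlgebra.monomial_mem.mpr (hcoeff k))
  choose P hP using hlift
  refine ⟨X ^ p.natDegree + ∑ k ∈ Finset.range p.natDegree, C (P k) * X ^ k, ?_, ?_⟩
  · refine monic_X_pow_add ((degree_sum_le _ _).trans_lt ?_)
    rw [Finset.sup_lt_iff (WithBot.bot_lt_coe _)]
    exact fun k hk => (degree_C_mul_X_pow_le _ _).trans_lt
      (by exact_mod_cast Finset.mem_range.mp hk)
  · have hterm : ∀ k ∈ Finset.range p.natDegree, (aevalMonomial f).toRingHom (P k) *
        monomial 1 c ^ k = monomial p.natDegree (p.coeff k * c ^ k) := by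
      intro k hk
      rw [show (aevalMonomial f).toRingHom (P k) = _ from hP k, monomial_pow, one_mul,
        monomial_mul_monomial, Nat.sub_add_cancel (Finset.mem_range.mp hk).le]
    simp only [eval₂_add, eval₂_pow, eval₂_X, eval₂_finsetSum, eval₂_mul, eval₂_C]
    rw [Finset.sum_congr rfl hterm, monomial_pow, one_mul, ← map_sum, ← map_add]
    rw [eval_eq_sum_range, Finset.sum_range_succ, hp.coeff_natDegree, one_mul, add_comm] at hc
    rw [hc, map_zero]

lemma isIntegralElem_aevalMonomial_of_mem_reesAlgebra
    (h : ∀ c ∈ I, (aevalMonomial f).toRingHom.IsIntegralElem (monomial 1 c)) {g : R[X]}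
    (hg : g ∈ reesAlgebra I) : (aevalMonomial f).toRingHom.IsIntegralElem g := by
  rw [← adjoin_monomial_eq_reesAlgebra] at hg
  induction hg using Algebra.adjoin_induction with
  | mem x hx =>
    obtain ⟨c, hc, rfl⟩ := hx
    exact h c hc
  | algebraMap r =>
    rw [← (aevalMonomial f).commutes r]
    exact RingHom.isIntegralElem_map _
  | add x y _ _ hx hy => exact hx.add _ hy
  | mul x y _ _ hx hy => exact hx.mul _ hy

lemma isIntegral_reesMap [IsNoetherianRing R] [IsDomain R] (hf : ∀ i, f i ∈ I)
    (h : IsReduction (Ideal.span (Set.range f)) I) (hI : I ≠ ⊥) :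
    (reesMap hf).toRingHom.IsIntegral := by
  intro g
  have hgen : ∀ c ∈ I, (aevalMonomial f).toRingHom.IsIntegralElem (monomial 1 c) := fun c hc =>
    have ⟨_, hp, _, hcoeff, hzero⟩ := h.exists_monic_eval_eq_zero hI hc
    isIntegralElem_aevalMonomial_of_eval_eq_zero hp hcoeff hzero
  obtain ⟨p, hp, hpg⟩ := isIntegralElem_aevalMonomial_of_mem_reesAlgebra hgen g.2
  exact ⟨p, hp, Subtype.ext <|
    (hom_eval₂ p (reesMap hf).toRingHom (reesAlgebra I).val.toRingHom g).trans hpg⟩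

end ReesAlgebra

section SpecialFiber

variable {R : Type u} [CommRing R] [IsLocalRing R]

/-- The special fiber ring of the Rees algebra of `I`; its dimension is the analytic spread. -/
def SpecialFiberRing (I : Ideal R) : Type u :=
  reesAlgebra I ⧸ (maximalIdeal R).map (algebraMap R (reesAlgebra I))

namespace SpecialFiberRing

noncomputable instance (I : Ideal R) : CommRing (SpecialFiberRing I) :=
  Ideal.Quotient.commRing _

noncomputable instance (I : Ideal R) : Algebra (ResidueField R) (SpecialFiberRing I) :=
  Ideal.Quotient.algebraQuotientMapQuotient (R := R) (S := reesAlgebra I) (p := maximalIdeal R)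

/-- The projection of the Rees algebra onto the special fiber ring. -/
noncomputable def mk (I : Ideal R) : reesAlgebra I →+* SpecialFiberRing I :=
  Ideal.Quotient.mk _

lemma mk_surjective (I : Ideal R) : Function.Surjective (mk I) :=
  Ideal.Quotient.mk_surjective

lemma mk_eq_zero_iff {I : Ideal R} {g : reesAlgebra I} :
    mk I g = 0 ↔ g ∈ (maximalIdeal R).map (algebraMap R (reesAlgebra I)) :=
  Ideal.Quotient.eq_zero_iff_mem

end SpecialFiberRing

variable {ι : Type} {I : Ideal R} {f : ι → R}

/-- The homomorphism from a polynomial ring over the residue field to the special fiber ring sending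
the variables to the leading forms of elements `f i` of `I`. -/
noncomputable def specialFiberMap (hf : ∀ i, f i ∈ I) :
    MvPolynomial ι (ResidueField R) →+* SpecialFiberRing I :=
  MvPolynomial.eval₂Hom (algebraMap _ _) fun i => SpecialFiberRing.mk I (reesMap hf (.X i))

lemma specialFiberMap_comp_map (hf : ∀ i, f i ∈ I) :
    (specialFiberMap hf).comp (MvPolynomial.map (residue R)) =
      (SpecialFiberRing.mk I).comp (reesMap hf).toRingHom := by
  refine MvPolynomial.ringHom_ext (fun r => ?_) fun i => ?_
  · have hr : (reesMap hf).toRingHom (.C r) = algebraMap R (reesAlgebra I) r :=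
      (reesMap hf).commutes r
    rw [RingHom.comp_apply, RingHom.comp_apply, hr, MvPolynomial.map_C]
    exact MvPolynomial.eval₂Hom_C _ _ (residue R r)
  · have hi : specialFiberMap hf (.X i) = SpecialFiberRing.mk I (reesMap hf (.X i)) :=
      MvPolynomial.eval₂Hom_X' _ _ i
    rw [RingHom.comp_apply, RingHom.comp_apply, MvPolynomial.map_X]
    exact hi

lemma specialFiberMap_map (hf : ∀ i, f i ∈ I) (G : MvPolynomial ι R) :
    specialFiberMap hf (MvPolynomial.map (residue R) G) = SpecialFiberRing.mk I (reesMap hf G) :=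
  RingHom.congr_fun (specialFiberMap_comp_map hf) G

lemma isIntegral_specialFiberMap [IsNoetherianRing R] [IsDomain R] (hf : ∀ i, f i ∈ I)
    (h : IsReduction (Ideal.span (Set.range f)) I) (hI : I ≠ ⊥) :
    (specialFiberMap hf).IsIntegral := by
  have hcomp : ((specialFiberMap hf).comp (MvPolynomial.map (residue R))).IsIntegral := by
    rw [specialFiberMap_comp_map]
    exact (isIntegral_reesMap hf h hI).trans _ _
      (RingHom.isIntegral_of_surjective _ (SpecialFiberRing.mk_surjective I))
  exact hcomp.tower_top _ _

lemma ringKrullDim_le_of_isIntegral {A B : Type*} [CommRing A] [CommRing B] (f : A →+* B)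
    (hf : f.IsIntegral) : ringKrullDim B ≤ ringKrullDim A := by
  let _ : Algebra A B := f.toAlgebra
  have : Algebra.IsIntegral A B := ⟨hf⟩
  exact Order.krullDim_le_of_strictMono (PrimeSpectrum.comap (algebraMap A B)) fun p q hpq =>
    Ideal.IsIntegral.comap_lt_comap (R := A) (I := p.asIdeal) (J := q.asIdeal) hpq

lemma ringKrullDim_le_of_isIntegral_of_injective {A B : Type*} [CommRing A] [CommRing B]
    (f : A →+* B) (hf : f.IsIntegral) (hinj : Function.Injective f) :
    ringKrullDim A ≤ ringKrullDim B := by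
  let _ : Algebra A B := f.toAlgebra
  have : Algebra.IsIntegral A B := ⟨hf⟩
  refine iSup_le fun l => ?_
  obtain ⟨Q, -, hQ, hQl⟩ := Ideal.exists_ideal_over_prime_of_isIntegral (S := B)
    l.head.asIdeal ⊥ ((Ideal.comap_bot_of_injective (algebraMap A B) hinj).trans_le bot_le)
  have : Q.LiesOver l.head.asIdeal := ⟨hQl.symm⟩
  obtain ⟨L, hL, -⟩ := Ideal.exists_ltSeries_of_hasGoingUp l Q
  rw [← hL]
  exact le_iSup (fun p : LTSeries (PrimeSpectrum B) => (p.length : WithBot ℕ∞)) L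

lemma fiberDim_le_card [Finite ι] [IsNoetherianRing R] [IsDomain R]
    (h : IsReduction (Ideal.span (Set.range f)) I) (hI : I ≠ ⊥) :
    fiberDim I ≤ (Nat.card ι : WithBot ℕ∞) := by
  have hf : ∀ i, f i ∈ I := fun i => h.1 (Ideal.subset_span ⟨i, rfl⟩)
  have hdim := ringKrullDim_le_of_isIntegral _ (isIntegral_specialFiberMap hf h hI)
  rwa [MvPolynomial.ringKrullDim_of_isNoetherianRing, ringKrullDim_eq_zero_of_field,
    zero_add] at hdim

end SpecialFiber

section GeneratorElimination

variable {R : Type u} [CommRing R] {I J : Ideal R}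

lemma prod_pow_sub_prod_pow_mul_mem {ι : Type*} {f g : ι → R} (hf : ∀ j, f j ∈ I)
    (hg : ∀ j, g j ∈ I) (hfg : ∀ j, f j - g j ∈ J) (d : ι →₀ ℕ) {x : R} (hx : x ∈ I) :
    ((d.prod fun j m => f j ^ m) - d.prod fun j m => g j ^ m) * x ∈ J * I ^ d.degree := by
  induction d using Finsupp.induction_linear generalizing x with
  | zero => simp
  | single j m =>
    simp only [Finsupp.prod_single_index, pow_zero, Finsupp.degree_single]
    cases m with
    | zero => simp
    | succ m =>
      rw [pow_succ I, ← mul_assoc]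
      exact Ideal.mul_mem_mul (pow_succ_sub_pow_succ_mem (hf j) (hg j) (hfg j) m) hx
  | add d e hd he =>
    have hadd (f : ι → R) : ((d + e).prod fun j m => f j ^ m) =
        (d.prod fun j m => f j ^ m) * e.prod fun j m => f j ^ m :=
      Finsupp.prod_add_index' (fun _ => pow_zero _) fun _ _ _ => pow_add ..
    have hd' := Ideal.mul_mem_mul (hd hx) (prod_pow_mem_pow_degree hf e)
    have he' := Ideal.mul_mem_mul (he hx) (prod_pow_mem_pow_degree hg d)
    rw [mul_assoc J, ← pow_add] at hd' he'
    rw [add_comm e.degree] at he'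
    rw [hadd, hadd, map_add]
    convert Ideal.add_mem _ hd' he' using 1
    ring

lemma eval_sub_eval_mul_mem {ι : Type*} {f g : ι → R} (hf : ∀ j, f j ∈ I) (hg : ∀ j, g j ∈ I)
    (hfg : ∀ j, f j - g j ∈ J) {H : MvPolynomial ι R} {n : ℕ} (hH : H.IsHomogeneous n) {x : R}
    (hx : x ∈ I) : (MvPolynomial.eval f H - MvPolynomial.eval g H) * x ∈ J * I ^ n := by
  rw [MvPolynomial.eval_eq, MvPolynomial.eval_eq, ← Finset.sum_sub_distrib, Finset.sum_mul]
  refine Ideal.sum_mem _ fun d hd => ?_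
  rw [← mul_sub, mul_assoc, ← degree_eq_of_mem_support hH hd]
  exact Ideal.mul_mem_left _ _ (prod_pow_sub_prod_pow_mul_mem hf hg hfg d hx)

lemma span_range_sub_mul_le {ι : Type*} (a ν : ι → R) (k : ι) :
    Ideal.span (Set.range fun j => a j - ν j * a k) ≤ Ideal.span (Set.range a) := by
  rw [Ideal.span_le]
  rintro _ ⟨j, rfl⟩
  exact Ideal.sub_mem _ (Ideal.subset_span ⟨j, rfl⟩)
    (Ideal.mul_mem_left _ _ (Ideal.subset_span ⟨k, rfl⟩))

lemma span_range_sub_mul_eq_succAbove {s : ℕ} (a : Fin (s + 1) → R) {ν : Fin (s + 1) → R}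
    {k : Fin (s + 1)} (hk : ν k = 1) :
    Ideal.span (Set.range fun j => a j - ν j * a k) =
      Ideal.span (Set.range fun j => a (k.succAbove j) - ν (k.succAbove j) * a k) := by
  apply le_antisymm
  · rw [Ideal.span_le, Set.range_subset_iff, Fin.forall_iff_succAbove k]
    exact ⟨by simp [hk], fun j => Ideal.subset_span ⟨j, rfl⟩⟩
  · exact Ideal.span_mono (Set.range_comp_subset_range k.succAbove fun j => a j - ν j * a k)

variable [IsLocalRing R]

lemma IsReduction.of_pow_succ_le_sup_maximalIdeal_mul [IsNoetherianRing R] (hJ : J ≤ I) {r : ℕ}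
    (h : I ^ (r + 1) ≤ J * I ^ r ⊔ maximalIdeal R * I ^ (r + 1)) : IsReduction J I :=
  .of_pow_succ_le hJ <| Submodule.le_of_le_smul_of_le_jacobson_bot (IsNoetherian.noetherian _)
    (by rw [IsLocalRing.jacobson_eq_maximalIdeal _ bot_ne_top]) h

lemma IsReduction.of_le_sup_maximalIdeal_mul [IsNoetherianRing R] {J' : Ideal R}
    (h : IsReduction J' I) (hJ : J ≤ I) (hJ' : J' ≤ J ⊔ maximalIdeal R * I) : IsReduction J I := by
  obtain ⟨-, r, hr⟩ := h
  refine .of_pow_succ_le_sup_maximalIdeal_mul hJ (r := r) ?_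
  calc I ^ (r + 1) = J' * I ^ r := hr
    _ ≤ (J ⊔ maximalIdeal R * I) * I ^ r := Ideal.mul_mono_left hJ'
    _ = J * I ^ r ⊔ maximalIdeal R * I ^ (r + 1) := by rw [Ideal.sup_mul, mul_assoc, pow_succ']

lemma IsReduction.of_le_sup_span_singleton [IsNoetherianRing R] {J' : Ideal R}
    (h : IsReduction J I) {y : R} (hJ' : J' ≤ I) (hy : y ∈ I) (hJ : J ≤ J' ⊔ Ideal.span {y}) {n : ℕ}
    (hpow : Ideal.span {y ^ (n + 1)} * I ≤ J' * I ^ (n + 1) ⊔ maximalIdeal R * I ^ (n + 2)) :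
    IsReduction J' I := by
  obtain ⟨-, r, hr⟩ := h
  have hJI : J' ⊔ Ideal.span {y} ≤ I := sup_le hJ' ((Ideal.span_singleton_le_iff_mem _).mpr hy)
  have hJn : J ^ (n + 1) ≤ J' * I ^ n ⊔ Ideal.span {y ^ (n + 1)} :=
    (Ideal.pow_right_mono hJ _).trans <| (sup_span_singleton_pow_succ_le _ _ _).trans <|
      sup_le_sup_right (Ideal.mul_mono_right (Ideal.pow_right_mono hJI _)) _
  refine .of_pow_succ_le_sup_maximalIdeal_mul hJ' (r := n + 1 + r) ?_
  calc I ^ (n + 1 + r + 1) = J ^ (n + 1) * I ^ (r + 1) := by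
        rw [show n + 1 + r + 1 = r + (n + 1) + 1 by ring, pow_succ, pow_add_eq_of_pow_succ_eq hr,
          mul_assoc, ← pow_succ]
    _ ≤ (J' * I ^ n ⊔ Ideal.span {y ^ (n + 1)}) * I ^ (r + 1) := Ideal.mul_mono_left hJn
    _ = J' * I ^ (n + 1 + r) ⊔ Ideal.span {y ^ (n + 1)} * I * I ^ r := by
        rw [Ideal.sup_mul, mul_assoc, ← pow_add, mul_assoc _ I, ← pow_succ',
          show n + (r + 1) = n + 1 + r by ring]
    _ ≤ J' * I ^ (n + 1 + r) ⊔ (J' * I ^ (n + 1) ⊔ maximalIdeal R * I ^ (n + 2)) * I ^ r :=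
        sup_le_sup_left (Ideal.mul_mono_left hpow) _
    _ = J' * I ^ (n + 1 + r) ⊔ maximalIdeal R * I ^ (n + 1 + r + 1) := by
        rw [Ideal.sup_mul, mul_assoc, mul_assoc, ← pow_add, ← pow_add, ← sup_assoc, sup_idem,
          show n + 2 + r = n + 1 + r + 1 by ring]

-- Modulo the new generators, `a j` is `ν j * a k`, so `H(a) ∈ 𝔪 I ^ (n + 1)` reads
-- `H(ν) * a k ^ (n + 1) ∈ 𝔪 I ^ (n + 1)` with `H(ν)` a unit.
lemma IsReduction.span_range_sub_mul [IsNoetherianRing R] {ι : Type*} {a ν : ι → R} {k : ι}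
    (h : IsReduction (Ideal.span (Set.range a)) I) {H : MvPolynomial ι R} {n : ℕ}
    (hH : H.IsHomogeneous (n + 1)) (hHa : MvPolynomial.eval a H ∈ maximalIdeal R * I ^ (n + 1))
    (hν : IsUnit (MvPolynomial.eval ν H)) :
    IsReduction (Ideal.span (Set.range fun j => a j - ν j * a k)) I := by
  set J' := Ideal.span (Set.range fun j => a j - ν j * a k)
  have ha : ∀ j, a j ∈ I := fun j => h.1 (Ideal.subset_span ⟨j, rfl⟩)
  refine h.of_le_sup_span_singleton ((span_range_sub_mul_le a ν k).trans h.1) (ha k) ?_ (n := n) ?_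
  · rw [Ideal.span_le]
    rintro _ ⟨j, rfl⟩
    rw [SetLike.mem_coe, ← sub_add_cancel (a j) (ν j * a k)]
    exact Submodule.add_mem_sup (Ideal.subset_span ⟨j, rfl⟩)
      (Ideal.mul_mem_left _ _ (Ideal.mem_span_singleton_self _))
  · rw [Ideal.span_singleton_mul_le_iff]
    intro x hx
    have hdiff := eval_sub_eval_mul_mem (J := J') ha (g := fun j => ν j * a k)
      (fun j => Ideal.mul_mem_left _ _ (ha k)) (fun j => Ideal.subset_span ⟨j, rfl⟩) hH hx
    have hax := Ideal.mul_mem_mul hHa hx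
    rw [mul_assoc, ← pow_succ] at hax
    rw [eval_mul_of_isHomogeneous hH] at hdiff
    rw [← Ideal.unit_mul_mem_iff_mem _ hν]
    convert Ideal.sub_mem _ (Ideal.mem_sup_right hax) (Ideal.mem_sup_left hdiff) using 1
    ring

lemma exists_residue_eq_mul_inv {ι : Type*} {μ : ι → ResidueField R} {k : ι} (hk : μ k ≠ 0) :
    ∃ ν : ι → R, ν k = 1 ∧ ∀ j, residue R (ν j) = μ j * (μ k)⁻¹ := by
  classical
  choose lift hlift using fun j => residue_surjective (R := R) (μ j * (μ k)⁻¹)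
  refine ⟨Function.update lift k 1, Function.update_self .., fun j => ?_⟩
  obtain rfl | hj := eq_or_ne j k
  · rw [Function.update_self, map_one, mul_inv_cancel₀ hk]
  · rw [Function.update_of_ne hj, hlift]

lemma exists_isUnit_eval_of_isHomogeneous [Infinite (ResidueField R)] {ι : Type*}
    {H : MvPolynomial ι R} {n : ℕ} (hH : H.IsHomogeneous (n + 1))
    (hne : MvPolynomial.map (residue R) H ≠ 0) :
    ∃ (ν : ι → R) (k : ι), ν k = 1 ∧ IsUnit (MvPolynomial.eval ν H) := by
  have hH' := hH.map (residue R)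
  obtain ⟨μ, hμ⟩ : ∃ μ, MvPolynomial.eval μ (MvPolynomial.map (residue R) H) ≠ 0 := by
    by_contra! hzero
    exact hne (MvPolynomial.funext (by simpa using hzero))
  obtain ⟨k, hk⟩ : ∃ k, μ k ≠ 0 := by
    by_contra! hzero
    have hμ0 := eval_mul_of_isHomogeneous hH' μ 0
    rw [← Pi.mul_def, show (μ * fun _ => 0) = μ from funext fun j => by simp [hzero j]] at hμ0
    exact hμ (by simpa using hμ0)
  obtain ⟨ν, hνk, hν⟩ := exists_residue_eq_mul_inv hk
  refine ⟨ν, k, hνk, ?_⟩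
  rw [← residue_ne_zero_iff_isUnit]
  have hres : residue R (MvPolynomial.eval ν H) =
      MvPolynomial.eval (fun j => μ j * (μ k)⁻¹) (MvPolynomial.map (residue R) H) := by
    rw [MvPolynomial.eval_map, ← funext hν]
    exact MvPolynomial.eval₂_comp_left (residue R) (RingHom.id R) ν H
  rw [hres, eval_mul_of_isHomogeneous hH']
  exact mul_ne_zero hμ (pow_ne_zero _ (inv_ne_zero hk))

end GeneratorElimination

section MinimalReductions

variable {R : Type u} [CommRing R] [IsLocalRing R] {I : Ideal R}

lemma exists_isHomogeneous_eval_mem_of_not_injective {ι : Type} {f : ι → R} {hf : ∀ i, f i ∈ I}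
    (h : ¬ Function.Injective (specialFiberMap hf)) :
    ∃ (n : ℕ) (H : MvPolynomial ι R), H.IsHomogeneous (n + 1) ∧
      MvPolynomial.map (residue R) H ≠ 0 ∧
      MvPolynomial.eval f H ∈ maximalIdeal R * I ^ (n + 1) := by
  classical
  rw [injective_iff_map_eq_zero] at h
  push Not at h
  obtain ⟨G', hG', hne⟩ := h
  obtain ⟨G, rfl⟩ := MvPolynomial.map_surjective (residue R) residue_surjective G'
  obtain ⟨d, hd⟩ := MvPolynomial.ne_zero_iff.mp hne
  rw [specialFiberMap_map, SpecialFiberRing.mk_eq_zero_iff] at hG'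
  have heval (n : ℕ) := coeff_reesMap hf G n ▸ coeff_mem_of_mem_map_reesAlgebra hG' n
  cases hn : d.degree with
  | zero =>
    rw [Finsupp.degree_eq_zero_iff] at hn
    have h0 := heval 0
    rw [MvPolynomial.homogeneousComponent_zero, MvPolynomial.eval_C, pow_zero, Ideal.one_eq_top,
      Ideal.mul_top] at h0
    rw [hn, MvPolynomial.coeff_map, (residue_eq_zero_iff _).mpr h0] at hd
    exact absurd rfl hd
  | succ n =>
    refine ⟨n, _, MvPolynomial.homogeneousComponent_isHomogeneous (n + 1) G,
      MvPolynomial.ne_zero_iff.mpr ⟨d, ?_⟩, heval (n + 1)⟩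
    rwa [MvPolynomial.coeff_map, MvPolynomial.coeff_homogeneousComponent, if_pos hn,
      ← MvPolynomial.coeff_map]

lemma injective_specialFiberMap_of_minimal [IsNoetherianRing R] [Infinite (ResidueField R)]
    {J : Ideal R}
    (hJ : IsMinimalReduction J I) {s : ℕ} {a : Fin s → R} (ha : Ideal.span (Set.range a) = J)
    (hs : ∀ t, (∃ b : Fin t → R, Ideal.span (Set.range b) = J) → s ≤ t) (haI : ∀ j, a j ∈ I) :
    Function.Injective (specialFiberMap haI) := by
  by_contra hinj
  obtain ⟨n, H, hH, hne, hHa⟩ := exists_isHomogeneous_eval_mem_of_not_injective hinj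
  obtain ⟨ν, k, hνk, hν⟩ := exists_isUnit_eval_of_isHomogeneous hH hne
  have hred : IsReduction (Ideal.span (Set.range a)) I := ha ▸ hJ.1
  have heq := hJ.2 _ (hred.span_range_sub_mul (k := k) hH hHa hν)
    ((span_range_sub_mul_le a ν k).trans ha.le)
  obtain ⟨t, rfl⟩ : ∃ t, s = t + 1 := Nat.exists_eq_add_one.mpr k.pos
  rw [span_range_sub_mul_eq_succAbove a hνk] at heq
  exact absurd (hs t ⟨_, heq⟩) (by lia)

lemma IsMinimalReduction.exists_span_range_eq [IsNoetherianRing R] [IsDomain R]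
    [Infinite (ResidueField R)] {J : Ideal R} (hJ : IsMinimalReduction J I) (hI : I ≠ ⊥) {l : ℕ}
    (hl : fiberDim I = (l : WithBot ℕ∞)) : ∃ a : Fin l → R, Ideal.span (Set.range a) = J := by
  classical
  have hfg : ∃ s, ∃ a : Fin s → R, Ideal.span (Set.range a) = J :=
    Submodule.fg_iff_exists_fin_generating_family.mp (IsNoetherian.noetherian J)
  obtain ⟨a, ha⟩ := Nat.find_spec hfg
  have hred : IsReduction (Ideal.span (Set.range a)) I := by rw [ha]; exact hJ.1
  have haI : ∀ j, a j ∈ I := fun j => hred.1 (Ideal.subset_span ⟨j, rfl⟩)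
  have hinj := injective_specialFiberMap_of_minimal hJ ha (fun t => Nat.find_min' hfg) haI
  have hle : l ≤ Nat.find hfg := by
    have := fiberDim_le_card hred hI
    rw [hl, Nat.card_fin] at this
    exact_mod_cast this
  have hge : Nat.find hfg ≤ l := by
    have hdim := ringKrullDim_le_of_isIntegral_of_injective _
      (isIntegral_specialFiberMap haI hred hI) hinj
    rw [MvPolynomial.ringKrullDim_of_isNoetherianRing, ringKrullDim_eq_zero_of_field, zero_add,
      Nat.card_fin, show ringKrullDim (SpecialFiberRing I) = l from hl] at hdim
    exact_mod_cast hdim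
  obtain rfl := hle.antisymm hge
  exact ⟨a, ha⟩

instance : RingHomSurjective (residue R) := ⟨residue_surjective⟩

/-- The coordinate vectors over the residue field of the elements of `J'`, with respect to
the generators `a i`. -/
noncomputable def residueCoordinates {l : ℕ} (a : Fin l → R) (J' : Ideal R) :
    Submodule (ResidueField R) (Fin l → ResidueField R) :=
  Submodule.map
    ({ toFun := fun c i => residue R (c i)
       map_add' := fun _ _ => funext fun _ => map_add _ _ _
       map_smul' := fun _ _ => funext fun _ => map_mul _ _ _ } :
      (Fin l → R) →ₛₗ[residue R] (Fin l → ResidueField R))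
    (Submodule.comap (Fintype.linearCombination R a) J')

variable {J' : Ideal R} {l : ℕ} {a : Fin l → R}

lemma mem_residueCoordinates {w : Fin l → ResidueField R} :
    w ∈ residueCoordinates a J' ↔
      ∃ c : Fin l → R, ∑ i, c i * a i ∈ J' ∧ (fun i => residue R (c i)) = w :=
  Iff.rfl

lemma span_range_le_of_residueCoordinates_eq_top [IsNoetherianRing R]
    (h : residueCoordinates a J' = ⊤) : Ideal.span (Set.range a) ≤ J' := by
  refine Submodule.le_of_le_smul_of_le_jacobson_bot (I := maximalIdeal R)
    (IsNoetherian.noetherian _) (by rw [IsLocalRing.jacobson_eq_maximalIdeal _ bot_ne_top]) ?_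
  rw [Ideal.span_le]
  rintro _ ⟨j, rfl⟩
  obtain ⟨c, hc, hcj⟩ := mem_residueCoordinates.mp (h ▸ Submodule.mem_top (x := Pi.single j 1))
  have haj : a j = ∑ i, c i * a i + ∑ i, ((Pi.single j 1 : Fin l → R) i - c i) * a i := by
    rw [← Finset.sum_add_distrib]
    simp [sub_mul, Pi.single_apply]
  rw [haj]
  refine Submodule.add_mem_sup hc (Ideal.sum_mem _ fun i _ => Ideal.mul_mem_mul ?_
    (Ideal.subset_span ⟨i, rfl⟩))
  rw [← residue_eq_zero_iff, map_sub, congrFun hcj i]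
  obtain rfl | hij := eq_or_ne i j <;> simp [*]

-- A linear functional vanishing on the coordinates of `J'` gives the coefficients `ν`.
lemma exists_le_span_range_sub_mul_sup (hle : J' ≤ Ideal.span (Set.range a))
    (h : residueCoordinates a J' ≠ ⊤) :
    ∃ (ν : Fin l → R) (k : Fin l), ν k = 1 ∧
      J' ≤ Ideal.span (Set.range fun j => a j - ν j * a k) ⊔
        maximalIdeal R * Ideal.span (Set.range a) := by
  obtain ⟨φ, hφ, hφJ'⟩ := Submodule.exists_le_ker_of_lt_top _ (lt_top_iff_ne_top.mpr h)
  have hφsum (w : Fin l → ResidueField R) : φ w = ∑ i, w i * φ (Pi.single i 1) := by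
    conv_lhs => rw [pi_eq_sum_univ' w]
    simp [map_sum]
  obtain ⟨k, hk⟩ : ∃ k, φ (Pi.single k 1) ≠ 0 := by
    by_contra! hzero
    exact hφ (LinearMap.ext fun w => by simp [hφsum w, hzero])
  obtain ⟨ν, hνk, hν⟩ := exists_residue_eq_mul_inv (μ := fun j => φ (Pi.single j 1)) hk
  refine ⟨ν, k, hνk, fun x hx => ?_⟩
  obtain ⟨c, rfl⟩ := Ideal.mem_span_range_iff_exists_fun.mp (hle hx)
  have hcν : ∑ i, c i * ν i ∈ maximalIdeal R := by
    have hφc := hφJ' (mem_residueCoordinates.mpr ⟨c, hx, rfl⟩)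
    rw [LinearMap.mem_ker, hφsum] at hφc
    rw [← residue_eq_zero_iff, map_sum]
    simp only [map_mul, hν, ← mul_assoc]
    rw [← Finset.sum_mul, hφc, zero_mul]
  have hsplit : ∑ i, c i * a i = ∑ i, c i * (a i - ν i * a k) + (∑ i, c i * ν i) * a k := by
    rw [Finset.sum_mul, ← Finset.sum_add_distrib]
    exact Finset.sum_congr rfl fun i _ => by ring
  rw [hsplit]
  exact Submodule.add_mem_sup
    (Ideal.sum_mem _ fun i _ => Ideal.mul_mem_left _ _ (Ideal.subset_span ⟨i, rfl⟩))
    (Ideal.mul_mem_mul hcν (Ideal.subset_span ⟨k, rfl⟩))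

lemma IsReduction.isMinimalReduction_span_range [IsNoetherianRing R] [IsDomain R]
    (hred : IsReduction (Ideal.span (Set.range a)) I) (hI : I ≠ ⊥)
    (hl : fiberDim I = (l : WithBot ℕ∞)) : IsMinimalReduction (Ideal.span (Set.range a)) I := by
  refine ⟨hred, fun J' hJ' hle =>
    hle.antisymm (span_range_le_of_residueCoordinates_eq_top (by_contra fun h => ?_))⟩
  obtain ⟨ν, k, hνk, hJ'ν⟩ := exists_le_span_range_sub_mul_sup hle h
  obtain ⟨t, rfl⟩ : ∃ t, l = t + 1 := Nat.exists_eq_add_one.mpr k.pos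
  have hred' : IsReduction (Ideal.span (Set.range fun j => a j - ν j * a k)) I :=
    hJ'.of_le_sup_maximalIdeal_mul ((span_range_sub_mul_le a ν k).trans hred.1)
      (hJ'ν.trans (sup_le_sup_left (Ideal.mul_mono_right hred.1) _))
  rw [span_range_sub_mul_eq_succAbove a hνk] at hred'
  have hcard := fiberDim_le_card hred' hI
  rw [hl, Nat.card_fin] at hcard
  exact absurd (by exact_mod_cast hcard : t + 1 ≤ t) (by lia)

end MinimalReductions

section Localize

variable {R : Type u} [CommRing R]

lemma exists_notMem_forall_mul_mem [IsNoetherianRing R] {I q L : Ideal R} (hq : q.IsPrime)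
    (h : ∀ x ∈ I, ∃ τ, τ ∉ q ∧ τ * x ∈ L) : ∃ τ, τ ∉ q ∧ ∀ x ∈ I, τ * x ∈ L := by
  obtain ⟨s, rfl⟩ := (IsNoetherian.noetherian I : I.FG)
  choose τ hτq hτ using fun x : s => h x (Ideal.subset_span x.2)
  refine ⟨∏ x, τ x, fun hmem => ?_, fun x hx => ?_⟩
  · obtain ⟨x, -, hx⟩ := hq.prod_mem_iff.mp hmem
    exact hτq x hx
  · induction hx using Submodule.span_induction with
    | mem x hx =>
      obtain ⟨r, hr⟩ := Finset.dvd_prod_of_mem τ (Finset.mem_univ (⟨x, hx⟩ : s))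
      rw [hr, mul_right_comm]
      exact Ideal.mul_mem_right _ _ (hτ ⟨x, hx⟩)
    | zero => simp
    | add x y _ _ hx hy => rw [mul_add]; exact Ideal.add_mem _ hx hy
    | smul t x _ hx => rw [smul_eq_mul, mul_left_comm]; exact Ideal.mul_mem_left _ _ hx

lemma exists_notMem_forall_smul_eq_zero {M : Type*} [AddCommGroup M] [Module R M]
    [Module.Finite R M] {q : Ideal R} (hq : q.IsPrime) {τ : R} (hτ : τ ∉ q)
    (h : ∀ m : M, τ • m ∈ q • (⊤ : Submodule R M)) : ∃ σ, σ ∉ q ∧ ∀ m : M, σ • m = 0 := by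
  obtain ⟨p, hp, -, hcoeff, hev⟩ :=
    LinearMap.exists_monic_and_natDegree_eq_and_coeff_mem_pow_and_aeval_eq_zero R
      (algebraMap R (Module.End R M) τ) q (by rintro _ ⟨m, rfl⟩; exact h m)
  refine ⟨p.eval τ, fun hmem => ?_, fun m => ?_⟩
  · rw [Polynomial.eval_eq_sum_range, Finset.sum_range_succ, hp.coeff_natDegree, one_mul] at hmem
    have hlower : ∑ k ∈ Finset.range p.natDegree, p.coeff k * τ ^ k ∈ q := by
      refine Ideal.sum_mem _ fun k hk => Ideal.mul_mem_right _ _ (Ideal.pow_le_self ?_ (hcoeff k))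
      have := Finset.mem_range.mp hk
      lia
    exact hτ (hq.mem_of_pow_mem _ ((Ideal.add_mem_iff_right _ hlower).mp hmem))
  · rw [Polynomial.aeval_algebraMap_apply] at hev
    simpa using congrArg (fun g : Module.End R M => g m) hev

/-- The saturation of `L` at a prime `q`: the elements lying in `L` locally at `q`. They form an
ideal only when `q` is prime, whence the span. -/
def saturationAt (q L : Ideal R) : Ideal R := Ideal.span {x | ∃ τ, τ ∉ q ∧ τ * x ∈ L}

lemma mem_saturationAt {q L : Ideal R} (hq : q.IsPrime) {x : R} :
    x ∈ saturationAt q L ↔ ∃ τ, τ ∉ q ∧ τ * x ∈ L := by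
  refine ⟨fun h => ?_, fun h => Ideal.subset_span h⟩
  rw [saturationAt] at h
  induction h using Submodule.span_induction with
  | mem _ h => exact h
  | zero => exact ⟨1, (Ideal.ne_top_iff_one q).mp hq.ne_top, by simp⟩
  | add x y _ _ hx hy =>
    obtain ⟨τ, hτ, hx⟩ := hx
    obtain ⟨τ', hτ', hy⟩ := hy
    refine ⟨τ * τ', fun h => (hq.mem_or_mem h).elim hτ hτ', ?_⟩
    convert Ideal.add_mem _ (Ideal.mul_mem_left _ τ' hx) (Ideal.mul_mem_left _ τ hy) using 1
    ring
  | smul t x _ hx =>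
    obtain ⟨τ, hτ, hx⟩ := hx
    refine ⟨τ, hτ, ?_⟩
    rw [smul_eq_mul, mul_left_comm]
    exact Ideal.mul_mem_left _ t hx

-- Nakayama's lemma for `(I + 𝔞) / 𝔞` localized at `q`.
lemma not_colon_le_of_le_saturationAt [IsNoetherianRing R] {𝔞 I q : Ideal R} (hq : q.IsPrime)
    (h : I ≤ saturationAt q (𝔞 ⊔ q * I)) : ¬ (𝔞.colon I ≤ q) := by
  obtain ⟨τ, hτ, hI⟩ := exists_notMem_forall_mul_mem hq fun x hx => (mem_saturationAt hq).mp (h hx)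
  set M := Submodule.map (Submodule.mkQ 𝔞) I
  have hqM : Submodule.map (Submodule.mkQ 𝔞) (q * I) =
      Submodule.map M.subtype (q • (⊤ : Submodule R M)) := by
    rw [Submodule.map_smul'', Submodule.map_top, Submodule.range_subtype, ← smul_eq_mul,
      Submodule.map_smul'']
  have hτM : ∀ m : M, τ • m ∈ q • (⊤ : Submodule R M) := by
    rintro ⟨_, x, hx, rfl⟩
    obtain ⟨α, hα, β, hβ, hαβ⟩ := Submodule.mem_sup.mp (hI x hx)
    obtain ⟨z, hz, hzβ⟩ := hqM ▸ Submodule.mem_map_of_mem (f := Submodule.mkQ 𝔞) hβ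
    refine (Subtype.ext (hzβ.trans ?_) : z = τ • _) ▸ hz
    change Submodule.mkQ 𝔞 β = τ • Submodule.mkQ 𝔞 x
    rw [← map_smul, smul_eq_mul, ← hαβ, map_add, (Submodule.Quotient.mk_eq_zero 𝔞).mpr hα |>
      (Submodule.mkQ_apply 𝔞 α).trans, zero_add]
  obtain ⟨σ, hσ, hσM⟩ := exists_notMem_forall_smul_eq_zero hq hτ hτM
  refine fun hle => hσ (hle (Submodule.mem_colon.mpr fun x hx => ?_))
  have hσx : σ • Submodule.mkQ 𝔞 x = 0 :=
    congrArg Subtype.val (hσM ⟨_, Submodule.mem_map_of_mem hx⟩)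
  rwa [← map_smul, Submodule.mkQ_apply, Submodule.Quotient.mk_eq_zero] at hσx

end Localize

section Generic

variable {R : Type u} [CommRing R] {I 𝔞 q : Ideal R} {l i n : ℕ}

/-- The sum of all the ideals `(𝔞 + (s)) : I`, where `s ⊆ I` has at most `n` elements. Away from
its zero locus, `n` further elements generate `I` modulo `𝔞`. -/
def iSupColon (𝔞 I : Ideal R) (n : ℕ) : Ideal R :=
  ⨆ (s : Finset R) (_ : s.card ≤ n ∧ (s : Set R) ⊆ I), (𝔞 ⊔ Ideal.span (s : Set R)).colon I

lemma iSupColon_le_iff {L : Ideal R} : iSupColon 𝔞 I n ≤ L ↔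
    ∀ s : Finset R, s.card ≤ n → (s : Set R) ⊆ I → (𝔞 ⊔ Ideal.span (s : Set R)).colon I ≤ L := by
  simp only [iSupColon, iSup_le_iff, and_imp]

lemma colon_le_iSupColon (𝔞 I : Ideal R) (n : ℕ) : 𝔞.colon I ≤ iSupColon 𝔞 I n :=
  (Submodule.colon_mono le_sup_left subset_rfl).trans
    (iSupColon_le_iff.mp le_rfl ∅ (by simp) (by simp))

/-- The ideal `𝔞`, thought of as generated by `i` elements of `I`, is in general position with
respect to `G_l`: its colon into `I` has height at least `i`, and at each prime containing `I` of
height at most `i + n < l`, the ideal `I` is generated by `n` elements modulo `𝔞`. -/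
structure IsGeneric (I : Ideal R) (l : ℕ) (𝔞 : Ideal R) (i : ℕ) : Prop where
  le : 𝔞 ≤ I
  le_height : (i : ℕ∞) ≤ (𝔞.colon I).height
  not_iSupColon_le : ∀ n, i + n < l → ∀ q : Ideal R, q.IsPrime → I ≤ q → q.height ≤ (i + n : ℕ) →
    ¬ iSupColon 𝔞 I n ≤ q

namespace IsGeneric

lemma not_le_of_colon_le (h : IsGeneric I l 𝔞 i) (hi : i < l) (hq : q.IsPrime)
    (hle : 𝔞.colon I ≤ q) (hqi : q.height ≤ i) : ¬ I ≤ q := by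
  refine fun hIq => h.not_iSupColon_le 0 hi q hq hIq hqi (iSupColon_le_iff.mpr fun s hs _ => ?_)
  rw [Nat.le_zero, Finset.card_eq_zero] at hs
  simpa [hs] using hle

lemma le_height_colon_sup_span_singleton (h : IsGeneric I l 𝔞 i) (hi : i < l) {x : R}
    (hx : ∀ q ∈ (𝔞.colon I).minimalPrimes, ¬ I ≤ q → x ∉ q) :
    ((i + 1 : ℕ) : ℕ∞) ≤ ((𝔞 ⊔ Ideal.span {x}).colon I).height := by
  rw [Ideal.height_eq_inf_minimalPrimes, le_iInf₂_iff]
  intro q hqmin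
  have hq := hqmin.1.1
  by_contra hlt
  have hle : 𝔞.colon I ≤ q :=
    (Submodule.colon_mono le_sup_left subset_rfl).trans hqmin.1.2
  have hqi : q.height ≤ i := Order.le_of_lt_add_one (by exact_mod_cast not_le.mp hlt)
  have hfin : q.FiniteHeight := ⟨Or.inr (ne_top_of_le_ne_top (ENat.natCast_ne_top i) hqi)⟩
  have hmin := Ideal.mem_minimalPrimes_of_height_le hle (hqi.trans h.le_height)
  refine hx q hmin (h.not_le_of_colon_le hi hq hle hqi) (hqmin.1.2 (Ideal.le_colon ?_))
  exact Ideal.mem_sup_right (Ideal.mem_span_singleton_self x)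

lemma mem_minimalPrimes_sup_iSupColon (h : IsGeneric I l 𝔞 i) (hn : i + 1 + n < l)
    (hq : q.IsPrime) (hIq : I ≤ q) (hqh : q.height ≤ (i + 1 + n : ℕ))
    (hle : iSupColon 𝔞 I n ≤ q) : q ∈ (I ⊔ iSupColon 𝔞 I n).minimalPrimes := by
  have hfin : q.FiniteHeight := ⟨Or.inr (ne_top_of_le_ne_top (ENat.natCast_ne_top _) hqh)⟩
  refine Ideal.mem_minimalPrimes_of_height_le (sup_le hIq hle) (hqh.trans ?_)
  rw [Ideal.height_eq_inf_minimalPrimes, le_iInf₂_iff]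
  intro q' hq'
  by_contra hlt
  refine h.not_iSupColon_le n (by lia) q' hq'.1.1 (le_sup_left.trans hq'.1.2) ?_
    (le_sup_right.trans hq'.1.2)
  refine Order.le_of_lt_add_one ((not_le.mp hlt).trans_eq ?_)
  rw [add_right_comm, Nat.cast_succ]

end IsGeneric

-- As in Steinitz exchange: modulo `𝔞`, a generator with a unit coefficient in `x` is redundant.
lemma exists_not_colon_sup_span_erase_le [DecidableEq R] (hq : q.IsPrime) {x : R} (hx : x ∈ I)
    (hxq : x ∉ saturationAt q (𝔞 ⊔ q * I)) {s : Finset R} (hs : (s : Set R) ⊆ I)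
    (hsq : ¬ (𝔞 ⊔ Ideal.span (s : Set R)).colon I ≤ q) :
    ∃ y ∈ s, ¬ (𝔞 ⊔ Ideal.span {x} ⊔ Ideal.span (s.erase y : Set R)).colon I ≤ q := by
  obtain ⟨σ, hσ, hσq⟩ := SetLike.not_le_iff_exists.mp hsq
  obtain ⟨α, hα, β, hβ, hαβ⟩ := Submodule.mem_sup.mp (Submodule.mem_colon.mp hσ x hx)
  obtain ⟨g, -, hg⟩ := Submodule.mem_span_finset.mp hβ
  obtain ⟨y, hys, hy⟩ : ∃ y ∈ s, g y ∉ q := by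
    by_contra! hcon
    refine hxq ((mem_saturationAt hq).mpr ⟨σ, hσq, ?_⟩)
    rw [show σ * x = α + β from hαβ.symm, ← hg]
    exact Submodule.add_mem_sup hα (Ideal.sum_mem _ fun z hz =>
      Ideal.mul_mem_mul (hcon z hz) (hs hz))
  set L := 𝔞 ⊔ Ideal.span {x} ⊔ Ideal.span (s.erase y : Set R)
  have hmem : ∀ z ∈ s.erase y, z ∈ L := fun z hz => Ideal.mem_sup_right (Ideal.subset_span hz)
  have hyL : g y * y ∈ L := by
    have hsum : ∑ z ∈ s.erase y, g z * z ∈ L :=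
      Ideal.sum_mem _ fun z hz => Ideal.mul_mem_left _ _ (hmem z hz)
    have hxL : σ * x ∈ L := Ideal.mul_mem_left _ _
      (Ideal.mem_sup_left (Ideal.mem_sup_right (Ideal.mem_span_singleton_self x)))
    have hαL : α ∈ L := Ideal.mem_sup_left (Ideal.mem_sup_left hα)
    convert sub_mem (sub_mem hxL hαL) hsum using 1
    rw [← smul_eq_mul (a := σ), ← hαβ, ← hg, ← Finset.add_sum_erase s _ hys]
    simp only [smul_eq_mul]
    ring
  have hspan : ∀ w ∈ 𝔞 ⊔ Ideal.span (s : Set R), g y * w ∈ L := by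
    suffices 𝔞 ⊔ Ideal.span (s : Set R) ≤ L.colon {g y} from fun w hw => by
      simpa only [smul_eq_mul, mul_comm] using Submodule.mem_colon_singleton.mp (this hw)
    refine sup_le ?_ (Ideal.span_le.mpr fun z hz => ?_)
    · exact (le_sup_left.trans le_sup_left).trans Ideal.le_colon
    · rw [SetLike.mem_coe, Submodule.mem_colon_singleton, smul_eq_mul, mul_comm]
      by_cases hzy : z = y
      · exact hzy ▸ hyL
      · exact Ideal.mul_mem_left _ _ (hmem z (Finset.mem_erase.mpr ⟨hzy, hz⟩))
  refine ⟨y, hys, fun hle => ?_⟩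
  refine (hq.mem_or_mem (hle (Submodule.mem_colon.mpr fun w hw => ?_))).elim hy hσq
  rw [smul_eq_mul, mul_assoc]
  exact hspan _ (Submodule.mem_colon.mp hσ w hw)

lemma IsGeneric.exists_finite_isGeneric_sup_span_singleton [IsNoetherianRing R]
    (h : IsGeneric I l 𝔞 i) (hi : i < l) :
    ∃ 𝒩 : Set (Ideal R), 𝒩.Finite ∧ (∀ N ∈ 𝒩, ¬ I ≤ N) ∧
      ∀ x ∈ I, (∀ N ∈ 𝒩, x ∉ N) → IsGeneric I l (𝔞 ⊔ Ideal.span {x}) (i + 1) := by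
  classical
  set 𝒩 : Set (Ideal R) := (𝔞.colon I).minimalPrimes ∪ ⋃ n ∈ Set.Iio l,
    (fun q => saturationAt q (𝔞 ⊔ q * I)) '' (I ⊔ iSupColon 𝔞 I n).minimalPrimes
  refine ⟨{N ∈ 𝒩 | ¬ I ≤ N}, Set.Finite.sep ?_ _, fun N hN => hN.2, fun x hx hN => ?_⟩
  · exact (Ideal.finite_minimalPrimes_of_isNoetherianRing R _).union <|
      (Set.finite_Iio l).biUnion fun n _ =>
        (Ideal.finite_minimalPrimes_of_isNoetherianRing R _).image _
  refine ⟨sup_le h.le ((Ideal.span_singleton_le_iff_mem _).mpr hx), ?_, ?_⟩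
  · exact h.le_height_colon_sup_span_singleton hi fun q hq hIq => hN q ⟨Or.inl hq, hIq⟩
  intro n hn q hq hIq hqh hle
  have hle' : iSupColon 𝔞 I n ≤ q := iSupColon_le_iff.mpr fun s hs hsI =>
    (Submodule.colon_mono (sup_le_sup_right le_sup_left _) subset_rfl).trans
      (iSupColon_le_iff.mp hle s hs hsI)
  have hxq : x ∉ saturationAt q (𝔞 ⊔ q * I) := by
    refine hN _ ⟨Or.inr (Set.mem_biUnion (show n < l by lia) ⟨q, ?_, rfl⟩), fun hIle => ?_⟩
    · exact h.mem_minimalPrimes_sup_iSupColon hn hq hIq hqh hle'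
    · exact not_colon_le_of_le_saturationAt hq hIle ((colon_le_iSupColon 𝔞 I n).trans hle')
  obtain ⟨s, hs, hsI, hsq⟩ : ∃ s : Finset R, s.card ≤ n + 1 ∧ (s : Set R) ⊆ I ∧
      ¬ (𝔞 ⊔ Ideal.span (s : Set R)).colon I ≤ q := by
    have := h.not_iSupColon_le (n + 1) (by lia) q hq hIq (by rwa [add_right_comm] at hqh)
    rw [iSupColon_le_iff] at this
    push Not at this
    exact this
  obtain ⟨y, hys, hy⟩ := exists_not_colon_sup_span_erase_le hq hx hxq hsI hsq
  refine hy (iSupColon_le_iff.mp hle _ ?_ fun z hz => hsI (Finset.mem_of_mem_erase hz))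
  rw [Finset.card_erase_of_mem hys]
  lia

lemma exists_finset_span_eq_of_muE_le {M : Type v} [AddCommGroup M] [Module R M]
    {N : Submodule R M} (hN : N.FG) {n : ℕ} (h : muE N ≤ n) :
    ∃ s : Finset M, s.card ≤ n ∧ Submodule.span R (s : Set M) = N := by
  obtain ⟨s₀, hs₀⟩ := hN
  obtain ⟨s, hs, hspan⟩ := csInf_mem (s := {n : ℕ∞ | ∃ s : Finset M, (s.card : ℕ∞) = n ∧
    Submodule.span R (s : Set M) = N}) ⟨_, s₀, rfl, hs₀⟩
  exact ⟨s, by exact_mod_cast hs.le.trans h, hspan⟩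

lemma exists_finset_not_colon_span_le [IsNoetherianRing R] [hq : q.IsPrime]
    (s : Finset (Localization.AtPrime q)) (hs : Ideal.span (s : Set (Localization.AtPrime q)) =
      I.map (algebraMap R (Localization.AtPrime q))) :
    ∃ b : Finset R, b.card ≤ s.card ∧ (b : Set R) ⊆ I ∧ ¬ (Ideal.span (b : Set R)).colon I ≤ q := by
  classical
  have hlift : ∀ z : s, ∃ b ∈ I, ∃ σ ∉ q, algebraMap R (Localization.AtPrime q) σ * z =
      algebraMap R (Localization.AtPrime q) b := by
    intro z
    obtain ⟨⟨b, σ⟩, hb⟩ := (IsLocalization.mem_map_algebraMap_iff q.primeCompl _).mp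
      (hs ▸ Ideal.subset_span z.2)
    exact ⟨b, b.2, σ, σ.2, by rw [mul_comm]; exact hb⟩
  choose b hbI σ hσ hb using hlift
  set L := Ideal.span (Finset.univ.image b : Set R)
  have hle : I.map (algebraMap R (Localization.AtPrime q)) ≤
      L.map (algebraMap R (Localization.AtPrime q)) := by
    rw [← hs, Ideal.span_le]
    intro z hz
    have hunit : IsUnit (algebraMap R (Localization.AtPrime q) (σ ⟨z, hz⟩)) :=
      IsLocalization.map_units (M := q.primeCompl) _ ⟨_, hσ _⟩
    refine (Ideal.unit_mul_mem_iff_mem _ hunit).mp ?_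
    rw [hb ⟨z, hz⟩]
    exact Ideal.mem_map_of_mem _ (Ideal.subset_span (by simp))
  obtain ⟨τ, hτ, hτL⟩ := exists_notMem_forall_mul_mem (I := I) (L := L) hq fun x hx => by
    have hxL := hle (Ideal.mem_map_of_mem _ hx)
    rwa [IsLocalization.algebraMap_mem_map_algebraMap_iff q.primeCompl] at hxL
  refine ⟨Finset.univ.image b, ?_, by simpa [Set.range_subset_iff] using hbI,
    fun h => hτ (h (Submodule.mem_colon.mpr hτL))⟩
  exact Finset.card_image_le.trans_eq (by simp)

lemma Gcond.isGeneric_bot [IsNoetherianRing R] (hG : Gcond I l) : IsGeneric I l ⊥ 0 := by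
  refine ⟨bot_le, by simp, fun n hn q hq hIq hqh hle => ?_⟩
  rw [zero_add] at hn hqh
  have hdim : rDim (Localization.AtPrime q) = (q.height : WithBot ℕ∞) :=
    IsLocalization.AtPrime.ringKrullDim_eq_height q _
  have hql : q.height < (l : ℕ∞) := hqh.trans_lt (by exact_mod_cast hn)
  have hmu := (hG ⟨q, hq⟩ hIq (by rw [hdim]; exact_mod_cast hql)).trans_eq hdim
  obtain ⟨s, hsn, hs⟩ := exists_finset_span_eq_of_muE_le (IsNoetherian.noetherian _)
    ((WithBot.coe_le_coe.mp hmu).trans hqh)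
  obtain ⟨b, hbs, hbI, hb⟩ := exists_finset_not_colon_span_le s hs
  exact hb (by simpa using iSupColon_le_iff.mp hle b (hbs.trans hsn) hbI)

end Generic

section Avoid

variable {R : Type u} [CommRing R] [IsLocalRing R]

lemma exists_finite_residues_add_mul_notMem {𝒩 : Set (Ideal R)} (hf : 𝒩.Finite) {c y : R}
    (hy : ∀ N ∈ 𝒩, y ∉ N) : ∃ F : Set (ResidueField R), F.Finite ∧
      ∀ t : R, residue R t ∉ F → ∀ N ∈ 𝒩, c + t * y ∉ N := by
  refine ⟨⋃ N ∈ 𝒩, residue R '' {t | c + t * y ∈ N}, hf.biUnion fun N hN => ?_,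
    fun t ht N hN hmem => ht (Set.mem_biUnion hN ⟨t, hmem, rfl⟩)⟩
  refine Set.Subsingleton.finite ?_
  rintro _ ⟨t, ht, rfl⟩ _ ⟨t', ht', rfl⟩
  by_contra hne
  have hunit : IsUnit (t - t') := by
    rwa [← residue_ne_zero_iff_isUnit, map_sub, sub_ne_zero]
  have hmem : (t - t') * y ∈ N := by
    convert Ideal.sub_mem _ ht ht' using 1
    ring
  exact hy N hN ((Ideal.unit_mul_mem_iff_mem _ hunit).mp hmem)

lemma exists_residue_notMem [Infinite (ResidueField R)] {F : Set (ResidueField R)}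
    (hF : F.Finite) : ∃ t : R, residue R t ∉ F := by
  obtain ⟨x, hx⟩ := hF.exists_notMem
  obtain ⟨t, rfl⟩ := residue_surjective x
  exact ⟨t, hx⟩

lemma exists_mem_forall_notMem [Infinite (ResidueField R)] {𝒩 : Set (Ideal R)} (hf : 𝒩.Finite)
    {I : Ideal R} (h : ∀ N ∈ 𝒩, ¬ I ≤ N) : ∃ y ∈ I, ∀ N ∈ 𝒩, y ∉ N := by
  induction 𝒩, hf using Set.Finite.induction_on with
  | empty => exact ⟨0, Ideal.zero_mem _, by simp⟩
  | @insert N 𝒩 hN hf ih =>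
    obtain ⟨y, hyI, hy⟩ := ih fun N' hN' => h N' (Or.inr hN')
    by_cases hyN : y ∈ N
    · obtain ⟨z, hzI, hz⟩ := SetLike.not_le_iff_exists.mp (h N (Or.inl rfl))
      obtain ⟨F, hF, htF⟩ := exists_finite_residues_add_mul_notMem hf (c := z) hy
      obtain ⟨t, ht⟩ := exists_residue_notMem hF
      refine ⟨z + t * y, Ideal.add_mem _ hzI (Ideal.mul_mem_left _ _ hyI), ?_⟩
      rintro N' (rfl | hN')
      · exact fun hmem => hz ((Ideal.add_mem_iff_left _ (Ideal.mul_mem_left _ _ hyN)).mp hmem)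
      · exact htF t ht N' hN'
    · exact ⟨y, hyI, by rintro N' (rfl | hN'); exacts [hyN, hy N' hN']⟩

end Avoid

section GenericSequence

lemma image_update_of_notMem {α : Type*} (a : ℕ → α) (x : α) {t : ℕ} {S : Set ℕ} (ht : t ∉ S) :
    Function.update a t x '' S = a '' S :=
  Set.image_congr fun _ hk => Function.update_of_ne (ne_of_mem_of_not_mem hk ht) ..

variable {R : Type u} [CommRing R]

lemma span_image_update_of_mem (a : ℕ → R) (x : R) {t : ℕ} {S : Set ℕ} (ht : t ∈ S) :
    Ideal.span (Function.update a t x '' S) = Ideal.span (a '' (S \ {t})) ⊔ Ideal.span {x} := by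
  have himage : Function.update a t x '' (S \ {t}) = a '' (S \ {t}) :=
    image_update_of_notMem a x (by simp)
  have hsingle : Function.update a t x '' {t} = {x} := by
    rw [Set.image_singleton, Function.update_self]
  rw [← himage, ← hsingle, ← Ideal.span_union, ← Set.image_union,
    Set.sdiff_union_of_subset (Set.singleton_subset_iff.mpr ht)]

variable [IsLocalRing R] [IsNoetherianRing R] [IsDomain R] [Infinite (ResidueField R)]
  {I : Ideal R} {l : ℕ}

lemma exists_isGeneric_update {a : ℕ → R} (hI : I ≠ ⊥) (ha : ∀ k, a k ∈ I)
    (hred : IsReduction (Ideal.span (a '' Set.Iio l)) I) {t : ℕ} (ht : t < l)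
    (hgen : ∀ S ⊆ Finset.range t, IsGeneric I l (Ideal.span (a '' S)) S.card) :
    ∃ x ∈ I, IsReduction (Ideal.span (Function.update a t x '' Set.Iio l)) I ∧
      ∀ S ⊆ Finset.range t, IsGeneric I l (Ideal.span (a '' S) ⊔ Ideal.span {x}) (S.card + 1) := by
  have hext : ∀ S : (Finset.range t).powerset, ∃ 𝒩 : Set (Ideal R), 𝒩.Finite ∧
      (∀ N ∈ 𝒩, ¬ I ≤ N) ∧ ∀ x ∈ I, (∀ N ∈ 𝒩, x ∉ N) →
        IsGeneric I l (Ideal.span (a '' S.1) ⊔ Ideal.span {x}) (S.1.card + 1) := by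
    intro S
    have hS := Finset.mem_powerset.mp S.2
    have hcard := Finset.card_le_card hS
    rw [Finset.card_range] at hcard
    exact (hgen _ hS).exists_finite_isGeneric_sup_span_singleton (by lia)
  choose 𝒩 hfin hnot hx using hext
  have hfin' : (⋃ S, 𝒩 S).Finite := Set.finite_iUnion hfin
  obtain ⟨y, hyI, hy⟩ := exists_mem_forall_notMem hfin' (I := I) fun N hN =>
    (Set.mem_iUnion.mp hN).elim (hnot · N)
  obtain ⟨F, hF, hFavoid⟩ := exists_finite_residues_add_mul_notMem hfin' (c := a t) hy
  have hred' : IsReduction (Ideal.span (a '' (Set.Iio l \ {t})) ⊔ Ideal.span {a t}) I := by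
    rwa [← span_image_update_of_mem a _ (Set.mem_Iio.mpr ht), Function.update_eq_self]
  obtain ⟨F', hF', hFred⟩ := hred'.exists_finite_residues_sup_span_add_mul hI hyI
  obtain ⟨c, hc⟩ := exists_residue_notMem (hF.union hF')
  have hxI : a t + c * y ∈ I := Ideal.add_mem _ (ha t) (Ideal.mul_mem_left _ _ hyI)
  refine ⟨a t + c * y, hxI, ?_, fun S hS => ?_⟩
  · rw [span_image_update_of_mem a _ (Set.mem_Iio.mpr ht)]
    exact hFred c fun h => hc (Or.inr h)
  · exact hx ⟨S, Finset.mem_powerset.mpr hS⟩ _ hxI fun N hN =>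
      hFavoid c (fun h => hc (Or.inl h)) N (Set.mem_iUnion.mpr ⟨_, hN⟩)

lemma exists_isReduction_isGeneric (hG : Gcond I l) (hI : I ≠ ⊥) {a₀ : ℕ → R}
    (ha₀ : ∀ k, a₀ k ∈ I) (hred₀ : IsReduction (Ideal.span (a₀ '' Set.Iio l)) I) (t : ℕ)
    (ht : t ≤ l) : ∃ a : ℕ → R, (∀ k, a k ∈ I) ∧ IsReduction (Ideal.span (a '' Set.Iio l)) I ∧
      ∀ S ⊆ Finset.range t, IsGeneric I l (Ideal.span (a '' S)) S.card := by
  induction t with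
  | zero =>
    refine ⟨a₀, ha₀, hred₀, fun S hS => ?_⟩
    rw [Finset.range_zero, Finset.subset_empty] at hS
    simpa [hS] using hG.isGeneric_bot
  | succ t ih =>
    obtain ⟨a, ha, hred, hgen⟩ := ih (by lia)
    obtain ⟨x, hxI, hxred, hxgen⟩ := exists_isGeneric_update hI ha hred ht hgen
    refine ⟨Function.update a t x, fun k => ?_, hxred, fun S hS => ?_⟩
    · rcases eq_or_ne k t with rfl | hk
      · rwa [Function.update_self]
      · rw [Function.update_of_ne hk]
        exact ha k
    rw [Finset.range_add_one] at hS
    by_cases htS : t ∈ S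
    · rw [span_image_update_of_mem a x htS, ← Finset.coe_singleton, ← Finset.coe_sdiff,
        Finset.sdiff_singleton_eq_erase, ← Finset.card_erase_add_one htS]
      exact hxgen _ (Finset.subset_insert_iff.mp hS)
    · rw [image_update_of_notMem a x (by simpa using htS)]
      exact hgen S ((Finset.subset_insert_iff_of_notMem htS).mp hS)

end GenericSequence

section InitialIdeals

variable {R : Type u} [CommRing R]

/-- The ideal generated by the first `i` terms of the sequence `b`. -/
def initialIdeal (b : ℕ → R) (i : ℕ) : Ideal R := Ideal.span (b '' Set.Iio i)

/-- The colon ideal `(b 0, …, b (i - 1)) : I`, an `i`-residual intersection of `I` for the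
sequences considered below. -/
def initialColon (I : Ideal R) (b : ℕ → R) (i : ℕ) : Ideal R := (initialIdeal b i).colon I

variable {I q : Ideal R} {b : ℕ → R} {i j : ℕ} {x s : R}

lemma initialIdeal_zero (b : ℕ → R) : initialIdeal b 0 = ⊥ := by
  simp [initialIdeal]

lemma initialIdeal_succ (b : ℕ → R) (i : ℕ) :
    initialIdeal b (i + 1) = initialIdeal b i ⊔ Ideal.span {b i} := by
  rw [initialIdeal, initialIdeal, ← Ideal.span_union, ← Set.image_singleton, ← Set.image_union,
    Set.union_singleton, ← Order.succ_eq_add_one, Order.Iio_succ_eq_insert]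

lemma initialIdeal_mono (b : ℕ → R) (h : i ≤ j) : initialIdeal b i ≤ initialIdeal b j :=
  Ideal.span_mono (Set.image_mono (Set.Iio_subset_Iio h))

lemma mem_initialIdeal (b : ℕ → R) (h : i < j) : b i ∈ initialIdeal b j :=
  Ideal.subset_span ⟨i, h, rfl⟩

lemma initialIdeal_le (hb : ∀ k, b k ∈ I) (i : ℕ) : initialIdeal b i ≤ I :=
  Ideal.span_le.mpr (Set.image_subset_iff.mpr fun k _ => hb k)

lemma exists_add_mul_of_mem_initialIdeal_succ_mul {T : Ideal R}
    (h : x ∈ initialIdeal b (i + 1) * T) :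
    ∃ y ∈ initialIdeal b i * T, ∃ z ∈ T, x = y + b i * z := by
  rw [initialIdeal_succ, Ideal.sup_mul] at h
  obtain ⟨y, hy, w, hw, rfl⟩ := Submodule.mem_sup.mp h
  obtain ⟨z, hz, rfl⟩ := Ideal.mem_span_singleton_mul.mp hw
  exact ⟨y, hy, z, hz, rfl⟩

lemma initialColon_mono (I : Ideal R) (b : ℕ → R) (h : i ≤ j) :
    initialColon I b i ≤ initialColon I b j :=
  Submodule.colon_mono (initialIdeal_mono b h) subset_rfl

lemma initialIdeal_le_initialColon (I : Ideal R) (b : ℕ → R) (i : ℕ) :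
    initialIdeal b i ≤ initialColon I b i :=
  Ideal.le_colon

lemma mem_initialColon (I : Ideal R) (b : ℕ → R) (h : i < j) : b i ∈ initialColon I b j :=
  initialIdeal_le_initialColon I b j (mem_initialIdeal b h)

lemma mul_mem_initialIdeal (hx : x ∈ initialColon I b i) (hs : s ∈ I) : x * s ∈ initialIdeal b i :=
  Submodule.mem_colon.mp hx s hs

lemma initialColon_mul_le (I : Ideal R) (b : ℕ → R) (i : ℕ) :
    initialColon I b i * I ≤ initialIdeal b i :=
  Ideal.mul_le.mpr fun _ hr _ hs => mul_mem_initialIdeal hr hs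

lemma initialColon_le_of_not_le (hq : q.IsPrime) (hle : initialIdeal b i ≤ q) (hIq : ¬ I ≤ q) :
    initialColon I b i ≤ q := by
  obtain ⟨s, hs, hsq⟩ := SetLike.not_le_iff_exists.mp hIq
  exact fun x hx => (hq.mem_or_mem (hle (mul_mem_initialIdeal hx hs))).resolve_right hsq

lemma initialIdeal_succ_le_sup (I : Ideal R) (b : ℕ → R) (i : ℕ) :
    initialIdeal b (i + 1) ≤ initialColon I b i ⊔ Ideal.span {b i} := by
  rw [initialIdeal_succ]
  exact sup_le_sup_right (initialIdeal_le_initialColon I b i) _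

lemma sup_le_initialColon_succ (I : Ideal R) (b : ℕ → R) (i : ℕ) :
    initialColon I b i ⊔ Ideal.span {b i} ≤ initialColon I b (i + 1) :=
  sup_le (initialColon_mono I b i.le_succ)
    ((Ideal.span_singleton_le_iff_mem _).mpr (mem_initialColon I b i.lt_succ_self))

lemma exists_notMem_mul_mem (h : x ∈ initialColon I b (i + 1)) (hIq : ¬ I ≤ q) :
    ∃ s ∉ q, s * x ∈ initialColon I b i ⊔ Ideal.span {b i} := by
  obtain ⟨s, hs, hsq⟩ := SetLike.not_le_iff_exists.mp hIq
  exact ⟨s, hsq, initialIdeal_succ_le_sup I b i (mul_comm x s ▸ mul_mem_initialIdeal h hs)⟩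

lemma sup_inf_le_initialIdeal_succ (hb : b i ∈ I)
    (h : initialColon I b i ⊓ I ≤ initialIdeal b i) :
    (initialColon I b i ⊔ Ideal.span {b i}) ⊓ I ≤ initialIdeal b (i + 1) := by
  have hspan : Ideal.span {b i} ≤ I := (Ideal.span_singleton_le_iff_mem _).mpr hb
  rw [initialIdeal_succ, sup_comm, sup_inf_assoc_of_le _ hspan, sup_comm]
  exact sup_le_sup_right h _

lemma sup_pow_le_sup_pow (K L : Ideal R) (j : ℕ) : (K ⊔ L) ^ j ≤ K ⊔ L ^ j := by
  induction j with
  | zero => simp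
  | succ j ih =>
    calc (K ⊔ L) ^ (j + 1) ≤ (K ⊔ L ^ j) * (K ⊔ L) := pow_succ (K ⊔ L) j ▸ Ideal.mul_mono_left ih
      _ = K * (K ⊔ L) ⊔ (L ^ j * K ⊔ L ^ (j + 1)) := by
        rw [Ideal.sup_mul, Ideal.mul_sup (L ^ j), ← pow_succ]
      _ ≤ K ⊔ L ^ (j + 1) :=
        sup_le (Ideal.mul_le_left.trans le_sup_left) (sup_le_sup_right Ideal.mul_le_right _)

lemma initialColon_sup_pow_le {l : ℕ} (hi : i + 1 = l) (j : ℕ) :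
    initialColon I b i ⊔ initialIdeal b l ^ j ≤ initialColon I b i ⊔ Ideal.span {b i ^ j} := by
  have hle : initialIdeal b l ^ j ≤ (initialColon I b i ⊔ Ideal.span {b i}) ^ j :=
    Ideal.pow_right_mono (hi ▸ initialIdeal_succ_le_sup I b i) j
  refine sup_le le_sup_left (hle.trans ?_)
  rw [← Ideal.span_singleton_pow]
  exact sup_pow_le_sup_pow _ _ j

end InitialIdeals

section Height

variable {R : Type u} [CommRing R]

lemma rDim_localizationAtPrime (p : PrimeSpectrum R) :
    rDim (Localization.AtPrime p.asIdeal) = (p.asIdeal.height : WithBot ℕ∞) :=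
  IsLocalization.AtPrime.ringKrullDim_eq_height p.asIdeal _

lemma le_ht {K : Ideal R} {n : ℕ}
    (h : ∀ q : Ideal R, q.IsPrime → K ≤ q → (n : ℕ∞) ≤ q.height) : (n : WithBot ℕ∞) ≤ ht K := by
  refine le_iInf₂ fun p hp => ?_
  rw [rDim_localizationAtPrime]
  exact_mod_cast h p.asIdeal p.2 hp

lemma ht_le {K q : Ideal R} (hq : q.IsPrime) (hK : K ≤ q) : ht K ≤ (q.height : WithBot ℕ∞) :=
  (iInf₂_le (⟨q, hq⟩ : PrimeSpectrum R) hK).trans_eq (rDim_localizationAtPrime _)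

lemma height_le_of_ringKrullDim_eq {d : ℕ} (hd : ringKrullDim R = d) {q : Ideal R}
    (hq : q.IsPrime) : q.height ≤ d := by
  have h := Ideal.height_le_ringKrullDim_of_isPrime (I := q)
  rw [hd] at h
  exact_mod_cast h

lemma DepthGE.height_le [IsLocalRing R] [IsNoetherianRing R] {L q : Ideal R} {d i : ℕ}
    (hd : ringKrullDim R = d) (h : DepthGE L (d - i)) (hi : i ≤ d) (hq : L.IsAssociatedPrime q) :
    q.height ≤ i := by
  have hle := h.height_add_le hd hq
  have hdi : ((d : ℕ) : ℕ∞) = (i : ℕ∞) + ((d - i : ℕ) : ℕ∞) := by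
    rw [← Nat.cast_add, Nat.add_sub_of_le hi]
  exact (ENat.add_le_add_iff_right (ENat.natCast_ne_top _)).mp (hle.trans_eq hdi)

end Height

section ResidualSequence

variable {R : Type u} [CommRing R] [IsLocalRing R]

/-- A sequence `b` in an ideal `I` of a Cohen–Macaulay local ring of dimension `d` whose initial
segments of length at most `l` are in general position, so that the ideals
`(b 0, …, b (i - 1)) : I` are geometric residual intersections of `I` for `i < l`. -/
structure IsResidualSequence (I : Ideal R) (l d : ℕ) (b : ℕ → R) : Prop where
  le_maximalIdeal : I ≤ maximalIdeal R
  bot_colon : (⊥ : Ideal R).colon (I : Set R) = ⊥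
  ringKrullDim_eq : ringKrullDim R = d
  depthGE_bot : DepthGE (⊥ : Ideal R) d
  mem : ∀ k, b k ∈ I
  isGeneric : ∀ i ≤ l, IsGeneric I l (initialIdeal b i) i
  anMinus : ANminus I (l - 1)
  initialColon_ne_top : ∀ i < l, initialColon I b i ≠ ⊤

namespace IsResidualSequence

variable {I q : Ideal R} {l d i j n : ℕ} {b : ℕ → R} {x w : R}

lemma initialColon_zero (h : IsResidualSequence I l d b) : initialColon I b 0 = ⊥ := by
  rw [initialColon, initialIdeal_zero, h.bot_colon]

lemma initialIdeal_le (h : IsResidualSequence I l d b) (i : ℕ) : initialIdeal b i ≤ I :=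
  CPU.initialIdeal_le h.mem i

lemma le_height (h : IsResidualSequence I l d b) (hi : i ≤ l)
    (hle : initialColon I b i ≤ q) : (i : ℕ∞) ≤ q.height :=
  (h.isGeneric i hi).le_height.trans (Ideal.height_mono hle)

lemma le_dim (h : IsResidualSequence I l d b) (hi : i < l) : i ≤ d := by
  obtain ⟨q, hq, hle⟩ := Ideal.exists_le_maximal _ (h.initialColon_ne_top i hi)
  exact_mod_cast (h.le_height hi.le hle).trans
    (height_le_of_ringKrullDim_eq h.ringKrullDim_eq hq.isPrime)

lemma not_initialColon_le (h : IsResidualSequence I l d b) (hi : i < l) (hq : q.IsPrime)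
    (hIq : I ≤ q) (hqi : q.height ≤ i) : ¬ initialColon I b i ≤ q := fun hle =>
  (h.isGeneric i hi.le).not_le_of_colon_le hi hq hle hqi hIq

lemma isGeometricRI_initialColon (h : IsResidualSequence I l d b) (hi : i < l) (hq : q.IsPrime)
    (hIq : I ≤ q) (hqi : q.height ≤ i) : IsGeometricRI I (initialColon I b i) i := by
  classical
  refine ⟨⟨h.initialColon_ne_top i hi, (ht_le hq hIq).trans (by exact_mod_cast hqi),
    le_ht fun _ _ => h.le_height hi.le, initialIdeal b i, h.initialIdeal_le i,
    ⟨(Finset.range i).image b, Finset.card_image_le.trans_eq (Finset.card_range i), ?_⟩, rfl⟩, ?_⟩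
  · simp only [initialIdeal, Finset.coe_image, Finset.coe_range]
  · rw [← Nat.cast_succ]
    refine le_ht fun p hp hle => ?_
    by_contra hlt
    refine h.not_initialColon_le hi hp (le_sup_left.trans hle) ?_ (le_sup_right.trans hle)
    exact Order.le_of_lt_add_one (by exact_mod_cast not_le.mp hlt)

variable [IsNoetherianRing R]

lemma isSMulRegular_of_depthGE (h : IsResidualSequence I l d b) (hi : i < l)
    (hD : DepthGE (initialColon I b i) (d - i)) :
    IsSMulRegular (R ⧸ initialColon I b i) (b i) := by
  refine isSMulRegular_quotient_of_forall_notMem fun q hq hbq => ?_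
  have hKq := le_of_isAssociatedPrime hq
  have hqi : q.height ≤ i := hD.height_le h.ringKrullDim_eq (h.le_dim hi) hq
  by_cases hIq : I ≤ q
  · exact h.not_initialColon_le hi hq.toIsPrime hIq hqi hKq
  · have hle : initialIdeal b (i + 1) ≤ q := (initialIdeal_succ_le_sup I b i).trans
      (sup_le hKq ((Ideal.span_singleton_le_iff_mem _).mpr hbq))
    have hlt : i + 1 ≤ i := by
      exact_mod_cast (h.le_height (i := i + 1) hi
        (initialColon_le_of_not_le hq.toIsPrime hle hIq)).trans hqi
    lia

lemma depthGE_sup_span_singleton (h : IsResidualSequence I l d b) (hi : i < l) (hid : i + 1 ≤ d)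
    (hD : DepthGE (initialColon I b i) (d - i)) :
    DepthGE (initialColon I b i ⊔ Ideal.span {b i}) (d - (i + 1)) := by
  have hreg := h.isSMulRegular_of_depthGE hi hD
  rw [show d - i = d - (i + 1) + 1 by lia] at hD
  exact hD.sup_span_singleton (h.le_maximalIdeal (h.mem i)) hreg

lemma height_le_of_depthGE (h : IsResidualSequence I l d b) (hi : i < l)
    (hD : DepthGE (initialColon I b i) (d - i))
    (hq : (initialColon I b i ⊔ Ideal.span {b i}).IsAssociatedPrime q) :
    q.height ≤ (i + 1 : ℕ) := by
  obtain hlt | rfl := (h.le_dim hi).lt_or_eq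
  · exact (h.depthGE_sup_span_singleton hi hlt hD).height_le h.ringKrullDim_eq hlt hq
  · exact (height_le_of_ringKrullDim_eq h.ringKrullDim_eq hq.toIsPrime).trans
      (by exact_mod_cast i.le_succ)

lemma initialColon_succ_inf_le (h : IsResidualSequence I l d b) (hi : i + 1 < l)
    (hD : DepthGE (initialColon I b i) (d - i))
    (hinf : initialColon I b i ⊓ I ≤ initialIdeal b i) :
    initialColon I b (i + 1) ⊓ I ≤ initialIdeal b (i + 1) := by
  rintro x ⟨hxK, hxI⟩
  refine sup_inf_le_initialIdeal_succ (h.mem i) hinf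
    ⟨mem_of_forall_isAssociatedPrime fun q hq => ?_, hxI⟩
  by_cases hIq : I ≤ q
  · obtain ⟨s, hs, hsq⟩ := SetLike.not_le_iff_exists.mp
      (h.not_initialColon_le hi hq.toIsPrime hIq (h.height_le_of_depthGE (by lia) hD hq))
    exact ⟨s, hsq, initialIdeal_succ_le_sup I b i (mul_mem_initialIdeal hs hxI)⟩
  · exact exists_notMem_mul_mem hxK hIq

lemma initialColon_succ_eq (h : IsResidualSequence I l d b) (hi : i < l)
    (hD : DepthGE (initialColon I b i) (d - i))
    (hht : ∀ q : Ideal R, q.IsPrime → I ≤ q → ((i + 1 : ℕ) : ℕ∞) < q.height) :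
    initialColon I b (i + 1) = initialColon I b i ⊔ Ideal.span {b i} := by
  refine le_antisymm (fun x hx => mem_of_forall_isAssociatedPrime fun q hq =>
    exists_notMem_mul_mem hx fun hIq => ?_) (sup_le_initialColon_succ I b i)
  exact (h.height_le_of_depthGE hi hD hq).not_gt (hht q hq.toIsPrime hIq)

-- When some prime of height at most `i + 1` contains `I`, the colon ideal is a geometric residual
-- intersection, hence Cohen–Macaulay by `AN⁻`; otherwise it is `K_i + (b i)` with `K_i` the
-- previous colon ideal, and the depth drops by one.
lemma depthGE_initialColon_succ (h : IsResidualSequence I l d b) (hi : i + 1 < l)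
    (hD : DepthGE (initialColon I b i) (d - i))
    (hinf : initialColon I b i ⊓ I ≤ initialIdeal b i) :
    DepthGE (initialColon I b (i + 1)) (d - (i + 1)) := by
  have hDL := h.depthGE_sup_span_singleton (by lia) (h.le_dim hi) hD
  by_cases! hht : ∀ q : Ideal R, q.IsPrime → I ≤ q → ((i + 1 : ℕ) : ℕ∞) < q.height
  · rwa [h.initialColon_succ_eq (by lia) hD hht]
  obtain ⟨p, hp, hIp, hpi⟩ := hht
  have hK := h.initialColon_ne_top _ hi
  have hcm := h.anMinus (i + 1) (by lia) _ (h.isGeometricRI_initialColon hi hp hIp hpi)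
  have hIL : ¬ I ≤ initialColon I b i ⊔ Ideal.span {b i} := fun hle => hK <|
    (Submodule.colon_eq_top_iff_subset _).mpr fun x hx =>
      sup_inf_le_initialIdeal_succ (h.mem i) hinf ⟨hle hx, hx⟩
  obtain ⟨y, hy, hprime⟩ := exists_isPrime_colon_singleton hIL
  have hle : initialColon I b (i + 1) ≤ (initialColon I b i ⊔ Ideal.span {b i}).colon {y} :=
    fun x hx => Submodule.mem_colon_singleton.mpr
      (initialIdeal_succ_le_sup I b i (mul_mem_initialIdeal hx hy))
  refine DepthGE.of_le_qDepth hK (WithBot.coe_le_coe.mp ?_)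
  calc ((d - (i + 1) : ℕ) : WithBot ℕ∞) ≤ Order.coheight (⟨_, hprime⟩ : PrimeSpectrum R) :=
        WithBot.coe_le_coe.mpr (hDL.le_coheight _ (isAssociatedPrime_colon_singleton hprime))
    _ ≤ ringKrullDim (R ⧸ initialColon I b (i + 1)) := coheight_le_ringKrullDim_quotient _ hle
    _ = qDepth R (initialColon I b (i + 1)) := hcm

lemma depthGE_and_initialColon_inf_le (h : IsResidualSequence I l d b) (hi : i < l) :
    DepthGE (initialColon I b i) (d - i) ∧ initialColon I b i ⊓ I ≤ initialIdeal b i := by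
  induction i with
  | zero =>
    rw [h.initialColon_zero, bot_inf_eq]
    exact ⟨h.depthGE_bot, bot_le⟩
  | succ i ih =>
    obtain ⟨hD, hinf⟩ := ih (by lia)
    exact ⟨h.depthGE_initialColon_succ hi hD hinf, h.initialColon_succ_inf_le hi hD hinf⟩

lemma isSMulRegular (h : IsResidualSequence I l d b) (hi : i < l) :
    IsSMulRegular (R ⧸ initialColon I b i) (b i) :=
  h.isSMulRegular_of_depthGE hi (h.depthGE_and_initialColon_inf_le hi).1

lemma mem_of_mul_mem (h : IsResidualSequence I l d b) (hi : i < l)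
    (hx : b i * x ∈ initialColon I b i) : x ∈ initialColon I b i :=
  mem_of_isSMulRegular_quotient_of_smul_mem (h.isSMulRegular hi) hx

lemma height_le_of_isAssociatedPrime_sup_span (h : IsResidualSequence I l d b) (hi : i < l)
    (hq : (initialColon I b i ⊔ Ideal.span {b i}).IsAssociatedPrime q) :
    q.height ≤ (i + 1 : ℕ) :=
  h.height_le_of_depthGE hi (h.depthGE_and_initialColon_inf_le hi).1 hq

lemma mem_initialIdeal_of_mem (h : IsResidualSequence I l d b) (hi : i < l)
    (hx : x ∈ initialColon I b i) (hxI : x ∈ I) : x ∈ initialIdeal b i :=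
  (h.depthGE_and_initialColon_inf_le hi).2 ⟨hx, hxI⟩

end IsResidualSequence

end ResidualSequence

section Powers

namespace IsResidualSequence

variable {R : Type u} [CommRing R] [IsLocalRing R] [IsNoetherianRing R] {I q : Ideal R}
  {l d i j n : ℕ} {b : ℕ → R} {x w : R}

lemma mem_initialIdeal_mul_pow (h : IsResidualSequence I l d b) (hi : i ≤ l)
    (hx : i < l → x ∈ initialColon I b i) (hxJ : x ∈ initialIdeal b l ^ (j + 1)) :
    x ∈ initialIdeal b i * initialIdeal b l ^ j := by
  induction j generalizing i x with
  | zero =>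
    rw [zero_add, pow_one] at hxJ
    rw [pow_zero, mul_one]
    obtain hi | rfl := hi.lt_or_eq
    · exact h.mem_initialIdeal_of_mem hi (hx hi) (h.initialIdeal_le _ hxJ)
    · exact hxJ
  | succ j ihj =>
    obtain ⟨k, hk⟩ := Nat.exists_eq_add_of_le hi
    induction k generalizing i with
    | zero =>
      obtain rfl : l = i := hk
      rwa [← pow_succ']
    | succ k ihk =>
      have hi : i < l := by lia
      obtain ⟨y, hy, z, hz, rfl⟩ := exists_add_mul_of_mem_initialIdeal_succ_mul
        (ihk (i := i + 1) hi (fun _ => initialColon_mono I b i.le_succ (hx hi)) (by lia))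
      have hyK : y ∈ initialColon I b i := initialIdeal_le_initialColon I b i (Ideal.mul_le_left hy)
      have hzK : z ∈ initialColon I b i :=
        h.mem_of_mul_mem hi ((Ideal.add_mem_iff_right _ hyK).mp (hx hi))
      refine Ideal.add_mem _ hy ?_
      rw [pow_succ', mul_left_comm]
      exact Ideal.mul_mem_mul (mem_initialIdeal b hi) (ihj hi.le (fun _ => hzK) hz)

lemma exists_add_mul_of_mem_pow (h : IsResidualSequence I l d b) (hi : i < l)
    (hx : x ∈ initialColon I b (i + 1)) (hxJ : x ∈ initialIdeal b l ^ (j + 1)) :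
    ∃ y ∈ initialColon I b i, ∃ z ∈ initialIdeal b l ^ j, x = y + b i * z := by
  obtain ⟨y, hy, z, hz, rfl⟩ := exists_add_mul_of_mem_initialIdeal_succ_mul
    (h.mem_initialIdeal_mul_pow hi (fun _ => hx) hxJ)
  exact ⟨y, initialIdeal_le_initialColon I b i (Ideal.mul_le_left hy), z, hz, rfl⟩

lemma mem_sup_pow_of_mul_mem (h : IsResidualSequence I l d b) (hi : i < l)
    (hw : b i * w ∈ initialColon I b i ⊔ initialIdeal b l ^ (n + 1)) :
    w ∈ initialColon I b i ⊔ initialIdeal b l ^ n := by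
  obtain ⟨κ, hκ, y, hy, hκy⟩ := Submodule.mem_sup.mp hw
  have hyK : y ∈ initialColon I b (i + 1) :=
    (Ideal.add_mem_iff_right _ (initialColon_mono I b i.le_succ hκ)).mp
      (hκy ▸ Ideal.mul_mem_right _ _ (mem_initialColon I b i.lt_succ_self))
  obtain ⟨y', hy', z, hz, rfl⟩ := h.exists_add_mul_of_mem_pow hi hyK hy
  have hwz : w - z ∈ initialColon I b i := h.mem_of_mul_mem hi <| by
    convert Ideal.add_mem _ hκ hy' using 1
    linear_combination -hκy
  exact sub_add_cancel w z ▸ Submodule.add_mem_sup hwz hz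

lemma mul_mem_sup_pow_iff (h : IsResidualSequence I l d b) (hi : i < l) :
    b i * w ∈ initialColon I b i ⊔ initialIdeal b l ^ (n + 1) ↔
      w ∈ initialColon I b i ⊔ initialIdeal b l ^ n := by
  refine ⟨h.mem_sup_pow_of_mul_mem hi, fun hw => ?_⟩
  obtain ⟨κ, hκ, y, hy, rfl⟩ := Submodule.mem_sup.mp hw
  rw [mul_add, pow_succ']
  exact Submodule.add_mem_sup (Ideal.mul_mem_left _ _ hκ)
    (Ideal.mul_mem_mul (mem_initialIdeal b hi) hy)

lemma mem_sup_pow_of_pow_mul_mem (h : IsResidualSequence I l d b) (hi : i < l)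
    (hw : b i ^ j * w ∈ initialColon I b i ⊔ initialIdeal b l ^ (n + j)) :
    w ∈ initialColon I b i ⊔ initialIdeal b l ^ n := by
  induction j with
  | zero => simpa only [pow_zero, one_mul, add_zero] using hw
  | succ j ih =>
    refine ih (h.mem_sup_pow_of_mul_mem hi ?_)
    rwa [← mul_assoc, ← pow_succ']

lemma isAssociatedPrime_sup_pow_succ (h : IsResidualSequence I l d b) (hi : i < l)
    (hq : (initialColon I b i ⊔ initialIdeal b l ^ (n + 1)).IsAssociatedPrime q) :
    (initialColon I b i ⊔ initialIdeal b l ^ (n + 1) ⊔ Ideal.span {b i}).IsAssociatedPrime q ∨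
      (initialColon I b i ⊔ initialIdeal b l ^ n).IsAssociatedPrime q := by
  refine (isAssociatedPrime_or_exists_mem_eq_colon hq le_sup_left).imp_right ?_
  rintro ⟨z, hz, hzq⟩
  obtain ⟨y, hy, v, hv, rfl⟩ := Submodule.mem_sup.mp hz
  obtain ⟨w, rfl⟩ := Ideal.mem_span_singleton.mp hv
  refine Submodule.isAssociatedPrime_iff.mpr ⟨hq.toIsPrime, w, hzq.trans ?_⟩
  ext r
  rw [Submodule.mem_colon_singleton, Submodule.mem_colon_singleton, smul_eq_mul, smul_eq_mul,
    mul_add, Ideal.add_mem_iff_right _ (Ideal.mul_mem_left _ _ hy), mul_left_comm,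
    h.mul_mem_sup_pow_iff hi]

lemma sup_pow_sup_span_inf_le (h : IsResidualSequence I l d b) (hi : i < l) :
    (initialColon I b i ⊔ initialIdeal b l ^ (n + 1) ⊔ Ideal.span {b i}) ⊓
      initialColon I b (i + 1) ≤ initialColon I b i ⊔ Ideal.span {b i} := by
  rw [sup_right_comm, sup_inf_assoc_of_le _ (sup_le_initialColon_succ I b i)]
  refine sup_le le_rfl fun x hx => ?_
  obtain ⟨y, hy, z, -, rfl⟩ := h.exists_add_mul_of_mem_pow hi hx.2 hx.1
  exact Submodule.add_mem_sup hy (Ideal.mul_mem_right _ _ (Ideal.mem_span_singleton_self _))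

lemma isAssociatedPrime_sup_pow_sup_span (h : IsResidualSequence I l d b) (hi : i < l)
    (hq : (initialColon I b i ⊔ initialIdeal b l ^ (n + 1) ⊔
      Ideal.span {b i}).IsAssociatedPrime q) :
    (initialColon I b (i + 1) ⊔ initialIdeal b l ^ (n + 1)).IsAssociatedPrime q ∨
      (initialColon I b i ⊔ Ideal.span {b i}).IsAssociatedPrime q := by
  have hle : initialColon I b i ⊔ initialIdeal b l ^ (n + 1) ⊔ Ideal.span {b i} ≤
      initialColon I b (i + 1) ⊔ initialIdeal b l ^ (n + 1) := by
    rw [sup_right_comm]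
    exact sup_le_sup_right (sup_le_initialColon_succ I b i) _
  refine (isAssociatedPrime_or_exists_mem_eq_colon hq hle).imp_right ?_
  rintro ⟨z, hz, hzq⟩
  obtain ⟨κ, hκ, y, hy, rfl⟩ := Submodule.mem_sup.mp hz
  refine Submodule.isAssociatedPrime_iff.mpr ⟨hq.toIsPrime, κ, hzq.trans ?_⟩
  ext r
  rw [Submodule.mem_colon_singleton, Submodule.mem_colon_singleton, smul_eq_mul, smul_eq_mul,
    mul_add, Ideal.add_mem_iff_left _
      (Ideal.mul_mem_left _ _ (Ideal.mem_sup_left (Ideal.mem_sup_right hy)))]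
  exact ⟨fun hr => h.sup_pow_sup_span_inf_le hi ⟨hr, Ideal.mul_mem_left _ _ hκ⟩,
    fun hr => (sup_le_sup_right le_sup_left _ : _ ≤ _ ⊔ Ideal.span {b i}) hr⟩

lemma height_le_of_isAssociatedPrime_sup_pow (h : IsResidualSequence I l d b) (hi : i < l)
    (hq : (initialColon I b i ⊔ initialIdeal b l ^ n).IsAssociatedPrime q) : q.height ≤ l := by
  induction n generalizing i with
  | zero =>
    rw [pow_zero, Ideal.one_eq_top, sup_top_eq] at hq
    exact absurd (top_le_iff.mp (le_of_isAssociatedPrime hq)) hq.toIsPrime.ne_top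
  | succ n ihn =>
    obtain ⟨k, hk⟩ := Nat.exists_eq_add_of_lt hi
    induction k generalizing i with
    | zero =>
      obtain hq | hq := h.isAssociatedPrime_sup_pow_succ hi hq
      · have hJ : initialIdeal b l ^ (n + 1) ≤ initialColon I b i ⊔ Ideal.span {b i} :=
          (Ideal.pow_le_self n.succ_ne_zero).trans (hk ▸ initialIdeal_succ_le_sup I b i)
        rw [sup_right_comm, sup_eq_left.mpr hJ] at hq
        exact hk ▸ h.height_le_of_isAssociatedPrime_sup_span hi hq
      · exact ihn hi hq
    | succ k ihk =>
      obtain hq | hq := h.isAssociatedPrime_sup_pow_succ hi hq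
      · obtain hq | hq := h.isAssociatedPrime_sup_pow_sup_span hi hq
        · exact ihk (i := i + 1) (by lia) hq (by lia)
        · exact (h.height_le_of_isAssociatedPrime_sup_span hi hq).trans (by exact_mod_cast hi)
      · exact ihn hi hq

lemma height_le_of_isAssociatedPrime_pow (h : IsResidualSequence I l d b) (hl : 0 < l)
    (hq : (initialIdeal b l ^ n).IsAssociatedPrime q) : q.height ≤ l :=
  h.height_le_of_isAssociatedPrime_sup_pow hl (by rwa [h.initialColon_zero, bot_sup_eq])

lemma mem_initialColon_of_forall_mul_mem (h : IsResidualSequence I l d b) (hi : i < l)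
    (hx : ∀ c ∈ I, x * c ∈ initialColon I b i ⊔ initialIdeal b l) : x ∈ initialColon I b l := by
  refine Submodule.mem_colon.mpr fun c hc => ?_
  obtain ⟨κ, hκ, y, hy, hκy⟩ := Submodule.mem_sup.mp (hx c hc)
  have hκI : κ ∈ I := (Ideal.add_mem_iff_left _ (h.initialIdeal_le l hy)).mp
    (hκy ▸ Ideal.mul_mem_left _ _ hc)
  rw [smul_eq_mul, ← hκy]
  exact Ideal.add_mem _ (initialIdeal_mono b hi.le (h.mem_initialIdeal_of_mem hi hκ hκI)) hy

lemma mem_sup_mul_pow_last (h : IsResidualSequence I l d b) (hi : i + 1 = l)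
    (hx : x ∈ initialColon I b i ⊔ initialIdeal b l ^ j)
    (hxI : ∀ c ∈ I, x * c ∈ initialColon I b i ⊔ initialIdeal b l ^ (j + 1)) :
    x ∈ initialColon I b i ⊔ initialColon I b l * initialIdeal b l ^ j := by
  obtain ⟨κ, hκ, y, hy, rfl⟩ := Submodule.mem_sup.mp (initialColon_sup_pow_le hi j hx)
  obtain ⟨r, rfl⟩ := Ideal.mem_span_singleton'.mp hy
  have hr : r ∈ initialColon I b l :=
    h.mem_initialColon_of_forall_mul_mem (i := i) (by lia) fun c hc => by
      rw [← pow_one (initialIdeal b l)]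
      refine h.mem_sup_pow_of_pow_mul_mem (j := j) (by lia) ?_
      have hsum := hxI c hc
      rw [add_mul, Ideal.add_mem_iff_right _ (Ideal.mem_sup_left (Ideal.mul_mem_right _ _ hκ))]
        at hsum
      rwa [add_comm 1 j, ← mul_assoc, mul_comm (b i ^ j)]
  exact Submodule.add_mem_sup hκ
    (Ideal.mul_mem_mul hr (Ideal.pow_mem_pow (mem_initialIdeal b (by lia)) _))

-- Modulo `K_i + K J^{j+1}`, the element `x` is a multiple `b i * z`, and `z` satisfies the same
-- hypotheses as `x` with `j` in place of `j + 1`.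
lemma exists_sub_mul_mem (h : IsResidualSequence I l d b) (hi : i < l)
    (hx : x ∈ initialColon I b i ⊔ initialIdeal b l ^ (j + 1))
    (hxI : ∀ c ∈ I, x * c ∈ initialColon I b i ⊔ initialIdeal b l ^ (j + 2))
    (hx' : x ∈ initialColon I b (i + 1) ⊔ initialColon I b l * initialIdeal b l ^ (j + 1)) :
    ∃ z ∈ initialIdeal b l ^ j,
      (∀ c ∈ I, z * c ∈ initialColon I b i ⊔ initialIdeal b l ^ (j + 1)) ∧
      x - b i * z ∈ initialColon I b i ⊔ initialColon I b l * initialIdeal b l ^ (j + 1) := by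
  obtain ⟨κ, hκ, m, hm, rfl⟩ := Submodule.mem_sup.mp hx'
  obtain ⟨κ', hκ', y, hy, hκy⟩ := Submodule.mem_sup.mp
    ((Ideal.add_mem_iff_left _ (Ideal.mem_sup_right (Ideal.mul_le_right hm))).mp hx)
  have hyK : y ∈ initialColon I b (i + 1) :=
    (Ideal.add_mem_iff_right _ (initialColon_mono I b i.le_succ hκ')).mp (hκy ▸ hκ)
  obtain ⟨y', hy', z, hz, rfl⟩ := h.exists_add_mul_of_mem_pow hi hyK hy
  have hsub : κ + m - b i * z = (κ' + y') + m := by linear_combination -hκy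
  have hmI : ∀ c ∈ I, m * c ∈ initialIdeal b l ^ (j + 2) := fun c hc => by
    have hmc := Ideal.mul_mem_mul hm hc
    rw [mul_right_comm] at hmc
    exact pow_succ' (initialIdeal b l) (j + 1) ▸ Ideal.mul_mono_left (initialColon_mul_le I b l) hmc
  refine ⟨z, hz, fun c hc => h.mem_sup_pow_of_mul_mem hi ?_,
    hsub ▸ Submodule.add_mem_sup (Ideal.add_mem _ hκ' hy') hm⟩
  have hzc : b i * (z * c) = (κ + m) * c - ((κ' + y') * c + m * c) := by
    linear_combination -c * hsub
  rw [hzc]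
  exact Ideal.sub_mem _ (hxI c hc) (Submodule.add_mem_sup
    (Ideal.mul_mem_right _ _ (Ideal.add_mem _ hκ' hy')) (hmI c hc))

lemma mem_sup_mul_pow (h : IsResidualSequence I l d b) (hi : i < l)
    (hx : x ∈ initialColon I b i ⊔ initialIdeal b l ^ j)
    (hxI : ∀ c ∈ I, x * c ∈ initialColon I b i ⊔ initialIdeal b l ^ (j + 1)) :
    x ∈ initialColon I b i ⊔ initialColon I b l * initialIdeal b l ^ j := by
  obtain ⟨k, hk⟩ := Nat.exists_eq_add_of_lt hi
  induction k generalizing i j x with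
  | zero => exact h.mem_sup_mul_pow_last hk.symm hx hxI
  | succ k ihk =>
    induction j generalizing x with
    | zero =>
      rw [pow_zero, mul_one]
      exact Ideal.mem_sup_right (h.mem_initialColon_of_forall_mul_mem hi (by simpa using hxI))
    | succ j ihj =>
      have hle (n : ℕ) : initialColon I b i ⊔ initialIdeal b l ^ n ≤
          initialColon I b (i + 1) ⊔ initialIdeal b l ^ n :=
        sup_le_sup_right (initialColon_mono I b i.le_succ) _
      obtain ⟨z, hz, hzI, hsub⟩ := h.exists_sub_mul_mem hi hx hxI
        (ihk (by lia) (hle _ hx) (fun c hc => hle _ (hxI c hc)) (by lia))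
      have hbz : b i * z ∈
          initialColon I b i ⊔ initialColon I b l * initialIdeal b l ^ (j + 1) := by
        obtain ⟨κ, hκ, m, hm, rfl⟩ := Submodule.mem_sup.mp (ihj (Ideal.mem_sup_right hz) hzI)
        rw [mul_add, pow_succ', mul_left_comm (initialColon I b l)]
        exact Submodule.add_mem_sup (Ideal.mul_mem_left _ _ hκ)
          (Ideal.mul_mem_mul (mem_initialIdeal b hi) hm)
      exact sub_add_cancel x (b i * z) ▸ Ideal.add_mem _ hsub hbz

lemma mem_initialColon_mul_pow (h : IsResidualSequence I l d b) (hl : 0 < l)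
    (hx : x ∈ initialIdeal b l ^ j) (hxI : ∀ c ∈ I, x * c ∈ initialIdeal b l ^ (j + 1)) :
    x ∈ initialColon I b l * initialIdeal b l ^ j := by
  have hmem := h.mem_sup_mul_pow hl (Ideal.mem_sup_right hx)
    (fun c hc => Ideal.mem_sup_right (hxI c hc))
  rwa [h.initialColon_zero, bot_sup_eq] at hmem

end IsResidualSequence

end Powers

section ProductTrick

variable {R : Type u} [CommRing R] {L : Ideal R} {a c x : R}

lemma span_singleton_sup_span_singleton_le {t t' : R} (h : IsUnit (t - t')) :
    Ideal.span {a} ⊔ Ideal.span {c} ≤ Ideal.span {a + t * c} ⊔ Ideal.span {a + t' * c} := by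
  obtain ⟨w, hw⟩ := h.exists_left_inv
  have hc : c ∈ Ideal.span {a + t * c} ⊔ Ideal.span {a + t' * c} := by
    have hcw : w * (a + t * c) - w * (a + t' * c) = c := by linear_combination c * hw
    have hmem := Ideal.sub_mem (Ideal.span {a + t * c} ⊔ Ideal.span {a + t' * c})
      (Ideal.mem_sup_left (Ideal.mul_mem_left _ w (Ideal.mem_span_singleton_self _)))
      (Ideal.mem_sup_right (Ideal.mul_mem_left _ w (Ideal.mem_span_singleton_self _)))
    rwa [hcw] at hmem
  refine sup_le ((Ideal.span_singleton_le_iff_mem _).mpr ?_)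
    ((Ideal.span_singleton_le_iff_mem _).mpr hc)
  exact (Ideal.add_mem_iff_left _ (Ideal.mul_mem_left _ t hc)).mp
    (Ideal.mem_sup_left (Ideal.mem_span_singleton_self _))

lemma mul_mul_mem_sup_span_prod [DecidableEq R] {s : Finset R} {t v : R} (ht : t ∈ s)
    (h : x * v ∈ L ⊔ Ideal.span {∏ u ∈ s.erase t, (a + u * c)}) :
    x * ((a + t * c) * v) ∈ L ⊔ Ideal.span {∏ u ∈ s, (a + u * c)} := by
  obtain ⟨κ, hκ, w, hw, hκw⟩ := Submodule.mem_sup.mp h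
  rw [← Finset.mul_prod_erase s _ ht, mul_left_comm, ← hκw, mul_add,
    ← Ideal.span_singleton_mul_span_singleton]
  exact Submodule.add_mem_sup (Ideal.mul_mem_left _ _ hκ)
    (Ideal.mul_mem_mul (Ideal.mem_span_singleton_self _) hw)

lemma mul_mem_sup_span_prod {m : ℕ} {s : Finset R} (hs : s.card = m + 1)
    (hx : ∀ t ∈ s, x ∈ L ⊔ Ideal.span {a + t * c})
    (hunit : ∀ t ∈ s, ∀ t' ∈ s, t ≠ t' → IsUnit (t - t')) {y : R}
    (hy : y ∈ (Ideal.span {a} ⊔ Ideal.span {c}) ^ m) :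
    x * y ∈ L ⊔ Ideal.span {∏ t ∈ s, (a + t * c)} := by
  classical
  induction m generalizing s y with
  | zero =>
    obtain ⟨t, rfl⟩ := Finset.card_eq_one.mp hs
    rw [Finset.prod_singleton]
    exact Ideal.mul_mem_right _ _ (hx t (Finset.mem_singleton_self t))
  | succ m ih =>
    have herase : ∀ t ∈ s, ∀ v ∈ (Ideal.span {a} ⊔ Ideal.span {c}) ^ m,
        x * ((a + t * c) * v) ∈ L ⊔ Ideal.span {∏ t ∈ s, (a + t * c)} := fun t ht v hv =>
      mul_mul_mem_sup_span_prod ht (ih (by rw [Finset.card_erase_of_mem ht, hs]; rfl)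
        (fun u hu => hx u (Finset.mem_of_mem_erase hu))
        (fun u hu u' hu' => hunit u (Finset.mem_of_mem_erase hu) u' (Finset.mem_of_mem_erase hu'))
        hv)
    obtain ⟨t, ht, t', ht', hne⟩ := Finset.one_lt_card.mp (by lia : 1 < s.card)
    rw [pow_succ'] at hy
    have hy' := Ideal.mul_mono_left
      (span_singleton_sup_span_singleton_le (hunit t ht t' ht' hne)) hy
    rw [Ideal.sup_mul] at hy'
    obtain ⟨y₁, hy₁, y₂, hy₂, rfl⟩ := Submodule.mem_sup.mp hy'
    obtain ⟨v₁, hv₁, rfl⟩ := Ideal.mem_span_singleton_mul.mp hy₁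
    obtain ⟨v₂, hv₂, rfl⟩ := Ideal.mem_span_singleton_mul.mp hy₂
    rw [mul_add]
    exact Ideal.add_mem _ (herase t ht v₁ hv₁) (herase t' ht' v₂ hv₂)

lemma pow_succ_mem_sup_of_homogeneous_relation {N : ℕ} {ρ : ℕ → R}
    (h : c ^ (N + 1) + ∑ k ∈ Finset.range (N + 1), ρ k * a ^ (N + 1 - k) * c ^ k ∈ L) :
    c ^ (N + 1) ∈ L ⊔ Ideal.span {a} * (Ideal.span {a} ⊔ Ideal.span {c}) ^ N := by
  rw [← add_sub_cancel_right (c ^ (N + 1)) (∑ k ∈ Finset.range (N + 1), _)]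
  refine Ideal.sub_mem _ (Ideal.mem_sup_left h) (Ideal.mem_sup_right (sum_mem fun k hk => ?_))
  have hkN : k ≤ N := Nat.lt_succ_iff.mp (Finset.mem_range.mp hk)
  have hterm : ρ k * a ^ (N + 1 - k) * c ^ k = a * (ρ k * (a ^ (N - k) * c ^ k)) := by
    rw [Nat.sub_add_comm hkN]; ring
  rw [hterm, ← Nat.sub_add_cancel hkN, pow_add _ (N - k) k, Nat.sub_add_cancel hkN]
  exact Ideal.mul_mem_mul (Ideal.mem_span_singleton_self _) (Ideal.mul_mem_left _ _
    (Ideal.mul_mem_mul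
      (Ideal.pow_mem_pow (Ideal.mem_sup_left (Ideal.mem_span_singleton_self _)) _)
      (Ideal.pow_mem_pow (Ideal.mem_sup_right (Ideal.mem_span_singleton_self _)) _)))

lemma mul_mem_sup_of_homogeneous_relation {N : ℕ} {ρ : ℕ → R}
    (h : c ^ (N + 1) + ∑ k ∈ Finset.range (N + 1), ρ k * a ^ (N + 1 - k) * c ^ k ∈ L)
    (hx : x ∈ (Ideal.span {a} ⊔ Ideal.span {c}) ^ N) :
    x * c ∈ L ⊔ Ideal.span {a} * (Ideal.span {a} ⊔ Ideal.span {c}) ^ N := by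
  have hxc : x * c ∈ (Ideal.span {a} ⊔ Ideal.span {c}) ^ (N + 1) := by
    rw [pow_succ]
    exact Ideal.mul_mem_mul hx (Ideal.mem_sup_right (Ideal.mem_span_singleton_self _))
  exact sup_le le_sup_right ((Ideal.span_singleton_le_iff_mem _).mpr
    (pow_succ_mem_sup_of_homogeneous_relation h)) (sup_span_singleton_pow_succ_le _ c N hxc)

variable [IsLocalRing R]

lemma exists_finset_isUnit_sub [Infinite (ResidueField R)] {F : Set (ResidueField R)}
    (hF : F.Finite) (n : ℕ) : ∃ s : Finset R, s.card = n ∧ (∀ t ∈ s, residue R t ∉ F) ∧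
      ∀ t ∈ s, ∀ t' ∈ s, t ≠ t' → IsUnit (t - t') := by
  classical
  obtain ⟨S, hS, hcard⟩ := hF.infinite_compl.exists_subset_card_eq n
  let lift : ResidueField R → R := Function.surjInv residue_surjective
  have hlift : ∀ κ, residue R (lift κ) = κ := Function.surjInv_eq _
  refine ⟨S.image lift,
    (Finset.card_image_of_injective _ (Function.injective_surjInv _)).trans hcard, ?_, ?_⟩
  · simp only [Finset.forall_mem_image, hlift]
    exact fun κ hκ => hS hκ
  · simp only [Finset.forall_mem_image]
    intro κ _ κ' _ hne
    rw [← residue_ne_zero_iff_isUnit, map_sub, hlift, hlift, sub_ne_zero]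
    exact fun h => hne (congrArg lift h)

/- With `P` the product of `N` of the elements `a + t * c`, the relation puts `P * c` into
`a * (a, c) ^ N` modulo `L`, while `x * (a, c) ^ N` lies in `(a * P)` modulo `L`; hence
`P * (x * c)` lies in `(a ^ 2 * P)` modulo `L`, and `P` can be cancelled. -/
lemma mul_mem_sup_span_sq_of_homogeneous_relation [Infinite (ResidueField R)] {N : ℕ} {ρ : ℕ → R}
    (hrel : c ^ (N + 1) + ∑ k ∈ Finset.range (N + 1), ρ k * a ^ (N + 1 - k) * c ^ k ∈ L)
    (hxa : x ∈ L ⊔ Ideal.span {a}) {F : Set (ResidueField R)} (hF : F.Finite)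
    (hx : ∀ t, residue R t ∉ F → x ∈ L ⊔ Ideal.span {a + t * c})
    (hreg : ∀ t, residue R t ∉ F → IsSMulRegular (R ⧸ L) (a + t * c)) :
    x * c ∈ L ⊔ Ideal.span {a ^ 2} := by
  classical
  obtain ⟨s, hcard, hsF, hunit⟩ := exists_finset_isUnit_sub (hF.union (Set.finite_singleton 0)) N
  have hs0 : ∀ t ∈ s, IsUnit t := fun t ht =>
    (residue_ne_zero_iff_isUnit t).mp fun h0 => hsF t ht (Or.inr h0)
  have hs : (0 : R) ∉ s := fun h => not_isUnit_zero (hs0 0 h)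
  set P := ∏ t ∈ s, (a + t * c) with hP
  have hPmem : P ∈ (Ideal.span {a} ⊔ Ideal.span {c}) ^ N := by
    rw [← hcard, ← Finset.prod_const]
    exact Ideal.prod_mem_prod fun t _ => Submodule.add_mem_sup (Ideal.mem_span_singleton_self _)
      (Ideal.mul_mem_left _ _ (Ideal.mem_span_singleton_self _))
  obtain ⟨κ, hκ, w, hw, hPc⟩ :=
    Submodule.mem_sup.mp (mul_mem_sup_of_homogeneous_relation hrel hPmem)
  obtain ⟨y, hy, rfl⟩ := Ideal.mem_span_singleton_mul.mp hw
  have hxy : x * y ∈ L ⊔ Ideal.span {∏ t ∈ insert 0 s, (a + t * c)} := by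
    refine mul_mem_sup_span_prod (by rw [Finset.card_insert_of_notMem hs, hcard]) ?_ ?_ hy
    · simp only [Finset.forall_mem_insert, zero_mul, add_zero]
      exact ⟨hxa, fun t ht => hx t fun h => hsF t ht (Or.inl h)⟩
    · simp only [Finset.forall_mem_insert, zero_sub, sub_zero, IsUnit.neg_iff, ne_eq,
        not_true_eq_false, IsEmpty.forall_iff, true_and]
      exact ⟨fun t ht _ => hs0 t ht, fun t ht => ⟨fun _ => hs0 t ht, hunit t ht⟩⟩
  rw [Finset.prod_insert hs, zero_mul, add_zero, ← hP] at hxy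
  obtain ⟨κ', hκ', v, hv, hxyv⟩ := Submodule.mem_sup.mp hxy
  obtain ⟨v, rfl⟩ := Ideal.mem_span_singleton'.mp hv
  have hPreg : IsSMulRegular (R ⧸ L) P := Finset.prod_induction _ (IsSMulRegular (R ⧸ L))
    (fun _ _ => IsSMulRegular.mul) (IsSMulRegular.one _) fun t ht =>
      hreg t fun h => hsF t ht (Or.inl h)
  have hcancel : x * c - v * a ^ 2 ∈ L := by
    refine mem_of_isSMulRegular_quotient_of_smul_mem hPreg ?_
    have hid : P • (x * c - v * a ^ 2) = x * κ + a * κ' := by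
      rw [smul_eq_mul]; linear_combination (-x) * hPc - a * hxyv
    rw [hid]
    exact Ideal.add_mem _ (Ideal.mul_mem_left _ _ hκ) (Ideal.mul_mem_left _ _ hκ')
  rw [← sub_add_cancel (x * c) (v * a ^ 2)]
  exact Submodule.add_mem_sup hcancel
    (Ideal.mul_mem_left _ _ (Ideal.mem_span_singleton_self _))

lemma exists_finite_residues_isSMulRegular_add_mul [IsNoetherianRing R]
    (ha : IsSMulRegular (R ⧸ L) a) (c : R) : ∃ F : Set (ResidueField R), F.Finite ∧
      ∀ t, residue R t ∉ F → IsSMulRegular (R ⧸ L) (a + t * c) := by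
  have ha' : ∀ q, L.IsAssociatedPrime q → a ∉ q := by
    intro q hq haq
    obtain ⟨hqp, z, rfl⟩ := Submodule.isAssociatedPrime_iff.mp hq
    exact notMem_of_isPrime_colon_singleton hqp
      (mem_of_isSMulRegular_quotient_of_smul_mem ha (Submodule.mem_colon_singleton.mp haq))
  obtain ⟨F, hF, hFq⟩ := exists_finite_residues_add_mul_notMem
    (𝒩 := {q | L.IsAssociatedPrime q ∧ c ∉ q})
    ((finite_setOf_isAssociatedPrime L).subset fun q hq => hq.1) (c := a) (fun q hq => hq.2)
  refine ⟨F, hF, fun t ht => isSMulRegular_quotient_of_forall_notMem fun q hq hmem => ?_⟩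
  by_cases hcq : c ∈ q
  · exact ha' q hq ((Ideal.add_mem_iff_left _ (Ideal.mul_mem_left _ _ hcq)).mp hmem)
  · exact hFq t ht q ⟨hq, hcq⟩ hmem

end ProductTrick

section Core

variable {R : Type u} [CommRing R]

lemma span_range_fin_eq_initialIdeal (b : ℕ → R) (l : ℕ) :
    Ideal.span (Set.range fun k : Fin l => b k) = initialIdeal b l := by
  rw [initialIdeal, ← Fin.range_val, ← Set.range_comp, Function.comp_def]

lemma initialIdeal_update_succ (b : ℕ → R) (i : ℕ) (y : R) :
    initialIdeal (Function.update b i y) (i + 1) = initialIdeal b i ⊔ Ideal.span {y} := by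
  rw [initialIdeal_succ, Function.update_self, initialIdeal, initialIdeal,
    image_update_of_notMem _ _ (Set.self_notMem_Iio)]

lemma initialIdeal_comp_perm (a : ℕ → R) (σ : Equiv.Perm ℕ) (i : ℕ) :
    initialIdeal (a ∘ σ) i =
      Ideal.span (a '' ((Finset.range i).map σ.toEmbedding : Finset ℕ)) := by
  rw [initialIdeal, Set.image_comp, Finset.coe_map, Finset.coe_range]
  rfl

lemma initialIdeal_comp_perm_eq (a : ℕ → R) {σ : Equiv.Perm ℕ} {l : ℕ} (hσ : ∀ k < l, σ k < l) :
    initialIdeal (a ∘ σ) l = initialIdeal a l := by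
  have hmap : (Finset.range l).map σ.toEmbedding = Finset.range l :=
    Finset.map_eq_of_subset <| by
      simp only [Finset.subset_iff, Finset.forall_mem_map, Finset.mem_range]
      exact hσ
  rw [initialIdeal_comp_perm, hmap, Finset.coe_range, initialIdeal]

variable [IsLocalRing R] [IsNoetherianRing R] [IsDomain R] {I : Ideal R} {l d : ℕ} {b : ℕ → R}

lemma IsReduction.isMinimalReduction_initialIdeal (hred : IsReduction (initialIdeal b l) I)
    (hI : I ≠ ⊥) (hl : fiberDim I = (l : WithBot ℕ∞)) :
    IsMinimalReduction (initialIdeal b l) I := by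
  rw [← span_range_fin_eq_initialIdeal] at hred ⊢
  exact hred.isMinimalReduction_span_range hI hl

lemma IsReduction.core_le_sup_span {i : ℕ} {y : R}
    (hred : IsReduction (initialIdeal b i ⊔ Ideal.span {y}) I) (hI : I ≠ ⊥)
    (hl : fiberDim I = ((i + 1 : ℕ) : WithBot ℕ∞)) :
    core I ≤ initialIdeal b i ⊔ Ideal.span {y} := by
  rw [← initialIdeal_update_succ] at hred ⊢
  exact sInf_le (hred.isMinimalReduction_initialIdeal hI hl)

lemma IsResidualSequence.mem_initialColon_of_add_mul_mem_core [Infinite (ResidueField R)] {i : ℕ}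
    (h : IsResidualSequence I (i + 1) d b) (hI : I ≠ ⊥)
    (hl : fiberDim I = ((i + 1 : ℕ) : WithBot ℕ∞)) (hred : IsReduction (initialIdeal b (i + 1)) I)
    {y r : R} (hy : y ∈ initialIdeal b i) (hx : y + r * b i ∈ core I) :
    r ∈ initialColon I b (i + 1) := by
  have hi := i.lt_succ_self
  have hreg := h.isSMulRegular hi
  rw [initialIdeal_succ] at hred
  have hyK := initialIdeal_le_initialColon I b i hy
  refine h.mem_initialColon_of_forall_mul_mem hi fun c hc => ?_
  obtain ⟨N, ρ, hρ⟩ := hred.exists_homogeneous_relation hI hc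
  obtain ⟨F, hF, hFred⟩ := hred.exists_finite_residues_sup_span_add_mul hI hc
  obtain ⟨F', hF', hFreg⟩ := exists_finite_residues_isSMulRegular_add_mul hreg c
  have hsq : (y + r * b i) * c ∈ initialColon I b i ⊔ Ideal.span {b i ^ 2} :=
    mul_mem_sup_span_sq_of_homogeneous_relation
      (initialIdeal_le_initialColon I b i (Ideal.mul_le_left hρ))
      (Submodule.add_mem_sup hyK (Ideal.mul_mem_left _ _ (Ideal.mem_span_singleton_self _)))
      (hF.union hF')
      (fun t ht => sup_le_sup_right (initialIdeal_le_initialColon I b i) _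
        ((hFred t fun htF => ht (Or.inl htF)).core_le_sup_span hI hl hx))
      (fun t ht => hFreg t fun htF => ht (Or.inr htF))
  obtain ⟨κ, hκ, w, hw, hsum⟩ := Submodule.mem_sup.mp hsq
  obtain ⟨v, rfl⟩ := Ideal.mem_span_singleton'.mp hw
  have hcancel : r * c - v * b i ∈ initialColon I b i := by
    refine h.mem_of_mul_mem hi ?_
    have hid : b i * (r * c - v * b i) = κ - y * c := by linear_combination -hsum
    rw [hid]
    exact Ideal.sub_mem _ hκ (Ideal.mul_mem_right _ _ hyK)
  rw [← sub_add_cancel (r * c) (v * b i)]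
  exact Submodule.add_mem_sup hcancel (Ideal.mul_mem_left _ _ (mem_initialIdeal b hi))

variable {a : ℕ → R}

lemma IsResidualSequence.of_isGeneric (hIm : I ≤ maximalIdeal R) (hI : I ≠ ⊥)
    (hd : ringKrullDim R = d) (hCM : DepthGE (⊥ : Ideal R) d) (han : ANminus I (l - 1))
    (hl : fiberDim I = (l : WithBot ℕ∞)) (ha : ∀ k, a k ∈ I)
    (hgen : ∀ S ⊆ Finset.range l, IsGeneric I l (Ideal.span (a '' S)) S.card)
    {σ : Equiv.Perm ℕ} (hσ : ∀ k < l, σ k < l) : IsResidualSequence I l d (a ∘ σ) where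
  le_maximalIdeal := hIm
  bot_colon := by
    obtain ⟨c, hc, hc0⟩ := Submodule.exists_mem_ne_zero_of_ne_bot hI
    refine (Submodule.eq_bot_iff _).mpr fun x hx => ?_
    have hxc : x * c = 0 := Submodule.mem_colon.mp hx c hc
    exact (mul_eq_zero.mp hxc).resolve_right hc0
  ringKrullDim_eq := hd
  depthGE_bot := hCM
  mem _ := ha _
  isGeneric i hi := by
    have hgen' := hgen ((Finset.range i).map σ.toEmbedding) (by
      simp only [Finset.subset_iff, Finset.forall_mem_map, Finset.mem_range]
      exact fun k hk => hσ k (hk.trans_le hi))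
    rwa [Finset.card_map, Finset.card_range, ← initialIdeal_comp_perm] at hgen'
  anMinus := han
  initialColon_ne_top i hi htop := by
    have heq : initialIdeal (a ∘ σ) i = I :=
      (CPU.initialIdeal_le (fun k => ha _) i).antisymm
        ((Submodule.colon_eq_top_iff_subset _).mp htop)
    have hred : IsReduction (Ideal.span (Set.range fun k : Fin i => (a ∘ σ) k)) I := by
      rw [span_range_fin_eq_initialIdeal, heq]
      exact ⟨le_rfl, 0, by rw [pow_zero, mul_one, zero_add, pow_one]⟩
    have hli := fiberDim_le_card hred hI
    rw [hl, Nat.card_fin] at hli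
    exact absurd (by exact_mod_cast hli) hi.not_ge

/- Moving the `k`-th generator to the last place by a transposition shows that the `k`-th
coefficient of an element of the core lies in the colon ideal. -/
lemma core_le_initialColon_mul [Infinite (ResidueField R)] (hI : I ≠ ⊥)
    (hl : fiberDim I = (l : WithBot ℕ∞)) (hred : IsReduction (initialIdeal a l) I)
    (hres : ∀ σ : Equiv.Perm ℕ, (∀ k < l, σ k < l) → IsResidualSequence I l d (a ∘ σ)) :
    core I ≤ initialColon I a l * initialIdeal a l := by
  intro x hx
  have hxa : x ∈ initialIdeal a l :=
    (Submodule.mem_sInf.mp hx) _ (hred.isMinimalReduction_initialIdeal hI hl)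
  rw [initialIdeal, ← Finset.coe_range, Ideal.span,
    Submodule.mem_span_image_finset_iff_exists_fun'] at hxa
  obtain ⟨r, rfl⟩ := hxa
  refine sum_mem fun k hk => ?_
  have hkl := Finset.mem_range.mp hk
  refine Ideal.mul_mem_mul ?_ (mem_initialIdeal a hkl)
  obtain ⟨i, rfl⟩ := Nat.exists_eq_add_one_of_ne_zero (Nat.ne_zero_of_lt hkl)
  set σ := Equiv.swap k i with hσ
  have hσl : ∀ j < i + 1, σ j < i + 1 := by
    intro j hj
    rw [hσ, Equiv.swap_apply_def]
    split_ifs <;> lia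
  have hσi : ∀ j ∈ (Finset.range (i + 1)).erase k, σ j < i := by
    intro j hj
    obtain ⟨hjk, hj⟩ := Finset.mem_erase.mp hj
    rw [Finset.mem_range] at hj
    rw [hσ, Equiv.swap_apply_def]
    split_ifs <;> lia
  have hideal := initialIdeal_comp_perm_eq a hσl
  have hrest : ∑ j ∈ (Finset.range (i + 1)).erase k, r j * a j ∈ initialIdeal (a ∘ σ) i := by
    refine sum_mem fun j hj => Ideal.mul_mem_left _ _ ?_
    have haj : a j = (a ∘ σ) (σ j) := by rw [Function.comp_apply, Equiv.swap_apply_self]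
    rw [haj]
    exact mem_initialIdeal _ (hσi j hj)
  have hrk := (hres σ hσl).mem_initialColon_of_add_mul_mem_core hI hl (by rwa [hideal]) hrest
    (r := r k) (by
      rw [Function.comp_apply, hσ, Equiv.swap_apply_right, Finset.sum_erase_add _ _ hk]
      exact hx)
  rwa [initialColon, hideal] at hrk

end Core

section LeadingForms

open MvPolynomial

variable {S : Type*} {ι : Type*} [CommRing S] {F : MvPolynomial ι S} {e : ℕ} {i : ι}

lemma mem_support_and_eq_zero_of_mem_support_modMonomial {m : ι →₀ ℕ}
    (hm : m ∈ (F.modMonomial (Finsupp.single i 1)).support) : m ∈ F.support ∧ m i = 0 := by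
  by_cases hle : Finsupp.single i 1 ≤ m
  · exact absurd (coeff_modMonomial_of_le F hle) (mem_support_iff.mp hm)
  · rw [mem_support_iff, coeff_modMonomial_of_not_le F hle, ← mem_support_iff] at hm
    rw [Finsupp.single_le_iff] at hle
    exact ⟨hm, by lia⟩

lemma isHomogeneous_modMonomial_single (hF : F.IsHomogeneous e) (i : ι) :
    (F.modMonomial (Finsupp.single i 1)).IsHomogeneous e := fun _ hm =>
  hF (mem_support_iff.mp
    (mem_support_and_eq_zero_of_mem_support_modMonomial (mem_support_iff.mpr hm)).1)

lemma isHomogeneous_divMonomial_single (hF : F.IsHomogeneous (e + 1)) (i : ι) :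
    (F.divMonomial (Finsupp.single i 1)).IsHomogeneous e := by
  intro m hm
  rw [coeff_divMonomial] at hm
  have hdeg := degree_eq_of_mem_support hF (mem_support_iff.mpr hm)
  rw [map_add, Finsupp.degree_single] at hdeg
  have hdeg : m.degree = e := by lia
  rwa [Finsupp.degree_eq_weight_one] at hdeg

lemma exists_coeff_divMonomial_single_notMem {p : Ideal S} (i : ι)
    (h : ∀ m, (F.modMonomial (Finsupp.single i 1)).coeff m ∈ p) (hF : ∃ m, F.coeff m ∉ p) :
    ∃ m, (F.divMonomial (Finsupp.single i 1)).coeff m ∉ p := by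
  obtain ⟨m, hm⟩ := hF
  have hle : Finsupp.single i 1 ≤ m := by
    by_contra hle
    exact hm (coeff_modMonomial_of_not_le F hle ▸ h m)
  exact ⟨m - Finsupp.single i 1, by rwa [coeff_divMonomial, add_tsub_cancel_of_le hle]⟩

lemma eval_eq_modMonomial_add_divMonomial (f : ι → S) (F : MvPolynomial ι S) (i : ι) :
    eval f F = eval f (F.modMonomial (Finsupp.single i 1)) +
      f i * eval f (F.divMonomial (Finsupp.single i 1)) := by
  conv_lhs => rw [← divMonomial_add_modMonomial_single F i]
  rw [map_add, map_mul, eval_X, add_comm]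

lemma eq_monomial_single_of_isHomogeneous (hF : F.IsHomogeneous e)
    (h : ∀ m ∈ F.support, ∀ k ≠ i, m k = 0) :
    F = monomial (Finsupp.single i e) (F.coeff (Finsupp.single i e)) := by
  classical
  ext m
  rw [coeff_monomial]
  split_ifs with hm
  · rw [hm]
  by_contra hne
  have hmF := mem_support_iff.mpr hne
  have hsingle : m = Finsupp.single i (m i) := Finsupp.ext fun k => by
    by_cases hk : k = i
    · rw [hk, Finsupp.single_eq_same]
    · rw [h m hmF k hk, Finsupp.single_eq_of_ne hk]
  have hdeg := degree_eq_of_mem_support hF hmF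
  rw [hsingle, Finsupp.degree_single] at hdeg
  exact hm (hdeg ▸ hsingle.symm)

end LeadingForms

section GradedCancellation

/-- Away from the prime `p`, multiplication by the form `f` of degree `e` is injective on the
elements killed by `p` in the associated graded ring of `initialIdeal b l` over
`R ⧸ initialColon I b i`. Membership in powers is used in place of the graded ring. -/
def CancelsAwayFrom {R : Type u} [CommRing R] (p I : Ideal R) (b : ℕ → R) (l i e : ℕ) (f : R) :
    Prop :=
  ∀ n y, (∀ r ∈ p, r * y ∈ initialColon I b i ⊔ initialIdeal b l ^ n) →
    f * y ∈ initialColon I b i ⊔ initialIdeal b l ^ (n + e) →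
    ∃ σ ∉ p, σ * y ∈ initialColon I b i ⊔ initialIdeal b l ^ n

lemma mul_mem_sup_pow_add {R : Type u} [CommRing R] {K J : Ideal R} {x y : R} {n e : ℕ}
    (hx : x ∈ J ^ e) (hy : y ∈ K ⊔ J ^ n) : x * y ∈ K ⊔ J ^ (n + e) := by
  obtain ⟨κ, hκ, w, hw, rfl⟩ := Submodule.mem_sup.mp hy
  rw [mul_add, mul_comm x w, pow_add]
  exact Submodule.add_mem_sup (Ideal.mul_mem_left _ _ hκ) (Ideal.mul_mem_mul hw hx)

lemma mul_mem_sup_pow_of_mem_mul_pow {R : Type u} [CommRing R] {p K J : Ideal R} {f y : R}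
    {n e : ℕ} (hy : ∀ r ∈ p, r * y ∈ K ⊔ J ^ n) (hf : f ∈ p * J ^ e) :
    f * y ∈ K ⊔ J ^ (n + e) := by
  suffices p * J ^ e ≤ (K ⊔ J ^ (n + e)).colon {y} from Submodule.mem_colon_singleton.mp (this hf)
  refine Ideal.mul_le.mpr fun r hr s hs => Submodule.mem_colon_singleton.mpr ?_
  rw [smul_eq_mul, mul_comm r s, mul_assoc]
  exact mul_mem_sup_pow_add hs (hy r hr)

namespace IsResidualSequence

variable {R : Type u} [CommRing R] [IsLocalRing R] [IsNoetherianRing R] {I p : Ideal R}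
  {l d i e n : ℕ} {b : ℕ → R} {f f₀ f₁ r κ y : R}

lemma cancelsAwayFrom_mul_pow (h : IsResidualSequence I l d b) (hi : i < l) (hr : r ∉ p) (e : ℕ) :
    CancelsAwayFrom p I b l i e (r * b i ^ e) := fun n y _ hy =>
  ⟨r, hr, h.mem_sup_pow_of_pow_mul_mem (j := e) hi (by convert hy using 1; ring)⟩

lemma cancelsAwayFrom_add_mul (h : IsResidualSequence I l d b) (hi : i < l)
    (hf₀ : f₀ ∈ p * initialIdeal b l ^ (e + 1)) (hf₁ : CancelsAwayFrom p I b l i e f₁) :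
    CancelsAwayFrom p I b l i (e + 1) (f₀ + b i * f₁) := fun n y hpy hy => by
  refine hf₁ n y hpy (h.mem_sup_pow_of_mul_mem hi ?_)
  rwa [add_mul, Ideal.add_mem_iff_right _ (mul_mem_sup_pow_of_mem_mul_pow hpy hf₀), mul_assoc] at hy

lemma exists_notMem_mul_mem_sup_span (h : IsResidualSequence I l d b) (hp : p.IsPrime)
    (hpl : l ≤ p.height) (hi : i + 1 < l) (hκ : κ ∈ initialColon I b (i + 1))
    (hpκ : ∀ r ∈ p, r * κ ∈ initialColon I b i ⊔ initialIdeal b l ^ (n + 1)) :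
    ∃ τ ∉ p, τ * κ ∈ initialColon I b i ⊔ Ideal.span {b i} := by
  by_contra! hcon
  have hpκ' : (initialColon I b i ⊔ Ideal.span {b i}).colon {κ} = p := by
    ext r
    rw [Submodule.mem_colon_singleton]
    exact ⟨fun hr => by_contra fun hrp => hcon r hrp hr, fun hr =>
      h.sup_pow_sup_span_inf_le (Nat.lt_of_succ_lt hi)
        ⟨Ideal.mem_sup_left (hpκ r hr), Ideal.mul_mem_left _ _ hκ⟩⟩
  have hle := hpl.trans (h.height_le_of_isAssociatedPrime_sup_span (Nat.lt_of_succ_lt hi)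
    (Submodule.isAssociatedPrime_iff.mpr ⟨hp, κ, hpκ'.symm⟩))
  exact absurd (ENat.natCast_le_natCast.mp hle) hi.not_ge

lemma exists_notMem_mul_sub_mul_mem (h : IsResidualSequence I l d b) (hp : p.IsPrime)
    (hpl : l ≤ p.height) (hi : i + 1 < l) (hf₀ : CancelsAwayFrom p I b l (i + 1) e f₀)
    (hff₀ : f - f₀ ∈ Ideal.span {b i})
    (hpy : ∀ r ∈ p, r * y ∈ initialColon I b i ⊔ initialIdeal b l ^ (n + 1))
    (hfy : f * y ∈ initialColon I b i ⊔ initialIdeal b l ^ (n + 1 + e)) :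
    ∃ σ ∉ p, ∃ z, σ * y - b i * z ∈ initialColon I b i ⊔ initialIdeal b l ^ (n + 1) := by
  have hle (m : ℕ) : initialColon I b i ⊔ initialIdeal b l ^ m ≤
      initialColon I b (i + 1) ⊔ initialIdeal b l ^ m :=
    sup_le_sup_right (initialColon_mono I b i.le_succ) _
  have hf₀y : f₀ * y ∈ initialColon I b (i + 1) ⊔ initialIdeal b l ^ (n + 1 + e) := by
    obtain ⟨v, hv⟩ := Ideal.mem_span_singleton'.mp hff₀
    have hsub : f₀ * y = f * y - v * y * b i := by linear_combination y * hv
    exact hsub ▸ Ideal.sub_mem _ (hle _ hfy)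
      (Ideal.mem_sup_left (Ideal.mul_mem_left _ _ (mem_initialColon I b i.lt_succ_self)))
  obtain ⟨σ, hσ, hσy⟩ := hf₀ (n + 1) y (fun r hr => hle _ (hpy r hr)) hf₀y
  obtain ⟨κ, hκ, w, hw, hκw⟩ := Submodule.mem_sup.mp hσy
  obtain ⟨τ, hτ, hτκ⟩ := h.exists_notMem_mul_mem_sup_span hp hpl hi hκ (n := n) fun r hr => by
    have hrκ : r * κ = σ * (r * y) - r * w := by linear_combination r * hκw
    exact hrκ ▸ Ideal.sub_mem _ (Ideal.mul_mem_left _ _ (hpy r hr))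
      (Ideal.mem_sup_right (Ideal.mul_mem_left _ _ hw))
  obtain ⟨κ', hκ', v, hv, hκv⟩ := Submodule.mem_sup.mp hτκ
  obtain ⟨z, rfl⟩ := Ideal.mem_span_singleton.mp hv
  refine ⟨τ * σ, fun hmem => (hp.mem_or_mem hmem).elim hτ hσ, z, ?_⟩
  have hsub : τ * σ * y - b i * z = κ' + τ * w := by linear_combination -hκv - τ * hκw
  exact hsub ▸ Submodule.add_mem_sup hκ' (Ideal.mul_mem_left _ _ hw)

lemma cancelsAwayFrom_of_sub_mem_span (h : IsResidualSequence I l d b) (hp : p.IsPrime)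
    (hpl : l ≤ p.height) (hi : i + 1 < l) (hf₀ : CancelsAwayFrom p I b l (i + 1) e f₀)
    (hf : f ∈ initialIdeal b l ^ e) (hff₀ : f - f₀ ∈ Ideal.span {b i}) :
    CancelsAwayFrom p I b l i e f := by
  have hil : i < l := Nat.lt_of_succ_lt hi
  intro n
  induction n with
  | zero =>
    intro y _ _
    exact ⟨1, (Ideal.ne_top_iff_one p).mp hp.ne_top, by
      rw [pow_zero, Ideal.one_eq_top, sup_top_eq]; exact Submodule.mem_top⟩
  | succ n ih =>
    intro y hpy hfy
    obtain ⟨σ, hσ, z, hz⟩ := h.exists_notMem_mul_sub_mul_mem hp hpl hi hf₀ hff₀ hpy hfy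
    have hpz (r : R) (hr : r ∈ p) : r * z ∈ initialColon I b i ⊔ initialIdeal b l ^ n := by
      refine h.mem_sup_pow_of_mul_mem hil ?_
      have hrz : b i * (r * z) = σ * (r * y) - r * (σ * y - b i * z) := by ring
      exact hrz ▸ Ideal.sub_mem _ (Ideal.mul_mem_left _ _ (hpy r hr)) (Ideal.mul_mem_left _ _ hz)
    have hfz : f * z ∈ initialColon I b i ⊔ initialIdeal b l ^ (n + e) := by
      refine h.mem_sup_pow_of_mul_mem hil ?_
      have hfz : b i * (f * z) = σ * (f * y) - f * (σ * y - b i * z) := by ring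
      rw [hfz, add_right_comm]
      exact Ideal.sub_mem _ (Ideal.mul_mem_left _ _ hfy) (mul_mem_sup_pow_add hf hz)
    obtain ⟨τ, hτ, hτz⟩ := ih z hpz hfz
    refine ⟨τ * σ, fun hmem => (hp.mem_or_mem hmem).elim hτ hσ, ?_⟩
    have hsum : τ * σ * y = b i * (τ * z) + τ * (σ * y - b i * z) := by ring
    exact hsum ▸ Ideal.add_mem _ ((h.mul_mem_sup_pow_iff hil).mpr hτz) (Ideal.mul_mem_left _ _ hz)

open MvPolynomial

lemma cancelsAwayFrom_eval_last (h : IsResidualSequence I l d b) (hi : i + 1 = l)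
    {F : MvPolynomial (Fin l) R} (hF : F.IsHomogeneous e)
    (hFi : ∀ m ∈ F.support, ∀ k : Fin l, (k : ℕ) < i → m k = 0) (hFp : ∃ m, F.coeff m ∉ p) :
    CancelsAwayFrom p I b l i e (eval (fun k : Fin l => b k) F) := by
  let k₀ : Fin l := ⟨i, hi ▸ i.lt_succ_self⟩
  have heq := eq_monomial_single_of_isHomogeneous (i := k₀) hF fun m hm k hk =>
    hFi m hm k (by have := k.2; have : (k : ℕ) ≠ i := Fin.val_ne_of_ne hk; lia)
  obtain ⟨m, hm⟩ := hFp
  rw [heq, coeff_monomial] at hm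
  split_ifs at hm with hme
  · have heval : eval (fun k : Fin l => b k) F = F.coeff (Finsupp.single k₀ e) * b i ^ e := by
      conv_lhs => rw [heq, eval_monomial]
      exact congrArg _ (Finsupp.prod_single_index (pow_zero _))
    exact heval ▸ h.cancelsAwayFrom_mul_pow (hi ▸ i.lt_succ_self) hm e
  · exact absurd p.zero_mem hm

lemma cancelsAwayFrom_eval (h : IsResidualSequence I l d b) (hp : p.IsPrime)
    (hpl : l ≤ p.height) (hi : i < l) {F : MvPolynomial (Fin l) R} (hF : F.IsHomogeneous e)
    (hFi : ∀ m ∈ F.support, ∀ k : Fin l, (k : ℕ) < i → m k = 0) (hFp : ∃ m, F.coeff m ∉ p) :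
    CancelsAwayFrom p I b l i e (eval (fun k : Fin l => b k) F) := by
  have hb (k : Fin l) : b k ∈ initialIdeal b l := mem_initialIdeal b k.2
  obtain ⟨t, ht⟩ := Nat.exists_eq_add_of_lt hi
  induction t generalizing i e F with
  | zero => exact h.cancelsAwayFrom_eval_last ht.symm hF hFi hFp
  | succ t iht =>
    let k₀ : Fin l := ⟨i, hi⟩
    induction e generalizing F with
    | zero =>
      have hFi' (m : Fin l →₀ ℕ) (hm : m ∈ F.support) (k : Fin l) (_ : (k : ℕ) < i + 1) :
          m k = 0 := by
        rw [(Finsupp.degree_eq_zero_iff m).mp (degree_eq_of_mem_support hF hm), Finsupp.zero_apply]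
      exact h.cancelsAwayFrom_of_sub_mem_span hp hpl (by lia) (iht (by lia) hF hFi' hFp (by lia))
        (eval_mem_pow_of_isHomogeneous hb hF) (sub_self (eval _ F) ▸ zero_mem _)
    | succ e ihe =>
      have hF₀ := isHomogeneous_modMonomial_single hF k₀
      have heval := eval_eq_modMonomial_add_divMonomial (fun k : Fin l => b k) F k₀
      by_cases hF₀p : ∃ m, (F.modMonomial (Finsupp.single k₀ 1)).coeff m ∉ p
      · refine h.cancelsAwayFrom_of_sub_mem_span hp hpl (by lia)
          (iht (by lia) hF₀ (fun m hm k hk => ?_) hF₀p (by lia))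
          (eval_mem_pow_of_isHomogeneous hb hF) ?_
        · obtain ⟨hmF, hmk₀⟩ := mem_support_and_eq_zero_of_mem_support_modMonomial hm
          obtain hk | hk := Nat.lt_succ_iff_lt_or_eq.mp hk
          · exact hFi m hmF k hk
          · rwa [show k = k₀ from Fin.ext hk]
        · rw [heval, add_sub_cancel_left]
          exact Ideal.mul_mem_right _ _ (Ideal.mem_span_singleton_self _)
      · push Not at hF₀p
        rw [heval]
        refine h.cancelsAwayFrom_add_mul hi (eval_mem_mul_pow_of_isHomogeneous hb hF₀ hF₀p)
          (ihe (isHomogeneous_divMonomial_single hF k₀) (fun m hm k hk => ?_)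
            (exists_coeff_divMonomial_single_notMem k₀ hF₀p hFp))
        rw [mem_support_iff, coeff_divMonomial, ← mem_support_iff] at hm
        exact (Nat.add_eq_zero_iff.mp (hFi _ hm k hk)).2

lemma exists_eval_homogeneousComponent_mul_notMem (h : IsResidualSequence I l d b) (hl : 0 < l)
    (hp : p.IsPrime) (hpl : l ≤ p.height) (hpy : p = (initialIdeal b l ^ n).colon {y})
    {F : MvPolynomial (Fin l) R} (hF : F ∉ p.map (C : R →+* MvPolynomial (Fin l) R)) :
    ∃ e, eval (fun k : Fin l => b k) (homogeneousComponent e F) * y ∉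
      initialIdeal b l ^ (n + e) := by
  have hy (r : R) : r ∈ p ↔ r * y ∈ initialIdeal b l ^ n := by
    rw [hpy, Submodule.mem_colon_singleton, smul_eq_mul]
  rw [mem_map_C_iff] at hF
  push Not at hF
  obtain ⟨m, hm⟩ := hF
  refine ⟨m.degree, fun hmem => ?_⟩
  obtain ⟨σ, hσ, hσy⟩ := h.cancelsAwayFrom_eval hp hpl hl
    (homogeneousComponent_isHomogeneous m.degree F) (fun _ _ k hk => absurd hk (Nat.not_lt_zero _))
    ⟨m, by rwa [coeff_homogeneousComponent, if_pos rfl]⟩ n y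
    (fun r hr => Ideal.mem_sup_right ((hy r).mp hr)) (Ideal.mem_sup_right hmem)
  rw [h.initialColon_zero, bot_sup_eq, ← hy] at hσy
  exact hσ hσy

end IsResidualSequence

end GradedCancellation

section Normality

open Polynomial

variable {R : Type u} [CommRing R] {I : Ideal R} {c : R} {f g : R[X]} {n : ℕ}

lemma C_pow_mul_mem_reesAlgebra (hc : c ∈ I) (hf : f.natDegree ≤ n) :
    C (c ^ n) * f ∈ reesAlgebra I := by
  intro k
  rw [coeff_C_mul]
  obtain hk | hk := le_or_gt k n
  · exact Ideal.mul_mem_right _ _ (Ideal.pow_le_pow_right hk (Ideal.pow_mem_pow hc n))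
  · rw [coeff_eq_zero_of_natDegree_lt (hf.trans_lt hk), mul_zero]
    exact zero_mem _

lemma isReduction_sup_span_of_isIntegral_monomial [Nontrivial R] {g : R}
    (h : IsIntegral (reesAlgebra I) (monomial 1 g : R[X])) :
    IsReduction I (I ⊔ Ideal.span {g}) := by
  obtain ⟨q, hq, hqg⟩ := h
  obtain ⟨m, hm⟩ : ∃ m, q.natDegree = m + 1 := by
    refine Nat.exists_eq_succ_of_ne_zero fun hq₀ => ?_
    rw [hq.natDegree_eq_zero.mp hq₀, eval₂_one] at hqg
    exact one_ne_zero hqg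
  have hcoeff (i : ℕ) (hi : i ∈ Finset.range (m + 1 + 1)) :
      (algebraMap (reesAlgebra I) R[X] (q.coeff i) * monomial 1 g ^ i).coeff (m + 1) =
        (q.coeff i : R[X]).coeff (m + 1 - i) * g ^ i := by
    rw [monomial_pow, one_mul]
    conv_lhs => rw [← Nat.sub_add_cancel (Finset.mem_range_succ_iff.mp hi)]
    exact coeff_mul_monomial _ _ _ _
  have hrel := congrArg (coeff · (m + 1)) hqg
  simp only [eval₂_eq_sum_range, hm, finsetSum_coeff, coeff_zero] at hrel
  rw [Finset.sum_congr rfl hcoeff, Finset.sum_range_succ, ← hm, hq.coeff_natDegree, hm,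
    Nat.sub_self, OneMemClass.coe_one, coeff_one_zero, one_mul] at hrel
  refine isReduction_sup_span_singleton (m := m) (eq_neg_of_add_eq_zero_right hrel ▸ ?_)
  refine neg_mem (sum_mem fun i hi => ?_)
  obtain ⟨j, rfl⟩ := Nat.exists_eq_add_of_le (Finset.mem_range_succ_iff.mp hi)
  have hi' : i + j + 1 - i = j + 1 := by lia
  rw [add_comm i j, pow_add, ← mul_assoc, ← add_comm i j, hi']
  refine Ideal.mul_mem_mul ?_ (Ideal.pow_mem_pow (Ideal.mem_sup_right
    (Ideal.mem_span_singleton_self _)) _)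
  have hmem : (q.coeff i : R[X]).coeff (j + 1) ∈ I ^ (j + 1) := (q.coeff i).2 _
  rw [pow_succ'] at hmem
  exact Ideal.mul_mono_right (Ideal.pow_right_mono le_sup_left _) hmem

variable [IsDomain R]

lemma algebraMap_mem_nonZeroDivisors_reesAlgebra (hc : c ≠ 0) :
    algebraMap R (reesAlgebra I) c ∈ nonZeroDivisors (reesAlgebra I) :=
  mem_nonZeroDivisors_of_ne_zero fun h₀ => hc (C_eq_zero.mp (congrArg Subtype.val h₀))

lemma isReduction_sup_span_of_forall_mul_pow_mem [IsNoetherianRing R] {g : R} (hc : c ≠ 0)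
    (h : ∀ k : ℕ, c * g ^ k ∈ I ^ k) : IsReduction I (I ⊔ Ideal.span {g}) := by
  have halmost : IsAlmostIntegral (reesAlgebra I) (monomial 1 g : R[X]) := by
    refine ⟨algebraMap R (reesAlgebra I) c, algebraMap_mem_nonZeroDivisors_reesAlgebra hc,
      fun k => ⟨⟨monomial k (c * g ^ k), reesAlgebra.monomial_mem.mpr (h k)⟩, ?_⟩⟩
    rw [Algebra.smul_def, monomial_pow, one_mul]
    exact (C_mul_monomial (a := c)).symm
  exact isReduction_sup_span_of_isIntegral_monomial halmost.isIntegral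

lemma exists_mul_pow_mem_reesAlgebra (hI : I ≠ ⊥) (hf : IsIntegral (reesAlgebra I) f) :
    ∃ r ∈ reesAlgebra I, r ≠ 0 ∧ ∀ k, r * f ^ k ∈ reesAlgebra I := by
  obtain ⟨x, hx, hx₀⟩ := Submodule.exists_mem_ne_zero_of_ne_bot hI
  obtain ⟨r, hr, hrf⟩ := hf.isAlmostIntegral_of_exists_smul_mem_range
    ⟨algebraMap R (reesAlgebra I) (x ^ f.natDegree),
      algebraMap_mem_nonZeroDivisors_reesAlgebra (pow_ne_zero _ hx₀),
      ⟨_, C_pow_mul_mem_reesAlgebra hx le_rfl⟩, rfl⟩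
  refine ⟨r, r.2, fun h₀ => nonZeroDivisors.ne_zero hr (Subtype.ext h₀), fun k => ?_⟩
  obtain ⟨z, hz⟩ := hrf k
  rw [Algebra.smul_def] at hz
  exact hz ▸ z.2

lemma leadingCoeff_mem_pow_of_isIntegral [IsNoetherianRing R] (hI : I ≠ ⊥) (hnI : IsNormalIdeal I)
    (hf : IsIntegral (reesAlgebra I) f) : f.leadingCoeff ∈ I ^ f.natDegree := by
  obtain rfl | hf₀ := eq_or_ne f 0
  · exact leadingCoeff_zero (R := R) ▸ zero_mem _
  obtain ⟨r, -, hr₀, hrf⟩ := exists_mul_pow_mem_reesAlgebra hI hf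
  have hmem (k : ℕ) : r.leadingCoeff * f.leadingCoeff ^ k ∈ (I ^ f.natDegree) ^ k := by
    have hdeg : (r * f ^ k).natDegree = r.natDegree + f.natDegree * k := by
      rw [natDegree_mul hr₀ (pow_ne_zero k hf₀), natDegree_pow, mul_comm k]
    rw [← leadingCoeff_pow, ← leadingCoeff_mul, ← pow_mul]
    exact Ideal.pow_le_pow_right (hdeg ▸ Nat.le_add_left _ _) (hrf k _)
  rw [← hnI _ _ (isReduction_sup_span_of_forall_mul_pow_mem (leadingCoeff_ne_zero.mpr hr₀) hmem)]
  exact Ideal.mem_sup_right (Ideal.mem_span_singleton_self _)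

lemma mem_reesAlgebra_of_isIntegral [IsNoetherianRing R] (hI : I ≠ ⊥) (hnI : IsNormalIdeal I)
    (hf : IsIntegral (reesAlgebra I) f) : f ∈ reesAlgebra I := by
  induction hn : f.support.card using Nat.strong_induction_on generalizing f with
  | h n ih =>
    obtain rfl | hf₀ := eq_or_ne f 0
    · exact zero_mem _
    have hlead : monomial f.natDegree f.leadingCoeff ∈ reesAlgebra I :=
      reesAlgebra.monomial_mem.mpr (leadingCoeff_mem_pow_of_isIntegral hI hnI hf)
    have herase : IsIntegral (reesAlgebra I) f.eraseLead := by
      rw [← self_sub_monomial_natDegree_leadingCoeff]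
      exact hf.sub (isIntegral_algebraMap (x := (⟨_, hlead⟩ : reesAlgebra I)))
    rw [← eraseLead_add_monomial_natDegree_leadingCoeff f]
    exact add_mem (ih _ (hn ▸ eraseLead_support_card_lt hf₀) herase rfl) hlead

lemma isFractionRing_reesAlgebra (hI : I ≠ ⊥) :
    IsFractionRing (reesAlgebra I) (FractionRing R[X]) := by
  have : FaithfulSMul (reesAlgebra I) (FractionRing R[X]) :=
    (faithfulSMul_iff_algebraMap_injective _ _).mpr
      ((IsFractionRing.injective R[X] (FractionRing R[X])).comp Subtype.val_injective)
  refine IsFractionRing.of_field _ _ fun z => ?_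
  obtain ⟨x, y, _, rfl⟩ := IsFractionRing.div_surjective R[X] z
  obtain ⟨c, hc, hc₀⟩ := Submodule.exists_mem_ne_zero_of_ne_bot hI
  let N := max x.natDegree y.natDegree
  refine ⟨⟨_, C_pow_mul_mem_reesAlgebra hc (le_max_left _ _ : _ ≤ N)⟩,
    ⟨_, C_pow_mul_mem_reesAlgebra hc (le_max_right _ _ : _ ≤ N)⟩, ?_⟩
  have hcN : algebraMap R[X] (FractionRing R[X]) (C (c ^ N)) ≠ 0 := by
    rw [Ne, FaithfulSMul.algebraMap_eq_zero_iff, C_eq_zero]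
    exact pow_ne_zero _ hc₀
  change _ = algebraMap R[X] _ (C (c ^ N) * x) / algebraMap R[X] _ (C (c ^ N) * y)
  rw [map_mul, map_mul, mul_div_mul_left _ _ hcN]

lemma isIntegrallyClosed_reesAlgebra [IsNoetherianRing R] [IsIntegrallyClosed R] (hI : I ≠ ⊥)
    (hnI : IsNormalIdeal I) : IsIntegrallyClosed (reesAlgebra I) := by
  have := isFractionRing_reesAlgebra hI
  refine (isIntegrallyClosed_iff (FractionRing R[X])).mpr fun {z} hz => ?_
  obtain ⟨f, rfl⟩ := IsIntegrallyClosed.isIntegral_iff.mp (hz.tower_top (A := R[X]))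
  have hf : IsIntegral (reesAlgebra I) f :=
    (isIntegral_algebraMap_iff (IsFractionRing.injective R[X] (FractionRing R[X]))).mp hz
  exact ⟨⟨f, mem_reesAlgebra_of_isIntegral hI hnI hf⟩, rfl⟩

end Normality

section RelationHeight

open MvPolynomial

instance isPrime_map_C {R σ : Type*} [CommRing R] {p : Ideal R} [p.IsPrime] :
    (p.map (C : R →+* MvPolynomial σ R)).IsPrime := by
  have hker := RingHom.ker_isPrime (MvPolynomial.map (σ := σ) (Ideal.Quotient.mk p))
  rwa [ker_map, Ideal.mk_ker] at hker

lemma height_map_C_le {R σ : Type*} [CommRing R] [IsNoetherianRing R] [Finite σ] (p : Ideal R)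
    [p.IsPrime] : (p.map (C : R →+* MvPolynomial σ R)).height ≤ p.height := by
  have : (p.map (C : R →+* MvPolynomial σ R)).LiesOver p := ⟨by
    ext x
    refine ⟨fun hx => Ideal.mem_map_of_mem _ hx, fun hx => ?_⟩
    simpa using mem_map_C_iff.mp hx 0⟩
  have : Nontrivial (MvPolynomial σ R ⧸ p.map (algebraMap R (MvPolynomial σ R))) :=
    Ideal.Quotient.nontrivial_iff.mpr (Ideal.IsPrime.ne_top isPrime_map_C)
  have hheight := Ideal.height_le_height_add_of_liesOver p (p.map (C : R →+* MvPolynomial σ R))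
  have hbot : (p.map (C : R →+* MvPolynomial σ R)).map
      (Ideal.Quotient.mk (p.map (algebraMap R (MvPolynomial σ R)))) = ⊥ := Ideal.map_quotient_self _
  rwa [hbot, Ideal.height_bot, add_zero] at hheight

variable {R : Type*} [CommRing R] {l : ℕ}

/-- The substitution `T_k ↦ b k * T` for `k ≤ i`, leaving the other variables alone. It
interpolates between `T_0 ↦ b 0 * T` and the presentation `T_k ↦ b k * T` of the Rees algebra;
the new variable `T` is encoded as `X none`. -/
noncomputable def partialSubst (b : ℕ → R) (l i : ℕ) :
    MvPolynomial (Fin l) R →ₐ[R] MvPolynomial (Option (Fin l)) R :=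
  aeval fun k => if (k : ℕ) ≤ i then b k • X none else X (some k)

lemma ker_partialSubst_le_succ (b : ℕ → R) (l i : ℕ) :
    RingHom.ker (partialSubst b l i) ≤ RingHom.ker (partialSubst b l (i + 1)) := by
  have hcomp : partialSubst b l (i + 1) = (aeval fun o : Option (Fin l) => o.elim (X none)
      fun k => if (k : ℕ) ≤ i + 1 then b k • X none else X (some k)).comp
        (partialSubst b l i) := by
    refine MvPolynomial.algHom_ext fun k => ?_
    simp only [partialSubst, aeval_X, AlgHom.comp_apply]
    by_cases hk : (k : ℕ) ≤ i
    · simp [hk, show (k : ℕ) ≤ i + 1 by lia]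
    · simp [hk]
  intro x hx
  rw [RingHom.mem_ker] at hx ⊢
  rw [hcomp, AlgHom.comp_apply, hx, map_zero]

lemma ker_partialSubst_lt_succ {b : ℕ → R} (hb : b 0 ≠ 0) {i : ℕ} (hi : i + 1 < l) :
    RingHom.ker (partialSubst b l i) < RingHom.ker (partialSubst b l (i + 1)) := by
  refine lt_of_le_not_ge (ker_partialSubst_le_succ b l i) fun hle => ?_
  have hmem : (b 0 • X ⟨i + 1, hi⟩ - b (i + 1) • X ⟨0, by lia⟩ : MvPolynomial (Fin l) R) ∈
      RingHom.ker (partialSubst b l (i + 1)) := by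
    rw [RingHom.mem_ker]
    simp [partialSubst, smul_smul, mul_comm]
  have hcoeff := congrArg (coeff (Finsupp.single (some ⟨i + 1, hi⟩) 1))
    (RingHom.mem_ker.mp (hle hmem))
  exact hb (by simpa [partialSubst, coeff_X, Finsupp.single_left_inj] using hcoeff)

lemma le_height_ker_partialSubst [IsDomain R] {b : ℕ → R} (hb : b 0 ≠ 0) {i : ℕ} (hi : i < l) :
    (i : ℕ∞) ≤ (RingHom.ker (partialSubst b l i)).height := by
  induction i with
  | zero => exact zero_le
  | succ i ih =>
    have := RingHom.ker_isPrime (partialSubst b l i)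
    have := RingHom.ker_isPrime (partialSubst b l (i + 1))
    calc ((i + 1 : ℕ) : ℕ∞) = i + 1 := Nat.cast_succ i
      _ ≤ (RingHom.ker (partialSubst b l i)).height + 1 := by gcongr; exact ih (by lia)
      _ ≤ (RingHom.ker (partialSubst b l (i + 1))).height :=
        Ideal.height_add_one_le_of_lt_of_isPrime (ker_partialSubst_lt_succ hb hi)

lemma le_height_ker_aevalMonomial [IsDomain R] {b : ℕ → R} (hb : b 0 ≠ 0) (hl : 0 < l) :
    ((l - 1 : ℕ) : ℕ∞) ≤ (RingHom.ker (aevalMonomial fun k : Fin l => b k)).height := by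
  refine (le_height_ker_partialSubst hb (Nat.sub_one_lt_of_lt hl)).trans (Ideal.height_mono ?_)
  have hcomp : aevalMonomial (fun k : Fin l => b k) =
      (aeval fun o : Option (Fin l) => o.elim Polynomial.X fun _ => 0).comp
        (partialSubst b l (l - 1)) := by
    refine MvPolynomial.algHom_ext fun k => ?_
    have hk : (k : ℕ) ≤ l - 1 := Nat.le_sub_one_of_lt k.2
    simp [partialSubst, aevalMonomial, hk, ← Polynomial.smul_X_eq_monomial]
  intro x hx
  rw [RingHom.mem_ker] at hx ⊢
  rw [hcomp, AlgHom.comp_apply, hx, map_zero]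

end RelationHeight

section DedekindLocalization

variable {A B : Type*} [CommRing A] [CommRing B] {φ : A →+* B} {Q : Ideal A} [Q.IsPrime]

lemma map_primeCompl_le_nonZeroDivisors [IsDomain B] (hker : RingHom.ker φ ≤ Q) :
    Q.primeCompl.map φ ≤ nonZeroDivisors B := by
  rintro _ ⟨a, ha, rfl⟩
  exact mem_nonZeroDivisors_of_ne_zero fun h₀ => ha (hker h₀)

lemma comap_comap_eq_of_ne_bot [IsDomain B] (hφ : φ.IsIntegral)
    (hQ : ∀ P : Ideal A, P.IsPrime → RingHom.ker φ < P → P ≤ Q → P = Q)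
    {P : Ideal (Localization (Q.primeCompl.map φ))} (hP : P.IsPrime) (hP₀ : P ≠ ⊥) :
    (P.comap (algebraMap B _)).comap φ = Q := by
  let := φ.toAlgebra
  have : Algebra.IsIntegral A B := ⟨hφ⟩
  have hPB : (⊥ : Ideal B) < P.comap (algebraMap B _) := by
    rw [bot_lt_iff_ne_bot]
    intro h₀
    apply hP₀
    rw [← IsLocalization.map_under (Q.primeCompl.map φ) _ P, Ideal.under, h₀, Ideal.map_bot]
  refine hQ _ ((hP.comap _).comap _) (Ideal.IsIntegral.comap_lt_comap (R := A) hPB) fun a ha => ?_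
  by_contra haQ
  exact hP.ne_top (Ideal.eq_top_of_isUnit_mem _ ha
    (IsLocalization.map_units _ (⟨φ a, a, haQ, rfl⟩ : Q.primeCompl.map φ)))

lemma dimensionLEOne_localization_map_primeCompl [IsDomain B] (hφ : φ.IsIntegral)
    (hQ : ∀ P : Ideal A, P.IsPrime → RingHom.ker φ < P → P ≤ Q → P = Q) :
    Ring.DimensionLEOne (Localization (Q.primeCompl.map φ)) := by
  let := φ.toAlgebra
  have : Algebra.IsIntegral A B := ⟨hφ⟩
  refine ⟨fun {P} hP₀ hP => ?_⟩
  obtain ⟨P', hP', hle⟩ := P.exists_le_maximal hP.ne_top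
  have hP'₀ : P' ≠ ⊥ := fun h => hP₀ (le_bot_iff.mp (h ▸ hle))
  rcases hle.lt_or_eq with hlt | rfl
  · have hlt' : P.comap (algebraMap B _) < P'.comap (algebraMap B _) :=
      (IsLocalization.orderEmbedding (Q.primeCompl.map φ) _).strictMono hlt
    have := hP.comap (algebraMap B (Localization (Q.primeCompl.map φ)))
    have hcomap : (P.comap (algebraMap B _)).comap φ < (P'.comap (algebraMap B _)).comap φ :=
      Ideal.IsIntegral.comap_lt_comap (R := A) hlt'
    rw [comap_comap_eq_of_ne_bot hφ hQ hP hP₀,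
      comap_comap_eq_of_ne_bot hφ hQ hP'.isPrime hP'₀] at hcomap
    exact absurd hcomap (lt_irrefl _)
  · exact hP'

lemma isDedekindDomain_localization_map_primeCompl [IsDomain B] [IsNoetherianRing B]
    [IsIntegrallyClosed B] (hφ : φ.IsIntegral) (hker : RingHom.ker φ ≤ Q)
    (hQ : ∀ P : Ideal A, P.IsPrime → RingHom.ker φ < P → P ≤ Q → P = Q) :
    IsDedekindDomain (Localization (Q.primeCompl.map φ)) := by
  have hM := map_primeCompl_le_nonZeroDivisors (φ := φ) hker
  have := IsLocalization.isDomain_localization hM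
  have := isIntegrallyClosed_of_isLocalization (Localization (Q.primeCompl.map φ)) _ hM
  have := dimensionLEOne_localization_map_primeCompl hφ hQ
  exact
    { IsLocalization.isNoetherianRing (Q.primeCompl.map φ) _ inferInstance, this,
      (inferInstance : IsIntegralClosure _ _ (FractionRing (Localization (Q.primeCompl.map φ)))),
      (inferInstance : IsDomain _) with }

end DedekindLocalization

section GaussLocalization

open MvPolynomial

lemma IsReduction.le_pow_of_isNormalIdeal {R : Type u} [CommRing R] [IsNoetherianRing R]
    [IsDomain R] {I K N : Ideal R} {n : ℕ} (h : IsReduction (K * I ^ n) N)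
    (hnI : IsNormalIdeal I) : N ≤ I ^ n := by
  intro y hy
  obtain rfl | hy₀ := eq_or_ne y 0
  · exact zero_mem _
  obtain ⟨-, r, hr⟩ := h
  have hmem (k : ℕ) : y ^ r * y ^ k ∈ (I ^ n) ^ k := by
    have hN : y ^ r * y ^ k ∈ N ^ (r + k) := pow_add y r k ▸ Ideal.pow_mem_pow hy _
    rw [pow_add_eq_of_pow_succ_eq hr k] at hN
    exact Ideal.pow_right_mono Ideal.mul_le_right k (Ideal.mul_le_left hN)
  rw [← hnI n _ (isReduction_sup_span_of_forall_mul_pow_mem (pow_ne_zero r hy₀) hmem)]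
  exact Ideal.mem_sup_right (Ideal.mem_span_singleton_self _)

lemma IsReduction.map_eq_of_isDedekindDomain {R : Type u} [CommRing R] {L N : Ideal R}
    {W : Type*} [CommRing W] [IsDedekindDomain W] {θ : R →+* W} (h : IsReduction L N)
    (hN : N.map θ ≠ ⊥) : N.map θ = L.map θ := by
  obtain ⟨-, r, hr⟩ := h
  have hmap := congrArg (Ideal.map θ) hr
  rw [Ideal.map_pow, pow_succ', Ideal.map_mul, Ideal.map_pow] at hmap
  exact mul_right_cancel₀ (pow_ne_zero r hN) hmap

/- In `R[It]` one has `c t * x = x t * c`, so `c` divides every `x ∈ I` as soon as `c t` is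
invertible. -/
lemma map_le_span_singleton_of_isUnit_monomial {R : Type u} [CommRing R] {I : Ideal R}
    {W : Type*} [CommRing W] [Algebra R W] [Algebra (reesAlgebra I) W]
    [IsScalarTower R (reesAlgebra I) W] {c : R} {m : reesAlgebra I}
    (hm : (m : Polynomial R) = Polynomial.monomial 1 c)
    (hunit : IsUnit (algebraMap (reesAlgebra I) W m)) :
    I.map (algebraMap R W) ≤ Ideal.span {algebraMap R W c} := by
  rw [Ideal.map_le_iff_le_comap]
  intro x hx
  have hx' : Polynomial.monomial 1 x ∈ reesAlgebra I :=
    reesAlgebra.monomial_mem.mpr (by rwa [pow_one])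
  have hcomm : m * algebraMap R (reesAlgebra I) x =
      ⟨Polynomial.monomial 1 x, hx'⟩ * algebraMap R (reesAlgebra I) c := by
    apply Subtype.ext
    change (m : Polynomial R) * Polynomial.C x = Polynomial.monomial 1 x * Polynomial.C c
    rw [hm, Polynomial.monomial_mul_C, Polynomial.monomial_mul_C, mul_comm]
  rw [Ideal.mem_comap, ← Ideal.unit_mul_mem_iff_mem _ hunit,
    IsScalarTower.algebraMap_apply R (reesAlgebra I) W x, ← map_mul, hcomm, map_mul,
    ← IsScalarTower.algebraMap_apply]
  exact Ideal.mul_mem_left _ _ (Ideal.mem_span_singleton_self _)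

lemma IsReduction.map_le_map_span_pow_mul {R : Type u} [CommRing R] {I K N : Ideal R} {n : ℕ}
    {W : Type*} [CommRing W] [IsDedekindDomain W] [Algebra R W] [Algebra (reesAlgebra I) W]
    [IsScalarTower R (reesAlgebra I) W] (h : IsReduction (K * I ^ n) N) {c : R}
    {m : reesAlgebra I} (hm : (m : Polynomial R) = Polynomial.monomial 1 c)
    (hunit : IsUnit (algebraMap (reesAlgebra I) W m)) :
    N.map (algebraMap R W) ≤ (Ideal.span {c ^ n} * K).map (algebraMap R W) := by
  obtain hN | hN := eq_or_ne (N.map (algebraMap R W)) ⊥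
  · exact hN ▸ bot_le
  rw [h.map_eq_of_isDedekindDomain hN, mul_comm, Ideal.map_mul, Ideal.map_mul, Ideal.map_pow,
    Ideal.map_span, Set.image_singleton, map_pow, ← Ideal.span_singleton_pow]
  exact Ideal.mul_mono_left
    (Ideal.pow_right_mono (map_le_span_singleton_of_isUnit_monomial hm hunit) n)

variable {R : Type u} [CommRing R] {I p : Ideal R} [p.IsPrime] {l d n : ℕ} {b : ℕ → R}

/-- The elements of the Rees algebra `R[It]` represented by a polynomial in `f` that has a
coefficient outside of `p`: the image of the complement of the Gauss extension of `p`. Localizing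
there turns the Rees algebra of a normal ideal into a Dedekind domain. -/
noncomputable abbrev gaussSubmonoid {ι : Type} {f : ι → R} (hf : ∀ i, f i ∈ I) (p : Ideal R)
    [p.IsPrime] : Submonoid (reesAlgebra I) :=
  (p.map (C : R →+* MvPolynomial ι R)).primeCompl.map (reesMap hf).toRingHom

lemma reesMap_X_mem_gaussSubmonoid {ι : Type} {f : ι → R} (hf : ∀ i, f i ∈ I) (i : ι) :
    reesMap hf (X i) ∈ gaussSubmonoid hf p := by
  refine ⟨X i, fun hX => ?_, rfl⟩
  have hcoeff := mem_map_C_iff.mp hX (Finsupp.single i 1)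
  rw [coeff_X_same] at hcoeff
  exact Ideal.IsPrime.ne_top' ((Ideal.eq_top_iff_one p).mpr hcoeff)

lemma eq_map_C_of_ker_aevalMonomial_lt [IsNoetherianRing R] [IsDomain R] (hb : b 0 ≠ 0)
    (hl : 0 < l) (hp : p.height ≤ l) {P : Ideal (MvPolynomial (Fin l) R)} (hP : P.IsPrime)
    (hlt : RingHom.ker (aevalMonomial fun k : Fin l => b k) < P) (hle : P ≤ p.map C) :
    P = p.map C := by
  by_contra hne
  have := RingHom.ker_isPrime (aevalMonomial fun k : Fin l => b k)
  have hchain : ((l - 1 : ℕ) : ℕ∞) + 1 + 1 ≤ l := calc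
    ((l - 1 : ℕ) : ℕ∞) + 1 + 1
      ≤ (RingHom.ker (aevalMonomial fun k : Fin l => b k)).height + 1 + 1 := by
        gcongr; exact le_height_ker_aevalMonomial hb hl
    _ ≤ P.height + 1 := by gcongr; exact Ideal.height_add_one_le_of_lt_of_isPrime hlt
    _ ≤ (p.map C).height := Ideal.height_add_one_le_of_lt_of_isPrime (hle.lt_of_ne hne)
    _ ≤ p.height := height_map_C_le p
    _ ≤ l := hp
  norm_cast at hchain
  lia

lemma initialColon_le_colon_singleton {y : R} (hp : p = (initialIdeal b l ^ n).colon {y})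
    (hy : y ∈ I ^ n) : initialColon I b l ≤ p := by
  intro r hr
  have hmem : r ^ n * y ∈ initialIdeal b l ^ n :=
    Ideal.pow_right_mono (initialColon_mul_le I b l) n
      (mul_pow (initialColon I b l) I n ▸ Ideal.mul_mem_mul (Ideal.pow_mem_pow hr n) hy)
  refine ‹p.IsPrime›.mem_of_pow_mem n ?_
  rwa [hp, Submodule.mem_colon_singleton, smul_eq_mul]

variable [IsLocalRing R] [IsNoetherianRing R] {y : R}

namespace IsResidualSequence

lemma head_ne_zero (h : IsResidualSequence I l d b) (hl : 0 < l) : b 0 ≠ 0 := by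
  intro h₀
  have hone : (1 : R) ∈ initialColon I b 0 :=
    h.mem_of_mul_mem hl (by rw [h₀, zero_mul]; exact zero_mem _)
  exact h.initialColon_ne_top 0 hl ((Ideal.eq_top_iff_one _).mpr hone)

lemma exists_coeff_mul_notMem (h : IsResidualSequence I l d b) (hl : 0 < l) (hpl : l ≤ p.height)
    (hpy : p = (initialIdeal b l ^ n).colon {y}) {m : reesAlgebra I}
    (hm : m ∈ gaussSubmonoid (fun k : Fin l => h.mem k) p) :
    ∃ e, (m : Polynomial R).coeff e * y ∉ initialIdeal b l ^ (n + e) := by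
  obtain ⟨F, hF, rfl⟩ := hm
  obtain ⟨e, he⟩ := h.exists_eval_homogeneousComponent_mul_notMem hl ‹_› hpl hpy hF
  exact ⟨e, by rwa [← coeff_reesMap (fun k : Fin l => h.mem k)] at he⟩

lemma ker_reesMap_le (h : IsResidualSequence I l d b) (hl : 0 < l) (hpl : l ≤ p.height)
    (hpy : p = (initialIdeal b l ^ n).colon {y}) :
    RingHom.ker (reesMap fun k : Fin l => h.mem k).toRingHom ≤ p.map C := by
  intro F hF
  by_contra hFp
  obtain ⟨e, he⟩ := h.exists_coeff_mul_notMem hl hpl hpy ⟨F, hFp, rfl⟩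
  rw [RingHom.mem_ker.mp hF] at he
  exact he (by simp)

lemma notMem_map_span_pow_mul (h : IsResidualSequence I l d b) (hl : 0 < l) (hpl : l ≤ p.height)
    (hpy : p = (initialIdeal b l ^ n).colon {y})
    (hcolon : ∀ j, initialColon I b l * I ^ j = initialColon I b l * initialIdeal b l ^ j)
    (W : Type*) [CommRing W] [Algebra R W] [Algebra (reesAlgebra I) W]
    [IsScalarTower R (reesAlgebra I) W]
    [IsLocalization (gaussSubmonoid (fun k : Fin l => h.mem k) p) W] :
    algebraMap R W y ∉ (Ideal.span {b 0 ^ n} * initialColon I b l).map (algebraMap R W) := by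
  intro hy
  rw [IsScalarTower.algebraMap_eq R (reesAlgebra I) W, ← Ideal.map_map, RingHom.comp_apply] at hy
  obtain ⟨m, hm, hmy⟩ := (IsLocalization.algebraMap_mem_map_algebraMap_iff
    (gaussSubmonoid (fun k : Fin l => h.mem k) p) W _ _).mp hy
  obtain ⟨e, he⟩ := h.exists_coeff_mul_notMem hl hpl hpy hm
  have hcoeff : (m : Polynomial R).coeff e * y ∈
      Ideal.span {b 0 ^ n} * initialColon I b l * I ^ e := by
    rw [← Polynomial.coeff_mul_C]
    exact coeff_mem_of_mem_map_reesAlgebra hmy e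
  rw [mul_assoc, hcolon] at hcoeff
  refine he (pow_add (initialIdeal b l) n e ▸ Ideal.mul_mono ?_ Ideal.mul_le_right hcoeff)
  exact (Ideal.span_singleton_le_iff_mem _).mpr (Ideal.pow_mem_pow (mem_initialIdeal b hl) n)

lemma notMem_of_isReduction (h : IsResidualSequence I l d b) (hl : 0 < l) (hpl : l ≤ p.height)
    (hpy : p = (initialIdeal b l ^ n).colon {y})
    (hcolon : ∀ j, initialColon I b l * I ^ j = initialColon I b l * initialIdeal b l ^ j)
    {N : Ideal R} (hN : IsReduction (initialColon I b l * I ^ n) N)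
    (W : Type*) [CommRing W] [IsDedekindDomain W] [Algebra R W] [Algebra (reesAlgebra I) W]
    [IsScalarTower R (reesAlgebra I) W]
    [IsLocalization (gaussSubmonoid (fun k : Fin l => h.mem k) p) W] : y ∉ N := by
  intro hy
  have hX := reesMap_X_mem_gaussSubmonoid (p := p) (fun k : Fin l => h.mem k) ⟨0, hl⟩
  exact h.notMem_map_span_pow_mul hl hpl hpy hcolon W
    (hN.map_le_map_span_pow_mul (aeval_X _ _) (IsLocalization.map_units W ⟨_, hX⟩)
      (Ideal.mem_map_of_mem _ hy))

variable [IsDomain R]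

lemma isDedekindDomain_localization_gaussSubmonoid [IsIntegrallyClosed R]
    (h : IsResidualSequence I l d b) (hl : 0 < l) (hI : I ≠ ⊥) (hnI : IsNormalIdeal I)
    (hred : IsReduction (initialIdeal b l) I) (hpl : p.height = l)
    (hpy : p = (initialIdeal b l ^ n).colon {y}) :
    IsDedekindDomain (Localization (gaussSubmonoid (fun k : Fin l => h.mem k) p)) := by
  have := isIntegrallyClosed_reesAlgebra hI hnI
  have hker : RingHom.ker (reesMap fun k : Fin l => h.mem k).toRingHom =
      RingHom.ker (aevalMonomial fun k : Fin l => b k) := by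
    ext F
    exact Subtype.ext_iff
  refine isDedekindDomain_localization_map_primeCompl
    (isIntegral_reesMap _ (by rwa [span_range_fin_eq_initialIdeal]) hI)
    (h.ker_reesMap_le hl hpl.ge hpy) fun P hP hlt hle => ?_
  exact eq_map_C_of_ker_aevalMonomial_lt (h.head_ne_zero hl) hl hpl.le hP (hker ▸ hlt) hle

end IsResidualSequence

end GaussLocalization

section IntegralClosure

variable {R : Type u} [CommRing R] [IsDomain R] {I : Ideal R}

lemma ne_bot_of_ht_pos (h : 0 < ht I) : I ≠ ⊥ := by
  rintro rfl
  have hle : ht (⊥ : Ideal R) ≤ 0 := by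
    refine (iInf₂_le (⟨⊥, Ideal.isPrime_bot⟩ : PrimeSpectrum R) bot_le).trans ?_
    rw [rDim_localizationAtPrime, Ideal.height_bot, WithBot.coe_zero]
  exact h.not_ge hle

namespace IsResidualSequence

variable [IsNoetherianRing R] [IsLocalRing R] [IsIntegrallyClosed R] {l d : ℕ} {b : ℕ → R}

lemma le_initialIdeal_pow_of_isReduction (h : IsResidualSequence I l d b) (hl : 0 < l)
    (hI : I ≠ ⊥) (hnI : IsNormalIdeal I) (hred : IsReduction (initialIdeal b l) I)
    (hcolon : ∀ j, initialColon I b l * I ^ j = initialColon I b l * initialIdeal b l ^ j)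
    {N : Ideal R} {n : ℕ} (hN : IsReduction (initialColon I b l * I ^ n) N) :
    N ≤ initialIdeal b l ^ n := by
  by_contra hNJ
  obtain ⟨y, hyN, hp⟩ := exists_isPrime_colon_singleton hNJ
  have hpl : ((initialIdeal b l ^ n).colon {y}).height = l :=
    (h.height_le_of_isAssociatedPrime_pow hl (isAssociatedPrime_colon_singleton hp)).antisymm
      (h.le_height le_rfl
        (initialColon_le_colon_singleton rfl (hN.le_pow_of_isNormalIdeal hnI hyN)))
  have := h.isDedekindDomain_localization_gaussSubmonoid hl hI hnI hred hpl rfl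
  exact h.notMem_of_isReduction hl hpl.ge rfl hcolon hN
    (Localization (gaussSubmonoid (fun k : Fin l => h.mem k) ((initialIdeal b l ^ n).colon {y})))
    hyN

lemma isIntClosedIdeal_initialColon_mul_pow (h : IsResidualSequence I l d b) (hl : 0 < l)
    (hI : I ≠ ⊥) (hnI : IsNormalIdeal I) (hred : IsReduction (initialIdeal b l) I)
    (hcolon : ∀ j, initialColon I b l * I ^ j = initialColon I b l * initialIdeal b l ^ j)
    (j : ℕ) : IsIntClosedIdeal (initialColon I b l * I ^ j) := by
  intro N hN
  refine le_antisymm (fun x hx => ?_) hN.1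
  have hNI : IsReduction (initialColon I b l * I ^ (j + 1)) (N * I) := by
    obtain ⟨hle, r, hr⟩ := hN
    refine ⟨?_, r, ?_⟩
    · rw [pow_succ, ← mul_assoc]
      exact Ideal.mul_mono_left hle
    · rw [mul_pow, mul_pow, hr, pow_succ I j, pow_succ I r]
      ring
  have hNJ := h.le_initialIdeal_pow_of_isReduction hl hI hnI hred hcolon hN
  have hNIJ := h.le_initialIdeal_pow_of_isReduction hl hI hnI hred hcolon hNI
  rw [hcolon]
  exact h.mem_initialColon_mul_pow hl (hNJ hx) fun c hc => hNIJ (Ideal.mul_mem_mul hx hc)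

end IsResidualSequence

end IntegralClosure

section Core

section Balanced

variable {R : Type u} [CommRing R] {I J : Ideal R}

lemma IsReduction.eq_top (h : IsReduction J ⊤) : J = ⊤ := by
  obtain ⟨-, r, hr⟩ := h
  simpa [Ideal.top_pow, eq_comm] using hr

lemma isIntClosedIdeal_top : IsIntClosedIdeal (⊤ : Ideal R) := fun _ hN => top_le_iff.mp hN.1

lemma core_top : core (⊤ : Ideal R) = ⊤ := sInf_eq_top.mpr fun _ hJ => hJ.1.eq_top

lemma colon_mul_le_core (hJ : IsMinimalReduction J I)
    (hbal : ∀ J₁ J₂, IsMinimalReduction J₁ I → IsMinimalReduction J₂ I →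
      Submodule.colon J₁ I = Submodule.colon J₂ I) :
    J.colon (I : Set R) * I ≤ core I := by
  refine le_sInf fun J' hJ' => ?_
  rw [hbal J J' hJ hJ', Ideal.mul_le]
  exact fun r hr x hx => Submodule.mem_colon.mp hr x hx

lemma mul_pow_eq_mul_pow {K : Ideal R} (h : K * I = K * J) (j : ℕ) : K * I ^ j = K * J ^ j := by
  induction j with
  | zero => simp only [pow_zero]
  | succ j ih => rw [pow_succ, ← mul_assoc, ih, mul_right_comm, h, mul_assoc, ← pow_succ']

end Balanced

variable {R : Type u} [CommRing R]

lemma exists_initialIdeal_eq {J : Ideal R} {l : ℕ} {a₁ : Fin l → R}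
    (h : Ideal.span (Set.range a₁) = J) : ∃ a : ℕ → R, (∀ k, a k ∈ J) ∧ initialIdeal a l = J := by
  refine ⟨fun k => if hk : k < l then a₁ ⟨k, hk⟩ else 0, fun k => ?_, ?_⟩
  · by_cases hk : k < l
    · simpa only [hk, dite_true] using h ▸ Ideal.subset_span ⟨_, rfl⟩
    · simp only [hk, dite_false, zero_mem]
  · rw [← span_range_fin_eq_initialIdeal, ← h]
    simp only [Fin.is_lt, dite_true, Fin.eta]

variable [IsLocalRing R]

lemma IsCMLocalRing.depthGE_bot (hCM : IsCMLocalRing R) {d : ℕ} (hd : ringKrullDim R = d) :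
    DepthGE (⊥ : Ideal R) d := by
  have hdepth : ringKrullDim R = (qDepth R (⊥ : Ideal R) : WithBot ℕ∞) := hCM
  rw [hd] at hdepth
  exact .of_le_qDepth bot_ne_top (WithBot.coe_inj.mp hdepth).le

variable [IsNoetherianRing R]

lemma exists_ringKrullDim_eq_natCast : ∃ d : ℕ, ringKrullDim R = d := by
  obtain ⟨d, hd⟩ := ENat.ne_top_iff_exists.mp
    (Ideal.height_ne_top (I := maximalIdeal R) (Ideal.IsPrime.ne_top inferInstance))
  exact ⟨d, by rw [← IsLocalRing.maximalIdeal_height_eq_ringKrullDim, ← hd]; rfl⟩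

variable [IsDomain R] [Infinite (ResidueField R)] {I J : Ideal R} {l : ℕ}

lemma IsMinimalReduction.pos (hJ : IsMinimalReduction J I) (hI : I ≠ ⊥)
    (hl : fiberDim I = (l : WithBot ℕ∞)) : 0 < l := by
  refine Nat.pos_of_ne_zero ?_
  rintro rfl
  obtain ⟨a, ha⟩ := hJ.exists_span_range_eq hI hl
  obtain ⟨-, r, hr⟩ := hJ.1
  rw [← ha, Set.range_eq_empty, Ideal.span_empty, Ideal.bot_mul] at hr
  exact pow_ne_zero (r + 1) hI hr

lemma IsMinimalReduction.exists_isResidualSequence (hJ : IsMinimalReduction J I)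
    (hCM : IsCMLocalRing R) (hIm : I ≤ maximalIdeal R) (hI : I ≠ ⊥)
    (hl : fiberDim I = (l : WithBot ℕ∞)) (hG : Gcond I l) (hAN : ANminus I (l - 1)) :
    ∃ (d : ℕ) (a : ℕ → R), IsReduction (initialIdeal a l) I ∧
      ∀ σ : Equiv.Perm ℕ, (∀ k < l, σ k < l) → IsResidualSequence I l d (a ∘ σ) := by
  obtain ⟨a₁, ha₁⟩ := hJ.exists_span_range_eq hI hl
  obtain ⟨a₀, ha₀, rfl⟩ := exists_initialIdeal_eq ha₁
  obtain ⟨a, ha, hred, hgen⟩ :=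
    exists_isReduction_isGeneric hG hI (fun k => hJ.1.1 (ha₀ k)) hJ.1 l le_rfl
  obtain ⟨d, hd⟩ := exists_ringKrullDim_eq_natCast (R := R)
  exact ⟨d, a, hred, fun σ hσ =>
    .of_isGeneric hIm hI hd (hCM.depthGE_bot hd) hAN hl ha hgen hσ⟩

theorem statement9_general [IsIntegrallyClosed R] (hCM : IsCMLocalRing R)
    (hl : fiberDim I = (l : WithBot ℕ∞)) (hht : 0 < ht I) (hG : Gcond I l)
    (hAN : ANminus I (l - 1))
    (hbal : ∀ J₁ J₂, IsMinimalReduction J₁ I → IsMinimalReduction J₂ I →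
      Submodule.colon J₁ I = Submodule.colon J₂ I)
    (hnI : IsNormalIdeal I) (hJ : IsMinimalReduction J I) :
    (∀ j : ℕ, IsIntClosedIdeal (Submodule.colon J I * I ^ j)) ∧
      IsIntClosedIdeal (Submodule.colon J I) ∧ IsIntClosedIdeal (core I) := by
  obtain rfl | hItop := eq_or_ne I ⊤
  · have hcolon : J.colon ((⊤ : Ideal R) : Set R) = ⊤ :=
      top_le_iff.mp (hJ.1.eq_top ▸ Ideal.le_colon)
    rw [hcolon, core_top]
    exact ⟨fun j => by rw [Ideal.top_pow, Ideal.top_mul]; exact isIntClosedIdeal_top,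
      isIntClosedIdeal_top, isIntClosedIdeal_top⟩
  have hI := ne_bot_of_ht_pos hht
  obtain ⟨d, a, hred, hres⟩ :=
    hJ.exists_isResidualSequence hCM (le_maximalIdeal hItop) hI hl hG hAN
  have ha := hred.isMinimalReduction_initialIdeal hI hl
  have hcore_le := core_le_initialColon_mul hI hl hred hres
  have hle_core : initialColon I a l * I ≤ core I := colon_mul_le_core ha hbal
  have hmul_le : initialColon I a l * initialIdeal a l ≤ initialColon I a l * I :=
    Ideal.mul_mono_right hred.1
  have hcore : core I = initialColon I a l * I := (hcore_le.trans hmul_le).antisymm hle_core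
  have hclosed (j : ℕ) : IsIntClosedIdeal (initialColon I a l * I ^ j) :=
    (hres 1 fun _ hk => hk).isIntClosedIdeal_initialColon_mul_pow (hJ.pos hI hl) hI hnI hred
      (mul_pow_eq_mul_pow ((hle_core.trans hcore_le).antisymm hmul_le)) j
  have hJa : J.colon (I : Set R) = initialColon I a l := hbal _ _ hJ ha
  rw [hJa, hcore]
  exact ⟨hclosed, by simpa using hclosed 0, by simpa using hclosed 1⟩

end Core

/-- Theorem 2.11(2): if moreover `R` is normal and `I` is a normal ideal, then
`(J : I)I^j` is integrally closed for every `j ≥ 0`; in particular `J : I` and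
`core I` are integrally closed. -/
theorem statement9 {R : Type u} [CommRing R] [IsNoetherianRing R] [IsLocalRing R]
    (hCM : IsCMLocalRing R) (hres : Infinite (ResidueField R))
    (I : Ideal R) (l : ℕ) (hl : fiberDim I = (l : WithBot ℕ∞))
    (hht : (0 : WithBot ℕ∞) < ht I)
    (hG : Gcond I l) (hAN : ANminus I (l - 1)) (hS2 : UnivWeaklyResS2 I (l - 1))
    (hbal : ∀ J₁ J₂, IsMinimalReduction J₁ I → IsMinimalReduction J₂ I →
      Submodule.colon J₁ I = Submodule.colon J₂ I)
    (hdom : IsDomain R) (hic : IsIntegrallyClosed R) (hnI : IsNormalIdeal I) :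
    ∀ J, IsMinimalReduction J I →
      (∀ j : ℕ, IsIntClosedIdeal (Submodule.colon J I * I ^ j)) ∧
      IsIntClosedIdeal (Submodule.colon J I) ∧ IsIntClosedIdeal (core I) :=
  fun _ hJ => statement9_general hCM hl hht hG hAN hbal hnI hJ

end CPU
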